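/- Let k ∈ ℕ be fixed. Then there exists a constant 𝒦₇(k) > 0 depending only on k such that for every n ≥ 2 and every n×n real matrix A with σ_A > 0: sup_{z∈ℝ} | E(|𝒯_A|^k · 1_{(−∞,z]}(𝒯_A)) − ∫_{−∞}^{z} |x|^k ψ(x) dx | ≤ 𝒦₇(k)·( β_A/n + (1/n)·Σ_{i,j=1}^{n} |â_{ij}|^{k+4} ). -/

import Mathlib

open Finset MeasureTheory

/-- Density of the standard normal distribution. -/
noncomputable def gaussD (x : ℝ) : ℝ := (Real.sqrt (2 * Real.pi))⁻¹ * Real.exp (-(x ^ 2) / 2)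

/-- Distribution function of the standard normal distribution. -/
noncomputable def gaussCDF (x : ℝ) : ℝ := ∫ t in Set.Iic x, gaussD t

section RankDefs

variable {m : ℕ}

/-- Row mean `a_{i·}`. -/
noncomputable def rowMean (A : Matrix (Fin m) (Fin m) ℝ) (i : Fin m) : ℝ := (∑ j, A i j) / (m : ℝ)

/-- Column mean `a_{·j}`. -/
noncomputable def colMean (A : Matrix (Fin m) (Fin m) ℝ) (j : Fin m) : ℝ := (∑ i, A i j) / (m : ℝ)

/-- Grand mean `a_{··}`. -/
noncomputable def totMean (A : Matrix (Fin m) (Fin m) ℝ) : ℝ := (∑ i, ∑ j, A i j) / (m : ℝ) ^ 2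

/-- Centered entries `a_{ij} − a_{i·} − a_{·j} + a_{··}`. -/
noncomputable def ctr (A : Matrix (Fin m) (Fin m) ℝ) (i j : Fin m) : ℝ :=
  A i j - rowMean A i - colMean A j + totMean A

/-- `σ_A²`. -/
noncomputable def sigma2 (A : Matrix (Fin m) (Fin m) ℝ) : ℝ :=
  (∑ i, ∑ j, ctr A i j ^ 2) / ((m : ℝ) - 1)

/-- `σ_A`. -/
noncomputable def sdev (A : Matrix (Fin m) (Fin m) ℝ) : ℝ := Real.sqrt (sigma2 A)

/-- Standardized matrix `Â = (â_{ij})`. -/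
noncomputable def hatM (A : Matrix (Fin m) (Fin m) ℝ) : Matrix (Fin m) (Fin m) ℝ :=
  fun i j => ctr A i j / sdev A

/-- `μ_A = n·a_{··}`. -/
noncomputable def muM (A : Matrix (Fin m) (Fin m) ℝ) : ℝ := (m : ℝ) * totMean A

/-- The linear rank statistic `T_A(π) = Σ_i a_{iπ(i)}`. -/
noncomputable def rankT (A : Matrix (Fin m) (Fin m) ℝ) (π : Equiv.Perm (Fin m)) : ℝ :=
  ∑ i, A i (π i)

/-- Expectation with respect to the uniform distribution on permutations. -/
noncomputable def permExp (f : Equiv.Perm (Fin m) → ℝ) : ℝ :=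
  (∑ π : Equiv.Perm (Fin m), f π) / (Nat.factorial m : ℝ)

/-- The standardized rank statistic `𝒯_A = (T_A − μ_A)/σ_A`. -/
noncomputable def rankTstd (A : Matrix (Fin m) (Fin m) ℝ) (π : Equiv.Perm (Fin m)) : ℝ :=
  (rankT A π - muM A) / sdev A

/-- `F_A`, the distribution function of `T_A`. -/
noncomputable def Fr (A : Matrix (Fin m) (Fin m) ℝ) (z : ℝ) : ℝ :=
  permExp (fun π => if rankT A π ≤ z then (1 : ℝ) else 0)

/-- `ℱ_A`, the distribution function of `𝒯_A`. -/
noncomputable def Fstd (A : Matrix (Fin m) (Fin m) ℝ) (z : ℝ) : ℝ :=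
  permExp (fun π => if rankTstd A π ≤ z then (1 : ℝ) else 0)

/-- `β_A = Σ_{i,j} |â_{ij}|³`. -/
noncomputable def betaM (A : Matrix (Fin m) (Fin m) ℝ) : ℝ := ∑ i, ∑ j, |hatM A i j| ^ 3

/-- `δ_A = Σ_{i,j} |â_{ij}|⁴`. -/
noncomputable def deltaM (A : Matrix (Fin m) (Fin m) ℝ) : ℝ := ∑ i, ∑ j, |hatM A i j| ^ 4

/-- `η_A = Σ_{i,j} |â_{ij}|⁵`. -/
noncomputable def etaM (A : Matrix (Fin m) (Fin m) ℝ) : ℝ := ∑ i, ∑ j, |hatM A i j| ^ 5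

/-- `D_A = (δ_A/n)^{1/2}`. -/
noncomputable def DM (A : Matrix (Fin m) (Fin m) ℝ) : ℝ := Real.sqrt (deltaM A / (m : ℝ))

/-- `E_A = (η_A/n)^{1/3}`. -/
noncomputable def EM (A : Matrix (Fin m) (Fin m) ℝ) : ℝ := (etaM A / (m : ℝ)) ^ ((1 : ℝ) / 3)

/-- `λ_{1,A} = (1/n)Σ_{i,j} â_{ij}³`. -/
noncomputable def lam1 (A : Matrix (Fin m) (Fin m) ℝ) : ℝ := (∑ i, ∑ j, hatM A i j ^ 3) / (m : ℝ)

/-- `λ_{2,A}`. -/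
noncomputable def lam2 (A : Matrix (Fin m) (Fin m) ℝ) : ℝ :=
  (∑ i, ∑ j, hatM A i j ^ 4) / (m : ℝ) + 3 / (m : ℝ)
    - 3 / (m : ℝ) ^ 2 *
        ∑ i, ∑ j, ∑ k, (hatM A i j ^ 2 * hatM A i k ^ 2 + hatM A i j ^ 2 * hatM A k j ^ 2)

/-- First-order Edgeworth expansion `e_{1,A}`. -/
noncomputable def edge1 (A : Matrix (Fin m) (Fin m) ℝ) (x : ℝ) : ℝ :=
  gaussCDF x - gaussD x * (lam1 A / 6) * (x ^ 2 - 1)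

/-- Second-order Edgeworth expansion `e_{2,A}`. -/
noncomputable def edge2 (A : Matrix (Fin m) (Fin m) ℝ) (x : ℝ) : ℝ :=
  gaussCDF x - gaussD x *
    (lam1 A / 6 * (x ^ 2 - 1) + lam2 A / 24 * (x ^ 3 - 3 * x)
      + lam1 A ^ 2 / 72 * (x ^ 5 - 10 * x ^ 3 + 15 * x))

/-- `k`-th iterated difference `Δ_y^k G`. -/
noncomputable def Δiter (y : ℝ) (k : ℕ) (G : ℝ → ℝ) : ℝ → ℝ :=
  (fun (G : ℝ → ℝ) (z : ℝ) => G (z + y) - G z)^[k] G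

/-- The interpolating polynomial `P_y^k(x; z, F)` of `F` at the points `z, z+y, …, z+ky`. -/
noncomputable def interp (y : ℝ) (k : ℕ) (z : ℝ) (F : ℝ → ℝ) (x : ℝ) : ℝ :=
  F z + ∑ s ∈ Finset.Icc 1 k,
    Δiter y s F z * ∏ i ∈ Finset.Icc 1 s, (x - z - ((i : ℝ) - 1) * y) / ((i : ℝ) * y)

end RankDefs

section RS1

/-- Insert the assignment `i ↦ p` into a permutation of the remaining indices. -/
noncomputable def rsIns {n : ℕ} (i p : Fin (n + 1)) (σ : Equiv.Perm (Fin n)) :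
    Equiv.Perm (Fin (n + 1)) :=
  (finSuccEquiv' i).trans ((Equiv.optionCongr σ).trans (finSuccEquiv' p).symm)

lemma rsIns_self {n : ℕ} (i p : Fin (n + 1)) (σ : Equiv.Perm (Fin n)) : rsIns i p σ i = p := by
  simp [rsIns]

lemma rsIns_succAbove {n : ℕ} (i p : Fin (n + 1)) (σ : Equiv.Perm (Fin n)) (x : Fin n) :
    rsIns i p σ (i.succAbove x) = p.succAbove (σ x) := by
  simp [rsIns]

/-- Minor of a matrix. -/
def rsMn {n : ℕ} (B : Matrix (Fin (n + 1)) (Fin (n + 1)) ℝ) (i p : Fin (n + 1)) :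
    Matrix (Fin n) (Fin n) ℝ := fun x y => B (i.succAbove x) (p.succAbove y)

/-- The exchange increment. -/
def rsD {n : ℕ} (B : Matrix (Fin n) (Fin n) ℝ) (i j p q : Fin n) : ℝ :=
  B i q + B j p - B i p - B j q

lemma rankT_ins {n : ℕ} (B : Matrix (Fin (n + 1)) (Fin (n + 1)) ℝ) (i p : Fin (n + 1))
    (σ : Equiv.Perm (Fin n)) : rankT B (rsIns i p σ) = rankT (rsMn B i p) σ + B i p := by
  unfold rankT
  rw [Fin.sum_univ_succAbove _ i, rsIns_self]
  simp only [rsIns_succAbove, rsMn]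
  ring

lemma permExp_peel_row {n : ℕ} (i : Fin (n + 1)) (G : Equiv.Perm (Fin (n + 1)) → ℝ) :
    permExp G = (∑ p, permExp (fun σ => G (rsIns i p σ))) / ((n : ℝ) + 1) := by
  have hb : Function.Bijective (fun x : Fin (n + 1) × Equiv.Perm (Fin n) => rsIns i x.1 x.2) := by
    rw [Fintype.bijective_iff_injective_and_card]
    constructor
    · rintro ⟨p, σ⟩ ⟨p', σ'⟩ h
      have h1 : p = p' := by
        have := congrArg (fun e : Equiv.Perm (Fin (n+1)) => e i) h
        simpa [rsIns_self] using this
      subst h1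
      have h2 : σ = σ' := by
        ext x
        have := congrArg (fun e : Equiv.Perm (Fin (n+1)) => e (i.succAbove x)) h
        simp only [rsIns_succAbove] at this
        exact congrArg _ (Fin.succAbove_right_injective this)
      rw [h2]
    · simp [Fintype.card_perm, Nat.factorial_succ]
  have hs : ∑ π, G π = ∑ p, ∑ σ, G (rsIns i p σ) := by
    rw [← Fintype.sum_prod_type', ← hb.sum_comp]
  unfold permExp
  rw [hs, ← Finset.sum_div, Nat.factorial_succ]
  push_cast
  have : (n.factorial : ℝ) ≠ 0 := by positivity
  field_simp

lemma permExp_peel_col {n : ℕ} (p : Fin (n + 1)) (G : Equiv.Perm (Fin (n + 1)) → ℝ) :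
    permExp G = (∑ i, permExp (fun σ => G (rsIns i p σ))) / ((n : ℝ) + 1) := by
  have hb : Function.Bijective (fun x : Fin (n + 1) × Equiv.Perm (Fin n) => rsIns x.1 p x.2) := by
    rw [Fintype.bijective_iff_injective_and_card]
    constructor
    · rintro ⟨i, σ⟩ ⟨i', σ'⟩ h
      have h1 : i = i' := by
        have := congrArg (fun e : Equiv.Perm (Fin (n+1)) => e i) h
        simp only [rsIns_self] at this
        have h3 := rsIns_self i' p σ'
        exact ((rsIns i' p σ').injective (h3.trans this)).symm
      subst h1
      have h2 : σ = σ' := by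
        ext x
        have := congrArg (fun e : Equiv.Perm (Fin (n+1)) => e (i.succAbove x)) h
        simp only [rsIns_succAbove] at this
        exact congrArg _ (Fin.succAbove_right_injective this)
      rw [h2]
    · simp [Fintype.card_perm, Nat.factorial_succ]
  have hs : ∑ π, G π = ∑ i, ∑ σ, G (rsIns i p σ) := by
    rw [← Fintype.sum_prod_type', ← hb.sum_comp]
  unfold permExp
  rw [hs, ← Finset.sum_div, Nat.factorial_succ]
  push_cast
  have : (n.factorial : ℝ) ≠ 0 := by positivity
  field_simp

lemma permExp_add {n : ℕ} (F G : Equiv.Perm (Fin n) → ℝ) :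
    permExp (fun π => F π + G π) = permExp F + permExp G := by
  simp [permExp, Finset.sum_add_distrib, add_div]

lemma permExp_sub {n : ℕ} (F G : Equiv.Perm (Fin n) → ℝ) :
    permExp (fun π => F π - G π) = permExp F - permExp G := by
  simp [permExp, Finset.sum_sub_distrib, sub_div]

lemma permExp_neg {n : ℕ} (F : Equiv.Perm (Fin n) → ℝ) :
    permExp (fun π => - F π) = - permExp F := by
  simp [permExp, neg_div]

lemma permExp_mul {n : ℕ} (c : ℝ) (F : Equiv.Perm (Fin n) → ℝ) :
    permExp (fun π => c * F π) = c * permExp F := by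
  simp [permExp, ← Finset.mul_sum, mul_div_assoc]

lemma permExp_const {n : ℕ} (c : ℝ) :
    permExp (fun _ : Equiv.Perm (Fin n) => c) = c := by
  have : (n.factorial : ℝ) ≠ 0 := by positivity
  simp [permExp, Fintype.card_perm]
  field_simp

lemma permExp_sum {n : ℕ} {ι : Type*} (s : Finset ι) (F : ι → Equiv.Perm (Fin n) → ℝ) :
    permExp (fun π => ∑ a ∈ s, F a π) = ∑ a ∈ s, permExp (F a) := by
  simp only [permExp]
  rw [Finset.sum_comm, Finset.sum_div]

lemma permExp_mono {n : ℕ} {F G : Equiv.Perm (Fin n) → ℝ} (h : ∀ π, F π ≤ G π) :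
    permExp F ≤ permExp G := by
  unfold permExp
  exact div_le_div_of_nonneg_right (Finset.sum_le_sum fun π _ => h π) (by positivity)

lemma permExp_nonneg {n : ℕ} {F : Equiv.Perm (Fin n) → ℝ} (h : ∀ π, 0 ≤ F π) :
    0 ≤ permExp F := by
  unfold permExp
  exact div_nonneg (Finset.sum_nonneg fun π _ => h π) (by positivity)

lemma permExp_abs_le {n : ℕ} (F : Equiv.Perm (Fin n) → ℝ) :
    |permExp F| ≤ permExp (fun π => |F π|) := by
  unfold permExp
  rw [abs_div, abs_of_nonneg (by positivity : (0:ℝ) ≤ (n.factorial : ℝ))]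
  exact div_le_div_of_nonneg_right (Finset.abs_sum_le_sum_abs _ _) (by positivity)

lemma permExp_comp_mul {n : ℕ} (τ : Equiv.Perm (Fin n)) (F : Equiv.Perm (Fin n) → ℝ) :
    permExp (fun π => F (π * τ)) = permExp F := by
  unfold permExp
  congr 1
  exact Equiv.sum_comp (Equiv.mulRight τ : Equiv.Perm (Fin n) ≃ Equiv.Perm (Fin n)) F

lemma rankT_swap {n : ℕ} (B : Matrix (Fin n) (Fin n) ℝ) (π : Equiv.Perm (Fin n)) (i j : Fin n) :
    rankT B (π * Equiv.swap i j) = rankT B π + rsD B i j (π i) (π j) := by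
  by_cases hij : i = j
  · subst hij
    rw [Equiv.swap_self]
    change rankT B (π * 1) = _
    simp [rsD]
  have h : ∀ x, B x ((π * Equiv.swap i j) x) = B x (π x)
      + (if x = i then B i (π j) - B i (π i) else 0)
      + (if x = j then B j (π i) - B j (π j) else 0) := by
    intro x
    by_cases h1 : x = i
    · subst h1
      simp [hij]
    · by_cases h2 : x = j
      · subst h2
        simp [h1]
      · simp [h1, h2, Equiv.swap_apply_of_ne_of_ne h1 h2]
  unfold rankT rsD
  simp only [h, Finset.sum_add_distrib]
  simp
  ring

/-- total sum -/
def rsTot {n : ℕ} (B : Matrix (Fin n) (Fin n) ℝ) : ℝ := ∑ i, ∑ j, B i j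

lemma rs_exchange {n : ℕ} (B : Matrix (Fin n) (Fin n) ℝ) (F : ℝ → ℝ) :
    ∑ i, ∑ j, permExp (fun π => rsD B i j (π i) (π j) *
      (F (rankT B π + rsD B i j (π i) (π j)) - F (rankT B π)))
    = 4 * permExp (fun π => (n * rankT B π - rsTot B) * F (rankT B π)) := by
  have h1 : ∀ i j, permExp (fun π => rsD B i j (π i) (π j) *
      (F (rankT B π + rsD B i j (π i) (π j)) - F (rankT B π)))
      = - 2 * permExp (fun π => rsD B i j (π i) (π j) * F (rankT B π)) := by
    intro i j
    have h2 : permExp (fun π => rsD B i j (π i) (π j) * F (rankT B π + rsD B i j (π i) (π j)))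
      = permExp (fun π => - (rsD B i j (π i) (π j) * F (rankT B π))) := by
      rw [← permExp_comp_mul (Equiv.swap i j) (fun π => - (rsD B i j (π i) (π j) * F (rankT B π)))]
      congr 1
      ext π
      rw [rankT_swap]
      simp [rsD]
      ring
    have h3 : (fun π : Equiv.Perm (Fin n) => rsD B i j (π i) (π j) *
      (F (rankT B π + rsD B i j (π i) (π j)) - F (rankT B π))) = fun π =>
      rsD B i j (π i) (π j) * F (rankT B π + rsD B i j (π i) (π j)) -
        rsD B i j (π i) (π j) * F (rankT B π) := by
      ext π; ring
    rw [h3, permExp_sub, h2, permExp_neg]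
    ring
  simp only [h1, ← Finset.mul_sum, ← permExp_sum]
  rw [← permExp_mul, ← permExp_mul]
  congr 1
  ext π
  have h4 : ∑ i, ∑ j, rsD B i j (π i) (π j) = 2 * rsTot B - 2 * n * rankT B π := by
    have e1 : ∑ i, ∑ j, B i (π j) = rsTot B := by
      unfold rsTot
      refine Finset.sum_congr rfl fun i _ => ?_
      exact Equiv.sum_comp π (fun j => B i j)
    have e2 : ∑ i, ∑ j, B j (π i) = rsTot B := by
      rw [Finset.sum_comm, e1]
    unfold rsD
    simp only [Finset.sum_sub_distrib, Finset.sum_add_distrib, e1, e2]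
    simp [rankT, ← Finset.mul_sum]
    ring
  simp only [← Finset.sum_mul, h4]
  ring

end RS1
section RS2

/-- Double minor. -/
def rsS {n : ℕ} (B : Matrix (Fin (n + 2)) (Fin (n + 2)) ℝ) (i p : Fin (n + 2))
    (j q : Fin (n + 1)) : Matrix (Fin n) (Fin n) ℝ := rsMn (rsMn B i p) j q

/-- Lipschitz property of the translation function. -/
def rsLip {n : ℕ} (B : Matrix (Fin n) (Fin n) ℝ) (φ : ℝ → ℝ) (K C : ℝ) : Prop :=
  ∀ y y' : ℝ, |y| ≤ K → |y'| ≤ K →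
    |permExp (fun π => φ (rankT B π + y)) - permExp (fun π => φ (rankT B π + y'))| ≤ C * |y - y'|

lemma rsD_self_row {n : ℕ} (B : Matrix (Fin n) (Fin n) ℝ) (i p q : Fin n) :
    rsD B i i p q = 0 := by unfold rsD; ring

lemma rsD_self_col {n : ℕ} (B : Matrix (Fin n) (Fin n) ℝ) (i j p : Fin n) :
    rsD B i j p p = 0 := by unfold rsD; ring

lemma rsD_mn {n : ℕ} (B : Matrix (Fin (n + 1)) (Fin (n + 1)) ℝ) (i p : Fin (n + 1))
    (x x' y y' : Fin n) : rsD (rsMn B i p) x x' y y' =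
      rsD B (i.succAbove x) (i.succAbove x') (p.succAbove y) (p.succAbove y') := rfl

lemma rsD_sum {n : ℕ} (B : Matrix (Fin (n + 1)) (Fin (n + 1)) ℝ) (g : ℝ → ℝ) (hg : g 0 = 0)
    (w : Fin (n+1) → Fin (n+1) → Fin (n+1) → Fin (n+1) → ℝ) :
    ∑ i, ∑ j, ∑ p, ∑ q, g (rsD B i j p q) * w i j p q =
      ∑ i, ∑ j : Fin n, ∑ p, ∑ q : Fin n,
        g (rsD B i (i.succAbove j) p (p.succAbove q)) * w i (i.succAbove j) p (p.succAbove q) := by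
  refine Finset.sum_congr rfl fun i _ => ?_
  rw [Fin.sum_univ_succAbove _ i]
  simp only [rsD_self_row, hg, zero_mul, Finset.sum_const_zero, zero_add]
  refine Finset.sum_congr rfl fun j _ => ?_
  refine Finset.sum_congr rfl fun p _ => ?_
  rw [Fin.sum_univ_succAbove _ p]
  simp only [rsD_self_col, hg, zero_mul, zero_add]

lemma rs_two_peel {n : ℕ} (B : Matrix (Fin (n + 2)) (Fin (n + 2)) ℝ) (i : Fin (n + 2))
    (j : Fin (n + 1)) (G : Fin (n + 2) → Fin (n + 2) → ℝ → ℝ) :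
    permExp (fun π => G (π i) (π (i.succAbove j)) (rankT B π)) =
      (∑ p, ∑ q : Fin (n + 1), permExp (fun σ => G p (p.succAbove q)
        (rankT (rsS B i p j q) σ + (B i p + B (i.succAbove j) (p.succAbove q))))) /
          (((n : ℝ) + 2) * ((n : ℝ) + 1)) := by
  rw [permExp_peel_row i]
  simp only [rsIns_self, rsIns_succAbove, rankT_ins]
  have : ∀ p, permExp (fun σ : Equiv.Perm (Fin (n + 1)) =>
      G p (p.succAbove (σ j)) (rankT (rsMn B i p) σ + B i p)) =
      (∑ q : Fin (n + 1), permExp (fun σ => G p (p.succAbove q)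
        (rankT (rsS B i p j q) σ + (B i p + B (i.succAbove j) (p.succAbove q))))) /
          ((n : ℝ) + 1) := by
    intro p
    rw [permExp_peel_row j]
    simp only [rsIns_self, rankT_ins]
    congr 1
    refine Finset.sum_congr rfl fun q _ => ?_
    congr 1
    ext σ
    congr 1
    simp only [rsS, rsMn]
    ring
  simp only [this]
  rw [← Finset.sum_div, div_div]
  push_cast
  congr 1
  ring

lemma rs_stein_ident {n : ℕ} (B : Matrix (Fin (n + 2)) (Fin (n + 2)) ℝ) (F : ℝ → ℝ) :
    4 * permExp (fun π => (((n : ℝ) + 2) * rankT B π - rsTot B) * F (rankT B π)) =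
      (∑ i, ∑ j : Fin (n + 1), ∑ p, ∑ q : Fin (n + 1),
        rsD B i (i.succAbove j) p (p.succAbove q) *
          (permExp (fun σ => F (rankT (rsS B i p j q) σ +
              (B i p + B (i.succAbove j) (p.succAbove q) +
                rsD B i (i.succAbove j) p (p.succAbove q)))) -
            permExp (fun σ => F (rankT (rsS B i p j q) σ +
              (B i p + B (i.succAbove j) (p.succAbove q)))))) /
          (((n : ℝ) + 2) * ((n : ℝ) + 1)) := by
  have h := rs_exchange B F
  push_cast at h
  rw [← h]
  rw [Finset.sum_div]
  refine Finset.sum_congr rfl fun i _ => ?_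
  rw [Fin.sum_univ_succAbove _ i]
  simp only [rsD_self_row, zero_mul, permExp_const, zero_add]
  rw [Finset.sum_div]
  refine Finset.sum_congr rfl fun j _ => ?_
  rw [rs_two_peel B i j (fun p q t => rsD B i (i.succAbove j) p q *
    (F (t + rsD B i (i.succAbove j) p q) - F t))]
  congr 1
  refine Finset.sum_congr rfl fun p _ => ?_
  refine Finset.sum_congr rfl fun q _ => ?_
  rw [permExp_mul, permExp_sub]
  simp only [add_assoc]

lemma rs_step {n : ℕ} (B : Matrix (Fin (n + 2)) (Fin (n + 2)) ℝ) (φ : ℝ → ℝ) (K C y : ℝ)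
    (hB : ∀ i j, |B i j| ≤ 1) (hy : |y| + 2 ≤ K) (hC : 0 ≤ C)
    (hL : ∀ i p j q, rsLip (rsS B i p j q) φ K C) (i p : Fin (n + 2)) :
    |permExp (fun π => φ (rankT B π + y)) -
      permExp (fun σ => φ (rankT (rsMn B i p) σ + (B i p + y)))| ≤
      C * ((∑ j, ∑ q, |rsD B i j p q|) / (((n : ℝ) + 2) * ((n : ℝ) + 1))) := by
  set E1 := permExp (fun σ => φ (rankT (rsMn B i p) σ + (B i p + y))) with hE1
  have key : ∀ q : Fin (n + 1),
      |permExp (fun σ => φ (rankT (rsMn B i (p.succAbove q)) σ + (B i (p.succAbove q) + y))) - E1|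
        ≤ C * ((∑ j : Fin (n + 1), |rsD B i (i.succAbove j) p (p.succAbove q)|) / ((n : ℝ) + 1)) := by
    intro q
    rw [hE1, permExp_peel_col (q.predAbove p)]
    rw [permExp_peel_col q]
    simp only [rankT_ins]
    have hmn : ∀ j, rsMn (rsMn B i (p.succAbove q)) j (q.predAbove p) = rsS B i p j q := by
      intro j
      ext x y
      simp only [rsS, rsMn]
      rw [Fin.succAbove_succAbove_succAbove_predAbove]
    have hent : ∀ j, rsMn B i (p.succAbove q) j (q.predAbove p) = B (i.succAbove j) p := by
      intro j
      simp only [rsMn]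
      rw [Fin.succAbove_succAbove_predAbove]
    simp only [hmn, hent]
    rw [← sub_div, ← Finset.sum_sub_distrib, abs_div,
      abs_of_nonneg (by positivity : (0:ℝ) ≤ (n:ℝ) + 1), ← mul_div_assoc]
    refine div_le_div_of_nonneg_right ?_ (by positivity)
    refine (Finset.abs_sum_le_sum_abs _ _).trans ?_
    rw [Finset.mul_sum]
    refine Finset.sum_le_sum fun j _ => ?_
    have h := hL i p j q (B (i.succAbove j) p + (B i (p.succAbove q) + y))
      (B (i.succAbove j) (p.succAbove q) + (B i p + y)) ?_ ?_
    · have e : (B (i.succAbove j) p + (B i (p.succAbove q) + y)) -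
          (B (i.succAbove j) (p.succAbove q) + (B i p + y)) =
          rsD B i (i.succAbove j) p (p.succAbove q) := by unfold rsD; ring
      rw [e] at h
      simp only [add_assoc] at h ⊢
      exact h
    · have h1 := hB (i.succAbove j) p
      have h2 := hB i (p.succAbove q)
      have h3 := abs_add_le (B (i.succAbove j) p) (B i (p.succAbove q) + y)
      have h4 := abs_add_le (B i (p.succAbove q)) y
      linarith
    · have h1 := hB (i.succAbove j) (p.succAbove q)
      have h2 := hB i p
      have h3 := abs_add_le (B (i.succAbove j) (p.succAbove q)) (B i p + y)
      have h4 := abs_add_le (B i p) y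
      linarith
  rw [permExp_peel_row i]
  simp only [rankT_ins, add_assoc]
  rw [Fin.sum_univ_succAbove _ p, ← hE1]
  push_cast
  have e2 : (E1 + ∑ q : Fin (n + 1), permExp (fun σ => φ (rankT (rsMn B i (p.succAbove q)) σ +
      (B i (p.succAbove q) + y)))) / ((n : ℝ) + 1 + 1) - E1 =
      (∑ q : Fin (n + 1), (permExp (fun σ => φ (rankT (rsMn B i (p.succAbove q)) σ +
      (B i (p.succAbove q) + y))) - E1)) / ((n : ℝ) + 1 + 1) := by
    rw [Finset.sum_sub_distrib]
    simp
    field_simp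
    ring
  rw [e2, abs_div, abs_of_nonneg (by positivity : (0:ℝ) ≤ (n:ℝ) + 1 + 1)]
  have e3 : ∑ j, ∑ q, |rsD B i j p q| =
      ∑ q : Fin (n + 1), ∑ j : Fin (n + 1), |rsD B i (i.succAbove j) p (p.succAbove q)| := by
    rw [Fin.sum_univ_succAbove _ i]
    simp only [rsD_self_row, abs_zero, Finset.sum_const_zero, zero_add]
    rw [Finset.sum_comm, Fin.sum_univ_succAbove _ p]
    simp only [rsD_self_col, abs_zero, Finset.sum_const_zero, zero_add]
  rw [e3]
  rw [div_le_iff₀ (by positivity)]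
  refine (Finset.abs_sum_le_sum_abs _ _).trans ((Finset.sum_le_sum fun q _ => key q).trans ?_)
  rw [← Finset.mul_sum, ← Finset.sum_div]
  apply le_of_eq
  field_simp
  ring

lemma rs_compare {n : ℕ} (B : Matrix (Fin (n + 3)) (Fin (n + 3)) ℝ) (φ : ℝ → ℝ) (C y : ℝ)
    (hB : ∀ i j, |B i j| ≤ 1) (hC : 0 ≤ C) (hy : |y| ≤ 8)
    (hL : ∀ i p j q, rsLip (rsS B i p j q) φ 8 C)
    (hL' : ∀ i p j q j' q', rsLip (rsS (rsMn B i p) j q j' q') φ 8 C)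
    (i p : Fin (n + 3)) (j q : Fin (n + 2)) :
    |permExp (fun σ => φ (rankT (rsS B i p j q) σ + y)) - permExp (fun π => φ (rankT B π))| ≤
      C * ((∑ j', ∑ q', |rsD B i j' p q'|) / (((n : ℝ) + 3) * ((n : ℝ) + 2)) +
        (∑ j', ∑ q', |rsD B (i.succAbove j) j' (p.succAbove q) q'|) /
          (((n : ℝ) + 2) * ((n : ℝ) + 1)) +
        |y - (B i p + B (i.succAbove j) (p.succAbove q))|) := by
  have b1 := hB i p
  have b2 := hB (i.succAbove j) (p.succAbove q)
  have h1 := rs_step B φ 8 C 0 hB (by norm_num) hC hL i p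
  have h2 := rs_step (rsMn B i p) φ 8 C (B i p) (fun x y => hB _ _) (by linarith) hC
    (fun i' p' j' q' => hL' i p i' p' j' q') j q
  have h3 := hL i p j q y (B i p + B (i.succAbove j) (p.succAbove q)) hy
    ((abs_add_le _ _).trans (by linarith))
  have h4 : (∑ j', ∑ q', |rsD (rsMn B i p) j j' q q'|) ≤
      ∑ j', ∑ q', |rsD B (i.succAbove j) j' (p.succAbove q) q'| := by
    rw [Fin.sum_univ_succAbove _ i]
    have : 0 ≤ ∑ q', |rsD B (i.succAbove j) i (p.succAbove q) q'| :=
      Finset.sum_nonneg fun _ _ => abs_nonneg _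
    refine le_add_of_nonneg_of_le this ?_
    refine Finset.sum_le_sum fun j' _ => ?_
    rw [Fin.sum_univ_succAbove _ p]
    exact le_add_of_nonneg_of_le (abs_nonneg _) (le_of_eq rfl)
  have h5 : C * ((∑ j', ∑ q', |rsD (rsMn B i p) j j' q q'|) / (((n : ℝ) + 2) * ((n : ℝ) + 1))) ≤
      C * ((∑ j', ∑ q', |rsD B (i.succAbove j) j' (p.succAbove q) q'|) /
        (((n : ℝ) + 2) * ((n : ℝ) + 1))) := by gcongr
  simp only [add_zero] at h1
  push_cast at h1
  have e1 : ((n : ℝ) + 1 + 2) * ((n : ℝ) + 1 + 1) = ((n : ℝ) + 3) * ((n : ℝ) + 2) := by ring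
  rw [e1] at h1
  have e2 : rsMn B i p j q + B i p = B i p + B (i.succAbove j) (p.succAbove q) := by
    simp only [rsMn]; ring
  rw [e2] at h2
  rw [abs_sub_comm] at h1 h2
  have h6 := abs_sub_le (permExp (fun σ => φ (rankT (rsS B i p j q) σ + y)))
    (permExp (fun σ => φ (rankT (rsS B i p j q) σ + (B i p + B (i.succAbove j) (p.succAbove q)))))
    (permExp (fun π => φ (rankT B π)))
  have h7 := abs_sub_le
    (permExp (fun σ => φ (rankT (rsS B i p j q) σ + (B i p + B (i.succAbove j) (p.succAbove q)))))
    (permExp (fun σ => φ (rankT (rsMn B i p) σ + B i p)))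
    (permExp (fun π => φ (rankT B π)))
  have e3 : rsMn (rsMn B i p) j q = rsS B i p j q := rfl
  rw [e3] at h2
  rw [mul_add, mul_add]
  linarith

lemma rs_young (x y : ℝ) : x ^ 2 * |y| ≤ |x| ^ 3 + |y| ^ 3 := by
  rw [← sq_abs x]
  rcases le_total (|x|) (|y|) with h | h
  · have : |x| ^ 2 * |y| ≤ |y| ^ 2 * |y| := by gcongr
    have h2 : 0 ≤ |x| ^ 3 := by positivity
    nlinarith
  · have : |x| ^ 2 * |y| ≤ |x| ^ 2 * |x| := by gcongr
    have h2 : 0 ≤ |y| ^ 3 := by positivity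
    nlinarith

/-- sum of squares of exchange increments -/
def rsV {n : ℕ} (B : Matrix (Fin n) (Fin n) ℝ) : ℝ := ∑ i, ∑ j, ∑ p, ∑ q, rsD B i j p q ^ 2

/-- sum of cubes of exchange increments -/
def rsG {n : ℕ} (B : Matrix (Fin n) (Fin n) ℝ) : ℝ := ∑ i, ∑ j, ∑ p, ∑ q, |rsD B i j p q| ^ 3

lemma rs_sum1 {n : ℕ} (B : Matrix (Fin n) (Fin n) ℝ) :
    ∑ i, ∑ j, ∑ p, ∑ q, rsD B i j p q ^ 2 * (∑ j', ∑ q', |rsD B i j' p q'|) ≤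
      2 * (n : ℝ) ^ 2 * rsG B := by
  have h1 : ∑ i, ∑ j, ∑ p, ∑ q, rsD B i j p q ^ 2 * (∑ j', ∑ q', |rsD B i j' p q'|) ≤
      ∑ i, ∑ j, ∑ p, ∑ q, ∑ j', ∑ q', (|rsD B i j p q| ^ 3 + |rsD B i j' p q'| ^ 3) := by
    refine Finset.sum_le_sum fun i _ => Finset.sum_le_sum fun j _ => Finset.sum_le_sum fun p _ =>
      Finset.sum_le_sum fun q _ => ?_
    rw [Finset.mul_sum]
    refine Finset.sum_le_sum fun j' _ => ?_
    rw [Finset.mul_sum]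
    exact Finset.sum_le_sum fun q' _ => rs_young _ _
  refine h1.trans (le_of_eq ?_)
  have h2 : ∑ i, ∑ j, ∑ p, ∑ q, ∑ _j' : Fin n, ∑ _q' : Fin n, (|rsD B i j p q| ^ 3) = (n:ℝ) ^ 2 * rsG B := by
    simp only [Finset.sum_const, Finset.card_univ, Fintype.card_fin, nsmul_eq_mul, rsG,
      Finset.mul_sum]
    simp only [← mul_assoc, pow_two]
  have h3 : ∑ i, ∑ j : Fin n, ∑ p, ∑ q : Fin n, ∑ j', ∑ q', (|rsD B i j' p q'| ^ 3) =
      (n:ℝ) ^ 2 * rsG B := by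
    have : ∀ i, ∑ j, ∑ p, ∑ q, (|rsD B i j p q| ^ 3) = ∑ p, ∑ j, ∑ q, (|rsD B i j p q| ^ 3) :=
      fun i => Finset.sum_comm
    simp only [rsG, this]
    simp only [Finset.sum_const, Finset.card_univ, Fintype.card_fin, nsmul_eq_mul,
      Finset.mul_sum]
    simp only [← mul_assoc, pow_two]
  simp only [Finset.sum_add_distrib]
  rw [h2, h3]
  ring

lemma rsD_swap {n : ℕ} (B : Matrix (Fin n) (Fin n) ℝ) (i j p q : Fin n) :
    rsD B i j p q = rsD B j i q p := by unfold rsD; ring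

lemma rs_sum2 {n : ℕ} (B : Matrix (Fin n) (Fin n) ℝ) :
    ∑ i, ∑ j, ∑ p, ∑ q, rsD B i j p q ^ 2 * (∑ j', ∑ q', |rsD B j j' q q'|) ≤
      2 * (n : ℝ) ^ 2 * rsG B := by
  refine le_trans (le_of_eq ?_) (rs_sum1 B)
  rw [Finset.sum_comm]
  refine Finset.sum_congr rfl fun j _ => Finset.sum_congr rfl fun i _ => ?_
  rw [Finset.sum_comm]
  refine Finset.sum_congr rfl fun q _ => Finset.sum_congr rfl fun p _ => ?_
  rw [rsD_swap]

lemma rs_stein_main {n : ℕ} (B : Matrix (Fin (n + 3)) (Fin (n + 3)) ℝ) (f φ : ℝ → ℝ) (C : ℝ)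
    (hB : ∀ i j, |B i j| ≤ 1) (hC : 0 ≤ C) (hf : ∀ x, HasDerivAt f (φ x) x)
    (hL : ∀ i p j q, rsLip (rsS B i p j q) φ 8 C)
    (hL' : ∀ i p j q j' q', rsLip (rsS (rsMn B i p) j q j' q') φ 8 C) :
    |4 * permExp (fun π => (((n : ℝ) + 3) * rankT B π - rsTot B) * f (rankT B π)) -
      rsV B / (((n : ℝ) + 3) * ((n : ℝ) + 2)) * permExp (fun π => φ (rankT B π))| ≤
      13 * C * rsG B / (((n : ℝ) + 3) * ((n : ℝ) + 2)) := by
  have h0 := rs_stein_ident B f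
  push_cast at h0
  rw [show ((n : ℝ) + 1 + 2) = (n : ℝ) + 3 by ring, show ((n : ℝ) + 1 + 1) = (n : ℝ) + 2 by ring]
    at h0
  rw [h0]
  set κ := permExp (fun π => φ (rankT B π)) with hκ
  set W : Fin (n+3) → Fin (n+3) → Fin (n+3) → Fin (n+3) → ℝ := fun i j p q =>
    (∑ j', ∑ q', |rsD B i j' p q'|) / (((n : ℝ) + 3) * ((n : ℝ) + 2)) +
        (∑ j', ∑ q', |rsD B j j' q q'|) / (((n : ℝ) + 2) * ((n : ℝ) + 1)) + |rsD B i j p q| with hW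
  have hWnn : ∀ i j p q, 0 ≤ W i j p q := by
    intro i j p q
    have h1 : ∀ i p, 0 ≤ ∑ j', ∑ q', |rsD B i j' p q'| := fun i p =>
      Finset.sum_nonneg fun _ _ => Finset.sum_nonneg fun _ _ => abs_nonneg _
    have h2 := h1 i p
    have h3 := h1 j q
    simp only [hW]
    positivity
  have key : ∀ (i : Fin (n+3)) (j : Fin (n+2)) (p : Fin (n+3)) (q : Fin (n+2)),
      |rsD B i (i.succAbove j) p (p.succAbove q) *
          (permExp (fun σ => f (rankT (rsS B i p j q) σ +
              (B i p + B (i.succAbove j) (p.succAbove q) +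
                rsD B i (i.succAbove j) p (p.succAbove q)))) -
            permExp (fun σ => f (rankT (rsS B i p j q) σ +
              (B i p + B (i.succAbove j) (p.succAbove q))))) -
        rsD B i (i.succAbove j) p (p.succAbove q) ^ 2 * κ| ≤
      C * (rsD B i (i.succAbove j) p (p.succAbove q) ^ 2 *
        W i (i.succAbove j) p (p.succAbove q)) := by
    intro i j p q
    set d := rsD B i (i.succAbove j) p (p.succAbove q) with hd
    set y0 := B i p + B (i.succAbove j) (p.succAbove q) with hy0
    set ψ : ℝ → ℝ := fun t => permExp (fun σ => f (rankT (rsS B i p j q) σ + (y0 + t))) - t * κ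
      with hψ
    have hder : ∀ t, HasDerivAt ψ (permExp (fun σ => φ (rankT (rsS B i p j q) σ + (y0 + t))) - κ) t := by
      intro t
      have h1 : HasDerivAt (fun t => permExp (fun σ => f (rankT (rsS B i p j q) σ + (y0 + t))))
          (permExp (fun σ => φ (rankT (rsS B i p j q) σ + (y0 + t)))) t := by
        unfold permExp
        refine HasDerivAt.div_const ?_ _
        refine HasDerivAt.fun_sum fun σ _ => ?_
        have h3 : HasDerivAt (fun t => rankT (rsS B i p j q) σ + (y0 + t)) 1 t := by
          have := (hasDerivAt_id t).const_add (rankT (rsS B i p j q) σ + y0)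
          simpa [add_assoc] using this
        have h4 := (hf (rankT (rsS B i p j q) σ + (y0 + t))).comp t h3
        simpa [Function.comp_def] using h4
      have h2 : HasDerivAt (fun t => t * κ) κ t := by
        simpa using (hasDerivAt_id t).mul_const κ
      exact h1.sub h2
    have b1 := hB i p
    have b2 := hB (i.succAbove j) (p.succAbove q)
    have b3 := hB i (p.succAbove q)
    have b4 := hB (i.succAbove j) p
    have hdy : y0 + d = B i (p.succAbove q) + B (i.succAbove j) p := by
      simp only [hy0, hd, rsD]; ring
    have ha0 : |y0| ≤ 2 := (abs_add_le _ _).trans (by linarith)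
    have ha1 : |y0 + d| ≤ 2 := by rw [hdy]; exact (abs_add_le _ _).trans (by linarith)
    have hbd : ∀ t ∈ Set.uIcc 0 d, ‖permExp (fun σ => φ (rankT (rsS B i p j q) σ + (y0 + t))) - κ‖ ≤
        C * W i (i.succAbove j) p (p.succAbove q) := by
      intro t ht
      have ht1 : |t| ≤ |d| := by
        have := Set.abs_sub_left_of_mem_uIcc ht
        simpa using this
      have ht2 : |y0 + t| ≤ 8 := by
        have hd4 : |d| ≤ 4 := by
          have := abs_sub (y0 + d) y0
          simp only [add_sub_cancel_left] at this
          linarith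
        have := abs_add_le y0 t
        linarith
      have := rs_compare B φ C (y0 + t) hB hC ht2 hL hL' i p j q
      rw [Real.norm_eq_abs]
      refine this.trans ?_
      refine mul_le_mul_of_nonneg_left ?_ hC
      simp only [hW, ← hy0, add_sub_cancel_left]
      linarith
    have hmv := Convex.norm_image_sub_le_of_norm_hasDerivWithin_le
      (f := ψ) (s := Set.uIcc 0 d) (fun t _ => (hder t).hasDerivWithinAt) hbd (convex_uIcc 0 d)
      Set.left_mem_uIcc Set.right_mem_uIcc
    simp only [Real.norm_eq_abs, sub_zero] at hmv
    have e : d * (permExp (fun σ => f (rankT (rsS B i p j q) σ + (y0 + d))) -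
            permExp (fun σ => f (rankT (rsS B i p j q) σ + y0))) - d ^ 2 * κ =
        d * (ψ d - ψ 0) := by
      simp only [hψ, add_zero]
      ring
    rw [e, abs_mul]
    calc |d| * |ψ d - ψ 0| ≤ |d| * (C * W i (i.succAbove j) p (p.succAbove q) * |d|) := by gcongr
      _ = C * (|d| ^ 2 * W i (i.succAbove j) p (p.succAbove q)) := by ring
      _ = _ := by rw [sq_abs]
  have hV : rsV B = ∑ i, ∑ j : Fin (n+2), ∑ p, ∑ q : Fin (n+2),
      rsD B i (i.succAbove j) p (p.succAbove q) ^ 2 := by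
    have := rsD_sum B (fun x => x ^ 2) (by norm_num) (fun _ _ _ _ => 1)
    simpa [rsV] using this
  have hWs : ∑ i, ∑ j : Fin (n+2), ∑ p, ∑ q : Fin (n+2),
      rsD B i (i.succAbove j) p (p.succAbove q) ^ 2 * W i (i.succAbove j) p (p.succAbove q) ≤
      13 * rsG B := by
    have := rsD_sum B (fun x => x ^ 2) (by norm_num) W
    rw [← this]
    have s1 := rs_sum1 B
    have s2 := rs_sum2 B
    have e : ∑ i, ∑ j, ∑ p, ∑ q, rsD B i j p q ^ 2 * W i j p q =
      (∑ i, ∑ j, ∑ p, ∑ q, rsD B i j p q ^ 2 * (∑ j', ∑ q', |rsD B i j' p q'|)) /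
        (((n : ℝ) + 3) * ((n : ℝ) + 2)) +
      (∑ i, ∑ j, ∑ p, ∑ q, rsD B i j p q ^ 2 * (∑ j', ∑ q', |rsD B j j' q q'|)) /
        (((n : ℝ) + 2) * ((n : ℝ) + 1)) + rsG B := by
      have sd : ∀ (F : Fin (n+3) → Fin (n+3) → Fin (n+3) → Fin (n+3) → ℝ) (c : ℝ),
          (∑ i, ∑ j, ∑ p, ∑ q, F i j p q) / c = ∑ i, ∑ j, ∑ p, ∑ q, F i j p q / c := by
        intro F c
        simp only [Finset.sum_div]
      rw [sd, sd]
      simp only [rsG, ← Finset.sum_add_distrib]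
      refine Finset.sum_congr rfl fun i _ => Finset.sum_congr rfl fun j _ =>
        Finset.sum_congr rfl fun p _ => Finset.sum_congr rfl fun q _ => ?_
      have : |rsD B i j p q| ^ 3 = rsD B i j p q ^ 2 * |rsD B i j p q| := by
        rw [← sq_abs (rsD B i j p q)]; ring
      rw [this]
      simp only [hW]
      ring
    rw [e]
    have hG : 0 ≤ rsG B := Finset.sum_nonneg fun _ _ => Finset.sum_nonneg fun _ _ =>
      Finset.sum_nonneg fun _ _ => Finset.sum_nonneg fun _ _ => by positivity
    push_cast at s1 s2
    have t1 : (∑ i, ∑ j, ∑ p, ∑ q, rsD B i j p q ^ 2 * (∑ j', ∑ q', |rsD B i j' p q'|)) /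
        (((n : ℝ) + 3) * ((n : ℝ) + 2)) ≤ 3 * rsG B := by
      rw [div_le_iff₀ (by positivity)]
      refine s1.trans ?_
      have : 2 * ((n:ℝ) + 3) ^ 2 ≤ 3 * (((n:ℝ) + 3) * ((n:ℝ) + 2)) := by
        have : (0:ℝ) ≤ n := by positivity
        nlinarith
      nlinarith
    have t2 : (∑ i, ∑ j, ∑ p, ∑ q, rsD B i j p q ^ 2 * (∑ j', ∑ q', |rsD B j j' q q'|)) /
        (((n : ℝ) + 2) * ((n : ℝ) + 1)) ≤ 9 * rsG B := by
      rw [div_le_iff₀ (by positivity)]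
      refine s2.trans ?_
      have : 2 * ((n:ℝ) + 3) ^ 2 ≤ 9 * (((n:ℝ) + 2) * ((n:ℝ) + 1)) := by
        have : (0:ℝ) ≤ n := by positivity
        nlinarith
      nlinarith
    linarith
  rw [hV, div_mul_eq_mul_div, ← sub_div, abs_div,
    abs_of_nonneg (by positivity : (0:ℝ) ≤ ((n:ℝ) + 3) * ((n:ℝ) + 2))]
  refine div_le_div_of_nonneg_right ?_ (by positivity)
  simp only [Finset.sum_mul, ← Finset.sum_sub_distrib]
  have hfin : ∑ i, ∑ j : Fin (n+2), ∑ p, ∑ q : Fin (n+2),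
      C * (rsD B i (i.succAbove j) p (p.succAbove q) ^ 2 *
        W i (i.succAbove j) p (p.succAbove q)) ≤ 13 * C * rsG B := by
    simp only [← Finset.mul_sum]
    nlinarith [mul_le_mul_of_nonneg_left hWs hC]
  refine le_trans ?_ hfin
  refine (Finset.abs_sum_le_sum_abs _ _).trans (Finset.sum_le_sum fun i _ => ?_)
  refine (Finset.abs_sum_le_sum_abs _ _).trans (Finset.sum_le_sum fun j _ => ?_)
  refine (Finset.abs_sum_le_sum_abs _ _).trans (Finset.sum_le_sum fun p _ => ?_)
  refine (Finset.abs_sum_le_sum_abs _ _).trans (Finset.sum_le_sum fun q _ => ?_)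
  exact key i j p q

end RS2

/-- Basic boundedness of a matrix. -/
structure rsR0 {n : ℕ} (L : ℝ) (B : Matrix (Fin n) (Fin n) ℝ) : Prop where
  bd : ∀ i j, |B i j| ≤ 1
  tot : |rsTot B| ≤ L * n
  V : rsV B ≤ L * (n : ℝ) ^ 3

/-- Regularity of a matrix. -/
structure rsReg {n : ℕ} (L c γ : ℝ) (B : Matrix (Fin n) (Fin n) ℝ) : Prop where
  r0 : rsR0 L B
  G : rsG B ≤ γ * L * (n : ℝ) ^ 3
  Vlo : c * (n : ℝ) ^ 3 ≤ rsV B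

lemma rs_sum4_minor_le {n : ℕ} (F : Fin (n+1) → Fin (n+1) → Fin (n+1) → Fin (n+1) → ℝ)
    (hF : ∀ i j p q, 0 ≤ F i j p q) (a b : Fin (n+1)) :
    ∑ i, ∑ j, ∑ p, ∑ q, F (a.succAbove i) (a.succAbove j) (b.succAbove p) (b.succAbove q) ≤
      ∑ i, ∑ j, ∑ p, ∑ q, F i j p q := by
  have key : ∀ (c : Fin (n+1)) (f : Fin (n+1) → ℝ) (g : Fin n → ℝ), (∀ i, 0 ≤ f i) →
      (∀ i, g i ≤ f (c.succAbove i)) → ∑ i, g i ≤ ∑ i, f i := by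
    intro c f g hf hg
    rw [Fin.sum_univ_succAbove f c]
    have := Finset.sum_le_sum fun i (_ : i ∈ Finset.univ) => hg i
    linarith [hf c]
  refine key a _ _ (fun i => ?_) fun i => ?_
  · exact Finset.sum_nonneg fun _ _ => Finset.sum_nonneg fun _ _ => Finset.sum_nonneg fun _ _ => hF _ _ _ _
  refine key a _ _ (fun i => ?_) fun j => ?_
  · exact Finset.sum_nonneg fun _ _ => Finset.sum_nonneg fun _ _ => hF _ _ _ _
  refine key b _ _ (fun i => ?_) fun p => ?_
  · exact Finset.sum_nonneg fun _ _ => hF _ _ _ _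
  exact key b _ _ (fun i => hF _ _ _ _) fun q => le_rfl

lemma rs_sum4_minor_ge {n : ℕ} (F : Fin (n+1) → Fin (n+1) → Fin (n+1) → Fin (n+1) → ℝ)
    (hF : ∀ i j p q, 0 ≤ F i j p q) (a b : Fin (n+1)) :
    ∑ i, ∑ j, ∑ p, ∑ q, F i j p q ≤
    ∑ i, ∑ j, ∑ p, ∑ q, F (a.succAbove i) (a.succAbove j) (b.succAbove p) (b.succAbove q) +
      (∑ j, ∑ p, ∑ q, F a j p q) + (∑ i, ∑ p, ∑ q, F i a p q) + (∑ i, ∑ j, ∑ q, F i j b q) +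
      (∑ i, ∑ j, ∑ p, F i j p b) := by
  have key : ∀ (c : Fin (n+1)) (f : Fin (n+1) → ℝ), (∀ i, 0 ≤ f i) →
      ∑ i : Fin n, f (c.succAbove i) ≤ ∑ i, f i := by
    intro c f hf
    rw [Fin.sum_univ_succAbove f c]
    linarith [hf c]
  have h1 : ∑ i, ∑ j, ∑ p, ∑ q, F i j p q = (∑ j, ∑ p, ∑ q, F a j p q) +
      ∑ i, ∑ j, ∑ p, ∑ q, F (a.succAbove i) j p q := Fin.sum_univ_succAbove _ a
  have h2 : ∑ i, ∑ j, ∑ p, ∑ q, F (a.succAbove i) j p q ≤ (∑ i, ∑ p, ∑ q, F i a p q) +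
      ∑ i, ∑ j, ∑ p, ∑ q, F (a.succAbove i) (a.succAbove j) p q := by
    simp_rw [fun i : Fin n => Fin.sum_univ_succAbove (fun j => ∑ p, ∑ q, F (a.succAbove i) j p q) a]
    rw [Finset.sum_add_distrib]
    have := key a (fun i => ∑ p, ∑ q, F i a p q) fun i =>
      Finset.sum_nonneg fun _ _ => Finset.sum_nonneg fun _ _ => hF _ _ _ _
    linarith
  have h3 : ∑ i, ∑ j, ∑ p, ∑ q, F (a.succAbove i) (a.succAbove j) p q ≤ (∑ i, ∑ j, ∑ q, F i j b q) +
      ∑ i, ∑ j, ∑ p, ∑ q, F (a.succAbove i) (a.succAbove j) (b.succAbove p) q := by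
    simp_rw [fun i j : Fin n => Fin.sum_univ_succAbove
      (fun p => ∑ q, F (a.succAbove i) (a.succAbove j) p q) b]
    simp_rw [Finset.sum_add_distrib]
    have e1 : ∑ i, ∑ j : Fin n, ∑ q, F (a.succAbove i) (a.succAbove j) b q ≤
        ∑ i, ∑ j, ∑ q, F i j b q := by
      refine le_trans ?_ (key a (fun i => ∑ j, ∑ q, F i j b q) fun i =>
        Finset.sum_nonneg fun _ _ => Finset.sum_nonneg fun _ _ => hF _ _ _ _)
      exact Finset.sum_le_sum fun i _ => key a (fun j => ∑ q, F (a.succAbove i) j b q) fun i =>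
        Finset.sum_nonneg fun _ _ => hF _ _ _ _
    linarith
  have h4 : ∑ i, ∑ j, ∑ p, ∑ q, F (a.succAbove i) (a.succAbove j) (b.succAbove p) q ≤
      (∑ i, ∑ j, ∑ p, F i j p b) +
      ∑ i, ∑ j, ∑ p, ∑ q, F (a.succAbove i) (a.succAbove j) (b.succAbove p) (b.succAbove q) := by
    simp_rw [fun i j p : Fin n => Fin.sum_univ_succAbove
      (fun q => F (a.succAbove i) (a.succAbove j) (b.succAbove p) q) b]
    simp_rw [Finset.sum_add_distrib]
    have e1 : ∑ i, ∑ j : Fin n, ∑ p : Fin n, F (a.succAbove i) (a.succAbove j) (b.succAbove p) b ≤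
        ∑ i, ∑ j, ∑ p, F i j p b := by
      refine le_trans ?_ (key a (fun i => ∑ j, ∑ p, F i j p b) fun i =>
        Finset.sum_nonneg fun _ _ => Finset.sum_nonneg fun _ _ => hF _ _ _ _)
      refine Finset.sum_le_sum fun i _ => le_trans ?_ (key a (fun j => ∑ p, F (a.succAbove i) j p b)
        fun i => Finset.sum_nonneg fun _ _ => hF _ _ _ _)
      exact Finset.sum_le_sum fun j _ => key b (fun p => F (a.succAbove i) (a.succAbove j) p b)
        fun i => hF _ _ _ _
    linarith
  linarith

lemma rsV_mn_le {n : ℕ} (B : Matrix (Fin (n + 1)) (Fin (n + 1)) ℝ) (i p : Fin (n + 1)) :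
    rsV (rsMn B i p) ≤ rsV B :=
  rs_sum4_minor_le (fun i j p q => rsD B i j p q ^ 2) (fun _ _ _ _ => sq_nonneg _) i p

lemma rsG_mn_le {n : ℕ} (B : Matrix (Fin (n + 1)) (Fin (n + 1)) ℝ) (i p : Fin (n + 1)) :
    rsG (rsMn B i p) ≤ rsG B :=
  rs_sum4_minor_le (fun i j p q => |rsD B i j p q| ^ 3) (fun _ _ _ _ => by positivity) i p

lemma rsG_nonneg {n : ℕ} (B : Matrix (Fin n) (Fin n) ℝ) : 0 ≤ rsG B :=
  Finset.sum_nonneg fun _ _ => Finset.sum_nonneg fun _ _ =>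
      Finset.sum_nonneg fun _ _ => Finset.sum_nonneg fun _ _ => by positivity

lemma rsV_nonneg {n : ℕ} (B : Matrix (Fin n) (Fin n) ℝ) : 0 ≤ rsV B :=
  Finset.sum_nonneg fun _ _ => Finset.sum_nonneg fun _ _ =>
      Finset.sum_nonneg fun _ _ => Finset.sum_nonneg fun _ _ => by positivity

lemma rsTot_mn {n : ℕ} (B : Matrix (Fin (n + 1)) (Fin (n + 1)) ℝ) (hB : ∀ i j, |B i j| ≤ 1)
    (i p : Fin (n + 1)) : |rsTot (rsMn B i p)| ≤ |rsTot B| + 2 * ((n : ℝ) + 1) := by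
  have e : rsTot B = rsTot (rsMn B i p) + (∑ q, B i q) + ∑ j : Fin n, B (i.succAbove j) p := by
    unfold rsTot
    rw [Fin.sum_univ_succAbove _ i]
    simp_rw [fun j : Fin n => Fin.sum_univ_succAbove (fun q => B (i.succAbove j) q) p]
    rw [Finset.sum_add_distrib]
    simp only [rsMn]
    ring
  have e1 : |∑ q, B i q| ≤ (n : ℝ) + 1 := by
    refine (Finset.abs_sum_le_sum_abs _ _).trans ?_
    refine (Finset.sum_le_sum fun q _ => hB i q).trans ?_
    simp
  have e2 : |∑ j : Fin n, B (i.succAbove j) p| ≤ (n : ℝ) := by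
    refine (Finset.abs_sum_le_sum_abs _ _).trans ?_
    refine (Finset.sum_le_sum fun q _ => hB _ p).trans ?_
    simp
  rw [abs_le] at *
  constructor <;> cases abs_cases (rsTot B) <;> linarith

lemma rsR0_mn {n : ℕ} {L : ℝ} (hL : 0 ≤ L) {B : Matrix (Fin (n + 1)) (Fin (n + 1)) ℝ}
    (h : rsR0 L B) (i p : Fin (n + 1)) : rsR0 (8 * L + 4) (rsMn B i p) := by
  rcases Nat.eq_zero_or_pos n with rfl | hn
  · exact ⟨fun i => i.elim0, by simp [rsTot], by simp [rsV]⟩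
  have hn1 : (1 : ℝ) ≤ n := by exact_mod_cast hn
  refine ⟨fun x y => h.bd _ _, ?_, ?_⟩
  · have h1 := rsTot_mn B h.bd i p
    have h2 := h.tot
    push_cast at h2
    nlinarith
  · have h1 := rsV_mn_le B i p
    have h2 := h.V
    push_cast at h2
    have h3 : ((n : ℝ) + 1) ^ 3 ≤ (2 * n) ^ 3 := by gcongr; linarith
    have h4 : (0:ℝ) ≤ (n : ℝ) ^ 3 := by positivity
    nlinarith

lemma rs_sq_le (x t : ℝ) (ht : 0 < t) : x ^ 2 ≤ t ^ 2 + |x| ^ 3 / t := by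
  rw [← sq_abs x]
  rcases le_total (|x|) t with h | h
  · have : |x| ^ 2 ≤ t ^ 2 := by gcongr
    have h2 : 0 ≤ |x| ^ 3 / t := by positivity
    linarith
  · have : |x| ^ 2 ≤ |x| ^ 3 / t := by
      rw [le_div_iff₀ ht]
      have : 0 ≤ |x| ^ 2 := by positivity
      nlinarith
    nlinarith [sq_nonneg t]

lemma rsV_mn_ge {n : ℕ} (B : Matrix (Fin (n + 1)) (Fin (n + 1)) ℝ) (t : ℝ) (ht : 0 < t)
    (i p : Fin (n + 1)) :
    rsV B ≤ rsV (rsMn B i p) + 4 * (t ^ 2 * ((n : ℝ) + 1) ^ 3 + rsG B / t) := by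
  have h := rs_sum4_minor_ge (fun i j p q => rsD B i j p q ^ 2) (fun _ _ _ _ => sq_nonneg _) i p
  have hs : ∀ f : Fin (n+1) → Fin (n+1) → Fin (n+1) → ℝ,
      (∑ a, ∑ b, ∑ c, |f a b c| ^ 3 ≤ rsG B) →
      ∑ a, ∑ b, ∑ c, f a b c ^ 2 ≤ t ^ 2 * ((n : ℝ) + 1) ^ 3 + rsG B / t := by
    intro f hf
    calc ∑ a, ∑ b, ∑ c, f a b c ^ 2 ≤ ∑ a, ∑ b, ∑ c, (t ^ 2 + |f a b c| ^ 3 / t) := by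
          exact Finset.sum_le_sum fun _ _ => Finset.sum_le_sum fun _ _ =>
            Finset.sum_le_sum fun _ _ => rs_sq_le _ t ht
      _ = t ^ 2 * ((n : ℝ) + 1) ^ 3 + (∑ a, ∑ b, ∑ c, |f a b c| ^ 3) / t := by
          simp only [Finset.sum_add_distrib, Finset.sum_div]
          simp
          ring
      _ ≤ _ := by gcongr
  have n3 : ∀ i j p : Fin (n+1), 0 ≤ ∑ q, |rsD B i j p q| ^ 3 := fun _ _ _ =>
    Finset.sum_nonneg fun _ _ => by positivity
  have n2 : ∀ i j : Fin (n+1), 0 ≤ ∑ p, ∑ q, |rsD B i j p q| ^ 3 := fun _ _ =>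
    Finset.sum_nonneg fun _ _ => n3 _ _ _
  have n1 : ∀ i : Fin (n+1), 0 ≤ ∑ j, ∑ p, ∑ q, |rsD B i j p q| ^ 3 := fun _ =>
    Finset.sum_nonneg fun _ _ => n2 _ _
  have a1 := hs (fun j p q => rsD B i j p q) (Finset.single_le_sum
    (f := fun i => ∑ j, ∑ p, ∑ q, |rsD B i j p q| ^ 3) (fun a _ => n1 a) (Finset.mem_univ i))
  have a2 := hs (fun j p q => rsD B j i p q) (Finset.sum_le_sum fun j _ => Finset.single_le_sum
    (f := fun i => ∑ p, ∑ q, |rsD B j i p q| ^ 3) (fun a _ => n2 _ a) (Finset.mem_univ i))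
  have a3 := hs (fun j k q => rsD B j k p q) (Finset.sum_le_sum fun j _ => Finset.sum_le_sum fun k _ =>
    Finset.single_le_sum
    (f := fun i => ∑ q, |rsD B j k i q| ^ 3) (fun a _ => n3 _ _ a) (Finset.mem_univ p))
  have a4 := hs (fun j k q => rsD B j k q p) (Finset.sum_le_sum fun j _ => Finset.sum_le_sum fun k _ =>
    Finset.sum_le_sum fun q _ => Finset.single_le_sum
    (f := fun i => |rsD B j k q i| ^ 3) (fun a _ => by positivity) (Finset.mem_univ p))
  have e : rsV (rsMn B i p) = ∑ i', ∑ j', ∑ p', ∑ q', rsD B (i.succAbove i') (i.succAbove j')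
    (p.succAbove p') (p.succAbove q') ^ 2 := rfl
  have e' : rsV B = ∑ i, ∑ j, ∑ p, ∑ q, rsD B i j p q ^ 2 := rfl
  rw [e, e']
  linarith

lemma rsReg_mn (L c : ℝ) (hL : 0 < L) (hc : 0 < c) : ∃ γ0 : ℝ, 0 < γ0 ∧ ∀ γ, 0 ≤ γ → γ ≤ γ0 →
    ∀ (n : ℕ) (B : Matrix (Fin (n + 1)) (Fin (n + 1)) ℝ), rsReg L c γ B → ∀ i p,
    rsReg (8 * L + 4) (c / 2) γ (rsMn B i p) := by
  set t := √c / 4 with ht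
  have htp : 0 < t := by positivity
  have ht2 : t ^ 2 = c / 16 := by rw [ht, div_pow, Real.sq_sqrt hc.le]; norm_num
  refine ⟨c * t / (16 * L), by positivity, fun γ hγ0 hγ n B h i p => ⟨rsR0_mn hL.le h.r0 i p, ?_, ?_⟩⟩
  · rcases Nat.eq_zero_or_pos n with rfl | hn
    · simp [rsG]
    have hn1 : (1 : ℝ) ≤ n := by exact_mod_cast hn
    have h1 := rsG_mn_le B i p
    have h2 := h.G
    push_cast at h2
    have h3 : ((n : ℝ) + 1) ^ 3 ≤ (2 * n) ^ 3 := by gcongr; linarith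
    have h4 : (0:ℝ) ≤ (n : ℝ) ^ 3 := by positivity
    calc rsG (rsMn B i p) ≤ γ * L * (2 * n) ^ 3 := by
          refine h1.trans (h2.trans ?_); gcongr
      _ ≤ γ * (8 * L + 4) * n ^ 3 := by
        have := mul_nonneg hγ0 h4
        nlinarith
  · have h1 := rsV_mn_ge B t htp i p
    have h2 := h.Vlo
    have h3 := h.G
    push_cast at h2 h3
    have h4 : rsG B / t ≤ c / 16 * ((n : ℝ) + 1) ^ 3 := by
      rw [div_le_iff₀ htp]
      refine h3.trans ?_
      have : γ * L ≤ c / 16 * t := by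
        have := mul_le_mul_of_nonneg_right hγ hL.le
        rw [show c * t / (16 * L) * L = c / 16 * t by field_simp] at this
        exact this
      calc _ ≤ (c / 16 * t) * ((n:ℝ) + 1) ^ 3 := by gcongr
        _ = _ := by ring
    rw [ht2] at h1
    have h5 : (n : ℝ) ^ 3 ≤ ((n : ℝ) + 1) ^ 3 := by gcongr; linarith
    have h6 : c / 2 * (n : ℝ) ^ 3 ≤ c / 2 * ((n : ℝ) + 1) ^ 3 := by gcongr
    linarith

lemma rankT_abs_le {n : ℕ} {B : Matrix (Fin n) (Fin n) ℝ} (hB : ∀ i j, |B i j| ≤ 1)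
    (π : Equiv.Perm (Fin n)) : |rankT B π| ≤ n := by
  unfold rankT
  refine (Finset.abs_sum_le_sum_abs _ _).trans ((Finset.sum_le_sum fun i _ => hB i (π i)).trans ?_)
  simp

lemma rsD_abs_le {n : ℕ} {B : Matrix (Fin n) (Fin n) ℝ} (hB : ∀ i j, |B i j| ≤ 1)
    (i j p q : Fin n) : |rsD B i j p q| ≤ 4 := by
  unfold rsD
  have h1 := abs_le.1 (hB i q)
  have h2 := abs_le.1 (hB j p)
  have h3 := abs_le.1 (hB i p)
  have h4 := abs_le.1 (hB j q)
  rw [abs_le]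
  constructor <;> linarith

lemma rsV_succ {n : ℕ} (B : Matrix (Fin (n+1)) (Fin (n+1)) ℝ) :
    rsV B = ∑ i, ∑ j : Fin n, ∑ p, ∑ q : Fin n,
      rsD B i (i.succAbove j) p (p.succAbove q) ^ 2 := by
  have := rsD_sum B (fun x => x ^ 2) (by norm_num) (fun _ _ _ _ => 1)
  simpa [rsV] using this

lemma rs_moment (r : ℕ) : ∀ L : ℝ, 0 ≤ L → ∃ C : ℝ, 0 ≤ C ∧ ∀ (n : ℕ) (B : Matrix (Fin n) (Fin n) ℝ),
    rsR0 L B → permExp (fun π => rankT B π ^ (2 * r)) ≤ C := by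
  induction r with
  | zero =>
    intro L _
    refine ⟨1, by norm_num, fun n B _ => ?_⟩
    simp [permExp_const]
  | succ r ih =>
    intro L hL
    obtain ⟨C, hC, hM⟩ := ih (8 * (8 * L + 4) + 4) (by positivity)
    set K : ℝ := (2 * r + 1 : ℕ) * (2 ^ (2 * r - 1) * (C + 6 ^ (2 * r))) with hK
    have hKp : 0 ≤ K := by positivity
    refine ⟨L * K + 2 * (L * (2 * L) ^ (2 * r + 1)) + 1, by positivity, fun n B hB => ?_⟩
    rcases Nat.lt_or_ge n 2 with hn | hn
    · have h1 : permExp (fun π => rankT B π ^ (2 * (r + 1))) ≤ permExp (fun _ : Equiv.Perm (Fin n) => 1) := by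
        refine permExp_mono fun π => ?_
        have h1 := rankT_abs_le hB.bd π
        have h2 : (n : ℝ) ≤ 1 := by exact_mod_cast (by omega : n ≤ 1)
        rw [pow_mul, ← sq_abs, ← pow_mul]
        exact pow_le_one₀ (abs_nonneg _) (h1.trans h2)
      rw [permExp_const] at h1
      have : 0 ≤ L * K + 2 * (L * (2 * L) ^ (2 * r + 1)) := by positivity
      linarith
    obtain ⟨n, rfl⟩ := Nat.exists_eq_add_of_le' hn
    have hid := rs_stein_ident B (fun t => t ^ (2 * r + 1))
    have hN : (0 : ℝ) < (n : ℝ) + 2 := by positivity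
    have hR : (∑ i, ∑ j : Fin (n + 1), ∑ p, ∑ q : Fin (n + 1),
        rsD B i (i.succAbove j) p (p.succAbove q) *
          (permExp (fun σ => (fun t => t ^ (2 * r + 1)) (rankT (rsS B i p j q) σ +
              (B i p + B (i.succAbove j) (p.succAbove q) +
                rsD B i (i.succAbove j) p (p.succAbove q)))) -
            permExp (fun σ => (fun t => t ^ (2 * r + 1)) (rankT (rsS B i p j q) σ +
              (B i p + B (i.succAbove j) (p.succAbove q)))))) ≤ rsV B * K := by
      rw [rsV_succ B]
      simp only [Finset.sum_mul]
      refine Finset.sum_le_sum fun i _ => Finset.sum_le_sum fun j _ => Finset.sum_le_sum fun p _ =>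
        Finset.sum_le_sum fun q _ => ?_
      set d := rsD B i (i.succAbove j) p (p.succAbove q) with hd
      set y := B i p + B (i.succAbove j) (p.succAbove q) with hy
      have hy2 : |y| ≤ 2 := (abs_add_le _ _).trans (by linarith [hB.bd i p, hB.bd (i.succAbove j) (p.succAbove q)])
      have hd4 : |d| ≤ 4 := rsD_abs_le hB.bd _ _ _ _
      have hSm := hM n (rsS B i p j q) (rsR0_mn (by positivity) (rsR0_mn hL hB i p) j q)
      refine (le_abs_self _).trans ?_
      rw [abs_mul, ← permExp_sub, ← sq_abs d, sq, mul_assoc]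
      refine mul_le_mul_of_nonneg_left ?_ (abs_nonneg _)
      refine (permExp_abs_le _).trans ?_
      have : permExp (fun σ => |d| * ((2 * r + 1 : ℕ) * (2 ^ (2 * r - 1) *
          (rankT (rsS B i p j q) σ ^ (2 * r) + 6 ^ (2 * r))))) ≤ |d| * K := by
        simp only [permExp_mul, permExp_add, permExp_const, hK]
        gcongr
      refine le_trans (permExp_mono fun σ => ?_) this
      set S := rankT (rsS B i p j q) σ
      have h1 := abs_pow_sub_pow_le (S + (y + d)) (S + y) (2 * r + 1)
      refine h1.trans ?_
      rw [show S + (y + d) - (S + y) = d by ring, mul_assoc]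
      simp only [Nat.add_sub_cancel]
      have h2 : max |S + (y + d)| |S + y| ≤ |S| + 6 := by
        refine max_le ?_ ?_
        · have := abs_add_le S (y + d); have := abs_add_le y d; linarith
        · have := abs_add_le S y; linarith
      have h3 : max |S + (y + d)| |S + y| ^ (2 * r) ≤ (|S| + 6) ^ (2 * r) :=
        pow_le_pow_left₀ (le_max_of_le_left (abs_nonneg _)) h2 _
      have h4 := add_pow_le (abs_nonneg S) (by norm_num : (0:ℝ) ≤ 6) (2 * r)
      have h5 : |S| ^ (2 * r) = S ^ (2 * r) := by rw [pow_mul, sq_abs, ← pow_mul]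
      rw [h5] at h4
      gcongr
      exact h3.trans h4
    have hV := hB.V
    have h1 : 4 * permExp (fun π => (((n : ℝ) + 2) * rankT B π - rsTot B) * rankT B π ^ (2 * r + 1)) ≤
        2 * L * K * ((n : ℝ) + 2) := by
      rw [hid, div_le_iff₀ (by positivity)]
      refine hR.trans ?_
      push_cast at hV
      calc rsV B * K ≤ (L * ((n : ℝ) + 2) ^ 3) * K := by gcongr
        _ = L * K * ((n : ℝ) + 2) ^ 2 * (n + 2) := by ring
        _ ≤ L * K * ((n : ℝ) + 2) ^ 2 * (2 * (n + 1)) := by gcongr; linarith [(Nat.cast_nonneg n : (0:ℝ) ≤ n)]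
        _ = _ := by ring
    have h2 : ∀ π : Equiv.Perm (Fin (n + 2)), ((n : ℝ) + 2) * (rankT B π ^ (2 * (r + 1)) / 2) ≤
        (((n : ℝ) + 2) * rankT B π - rsTot B) * rankT B π ^ (2 * r + 1) +
          ((n : ℝ) + 2) * (L * (2 * L) ^ (2 * r + 1)) := by
      intro π
      set T := rankT B π
      have ht := hB.tot
      push_cast at ht
      have e : |rsTot B * T ^ (2 * r + 1)| ≤ ((n : ℝ) + 2) * (T ^ (2 * (r + 1)) / 2 + L * (2 * L) ^ (2 * r + 1)) := by
        rw [abs_mul, abs_pow]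
        have e0 : T ^ (2 * (r + 1)) = |T| ^ (2 * r + 1) * |T| := by
          rw [pow_mul, ← sq_abs, ← pow_mul, ← pow_succ]; rfl
        refine (mul_le_mul_of_nonneg_right ht (by positivity)).trans ?_
        rw [e0, mul_comm L, mul_assoc]
        refine mul_le_mul_of_nonneg_left ?_ hN.le
        rcases le_total (2 * L) |T| with h | h
        · have : 0 ≤ |T| ^ (2 * r + 1) := by positivity
          have h3 : 0 ≤ L * (2 * L) ^ (2 * r + 1) := by positivity
          nlinarith
        · have : |T| ^ (2 * r + 1) ≤ (2 * L) ^ (2 * r + 1) := by gcongr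
          have h3 : 0 ≤ |T| ^ (2 * r + 1) * |T| := by positivity
          have := mul_le_mul_of_nonneg_left this hL
          linarith
      have e1 := (abs_le.1 e).2
      have e2 : T * T ^ (2 * r + 1) = T ^ (2 * (r + 1)) := by ring
      have : (((n : ℝ) + 2) * T - rsTot B) * T ^ (2 * r + 1) =
        ((n : ℝ) + 2) * T ^ (2 * (r + 1)) - rsTot B * T ^ (2 * r + 1) := by rw [← e2]; ring
      rw [this]
      linarith
    have h3 := permExp_mono h2
    rw [permExp_add, permExp_const, permExp_mul] at h3
    have e3 : permExp (fun π => rankT B π ^ (2 * (r + 1)) / 2) =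
        permExp (fun π => rankT B π ^ (2 * (r + 1))) / 2 := by
      have := permExp_mul (1/2) (fun π => rankT B π ^ (2 * (r + 1)))
      rw [show permExp (fun π => rankT B π ^ (2 * (r + 1))) / 2 = 1 / 2 * permExp (fun π => rankT B π ^ (2 * (r + 1))) by ring, ← this]
      congr 1; ext π; ring
    rw [e3] at h3
    have h4 : ((n : ℝ) + 2) * (permExp (fun π => rankT B π ^ (2 * (r + 1))) / 2) ≤
      ((n : ℝ) + 2) * (L * K / 2 + L * (2 * L) ^ (2 * r + 1)) := by linarith
    have h5 := le_of_mul_le_mul_left h4 hN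
    linarith

lemma rs_prob_step {r N : ℕ} (w v : Fin (r + 1) → Fin (N + 1)) (hw : Function.Injective w) (b : ℝ)
    (hb : 0 ≤ b) (ih : ∀ (w v : Fin r → Fin N), Function.Injective w →
    permExp (fun π : Equiv.Perm (Fin N) => if ∀ a, π (w a) = v a then (1 : ℝ) else 0) ≤ b) :
    permExp (fun π : Equiv.Perm (Fin (N + 1)) => if ∀ a, π (w a) = v a then (1 : ℝ) else 0) ≤
      b / ((N : ℝ) + 1) := by
  rw [permExp_peel_row (w 0)]
  refine div_le_div_of_nonneg_right ?_ (by positivity)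
  rw [Finset.sum_eq_single (v 0)]
  · have hw' : ∀ a : Fin r, ∃ b : Fin N, (w 0).succAbove b = w a.succ := fun a =>
      Fin.exists_succAbove_eq (fun h => by
        have := hw h
        exact absurd this (Fin.succ_ne_zero a))
    choose w' hw'' using hw'
    by_cases hv : ∀ a : Fin r, v a.succ ≠ v 0
    · have hv' : ∀ a : Fin r, ∃ b : Fin N, (v 0).succAbove b = v a.succ := fun a =>
        Fin.exists_succAbove_eq (hv a)
      choose v' hv'' using hv'
      refine le_trans (permExp_mono fun σ => ?_) (ih w' v' ?_)
      · have : (∀ a, (rsIns (w 0) (v 0) σ) (w a) = v a) → ∀ a, σ (w' a) = v' a := by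
          intro h a
          have := h a.succ
          rw [← hw'', ← hv'', rsIns_succAbove] at this
          exact Fin.succAbove_right_injective this
        split_ifs with h1 h2 <;> first | linarith | (exfalso; tauto)
      · intro a b hab
        have : w a.succ = w b.succ := by rw [← hw'', ← hw'', hab]
        exact Fin.succ_injective _ (hw this)
    · push Not at hv
      obtain ⟨a, ha⟩ := hv
      have : permExp (fun σ : Equiv.Perm (Fin N) =>
          if ∀ a, (rsIns (w 0) (v 0) σ) (w a) = v a then (1 : ℝ) else 0) = 0 := by
        refine Eq.trans (congrArg permExp (funext fun σ => ?_)) (permExp_const (n := N) 0)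
        rw [if_neg]
        intro h
        have h1 := h a.succ
        rw [← hw'', rsIns_succAbove, ha] at h1
        exact Fin.succAbove_ne _ _ h1
      rw [this]
      exact hb
  · intro p _ hp
    refine Eq.trans (congrArg permExp (funext fun σ => ?_)) (permExp_const (n := N) 0)
    rw [if_neg]
    intro h
    have := h 0
    rw [rsIns_self] at this
    exact hp this
  · simp

lemma rs_prob_le (r : ℕ) : ∀ (m : ℕ) (w v : Fin r → Fin (m + r)), Function.Injective w →
    permExp (fun π : Equiv.Perm (Fin (m + r)) => if ∀ a, π (w a) = v a then (1 : ℝ) else 0) ≤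
      1 / ((m + r).descFactorial r : ℝ) := by
  induction r with
  | zero =>
    intro m w v _
    simp [permExp_const]
  | succ r ih =>
    intro m w v hw
    have hdf : ((m + (r + 1)).descFactorial (r + 1) : ℝ) =
        ((m + r : ℕ) + 1) * ((m + r).descFactorial r : ℝ) := by
      have : m + (r + 1) = (m + r) + 1 := rfl
      rw [this, Nat.succ_descFactorial_succ]
      push_cast; ring
    rw [hdf, mul_comm, ← div_div]
    exact rs_prob_step (N := m + r) w v hw _ (by positivity) (ih m)

lemma rs_var_num (m U U2 : ℝ) (hm : 0 ≤ m) (hU0 : 0 ≤ U2) (hUU : U ^ 2 ≤ (m + 4) ^ 4 * U2) :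
    U ^ 2 / ((m + 4) * (m + 3) * (m + 2) * (m + 1)) +
      4 * (m + 4) * (U2 / ((m + 4) * (m + 3))) - (U / ((m + 4) * (m + 3))) ^ 2 ≤
      70 * U2 / (m + 4) := by
  have f1 : U ^ 2 / ((m + 4) * (m + 3) * (m + 2) * (m + 1)) - (U / ((m + 4) * (m + 3))) ^ 2 =
      U ^ 2 * ((4 * m + 10) / (((m + 4) * (m + 3)) ^ 2 * ((m + 2) * (m + 1)))) := by
    field_simp
    ring
  have f2 : (m + 4) ^ 4 * ((4 * m + 10) / (((m + 4) * (m + 3)) ^ 2 * ((m + 2) * (m + 1)))) ≤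
      64 / (m + 4) := by
    rw [← mul_div_assoc, div_le_div_iff₀ (by positivity) (by positivity)]
    have : (m + 4) ^ 3 * (4 * m + 10) ≤ 64 * ((m + 3) ^ 2 * ((m + 2) * (m + 1))) := by
      nlinarith [pow_nonneg hm 2, pow_nonneg hm 3, pow_nonneg hm 4]
    calc _ = (m + 4) ^ 2 * ((m + 4) ^ 3 * (4 * m + 10)) := by ring
      _ ≤ (m + 4) ^ 2 * (64 * ((m + 3) ^ 2 * ((m + 2) * (m + 1)))) := by gcongr
      _ = _ := by ring
  have f3 : U ^ 2 * ((4 * m + 10) / (((m + 4) * (m + 3)) ^ 2 * ((m + 2) * (m + 1)))) ≤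
      U2 * (64 / (m + 4)) := by
    calc _ ≤ ((m + 4) ^ 4 * U2) * ((4 * m + 10) / (((m + 4) * (m + 3)) ^ 2 * ((m + 2) * (m + 1)))) := by
          gcongr
      _ = U2 * ((m + 4) ^ 4 * ((4 * m + 10) / (((m + 4) * (m + 3)) ^ 2 * ((m + 2) * (m + 1))))) := by ring
      _ ≤ _ := by gcongr
  have f4 : 4 * (m + 4) * (U2 / ((m + 4) * (m + 3))) ≤ U2 * (6 / (m + 4)) := by
    have : 4 * (m + 4) * (U2 / ((m + 4) * (m + 3))) = U2 * (4 / (m + 3)) := by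
      field_simp
    rw [this]
    refine mul_le_mul_of_nonneg_left ?_ hU0
    rw [div_le_div_iff₀ (by positivity) (by positivity)]
    linarith
  have : 70 * U2 / (m + 4) = U2 * (64 / (m + 4)) + U2 * (6 / (m + 4)) := by ring
  rw [this]
  linarith

lemma rs_four {m : ℕ} (F G : Fin (m + 4) → Fin (m + 4) → ℝ) (hF : ∀ p q, 0 ≤ F p q)
    (hG : ∀ p q, 0 ≤ G p q) (i j k l : Fin (m + 4)) (hij : i ≠ j) (hik : i ≠ k) (hil : i ≠ l)
    (hjk : j ≠ k) (hjl : j ≠ l) (hkl : k ≠ l) :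
    permExp (fun π => F (π i) (π j) * G (π k) (π l)) ≤
      (∑ p, ∑ q, F p q) * (∑ r, ∑ s, G r s) /
        (((m : ℝ) + 4) * (m + 3) * (m + 2) * (m + 1)) := by
  have h1 : ∀ π : Equiv.Perm (Fin (m + 4)), F (π i) (π j) * G (π k) (π l) =
      ∑ p, ∑ q, ∑ r, ∑ s, F p q * G r s *
        (if ∀ a, π (![i, j, k, l] a) = (![p, q, r, s] : Fin 4 → Fin (m + 4)) a then (1:ℝ) else 0) := by
    intro π
    rw [Finset.sum_eq_single (π i), Finset.sum_eq_single (π j), Finset.sum_eq_single (π k),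
      Finset.sum_eq_single (π l)]
    · simp [Fin.forall_fin_succ]
    · intro s _ hs
      rw [if_neg, mul_zero]
      intro h; exact hs (h 3).symm
    · simp
    · intro r _ hr
      refine Finset.sum_eq_zero fun s _ => ?_
      rw [if_neg, mul_zero]
      intro h; exact hr (h 2).symm
    · simp
    · intro q _ hq
      refine Finset.sum_eq_zero fun r _ => Finset.sum_eq_zero fun s _ => ?_
      rw [if_neg, mul_zero]
      intro h; exact hq (h 1).symm
    · simp
    · intro p _ hp
      refine Finset.sum_eq_zero fun q _ => Finset.sum_eq_zero fun r _ => Finset.sum_eq_zero fun s _ => ?_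
      rw [if_neg, mul_zero]
      intro h; exact hp (h 0).symm
    · simp
  simp_rw [h1, permExp_sum, permExp_mul]
  have hinj : Function.Injective (![i, j, k, l] : Fin 4 → Fin (m + 4)) := by
    intro a b hab
    fin_cases a <;> fin_cases b <;> simp_all
  have hdf : ((m + 4).descFactorial 4 : ℝ) = (((m : ℝ) + 4) * (m + 3) * (m + 2) * (m + 1)) := by
    simp [Nat.descFactorial_succ]
    ring
  have h2 : ∀ p q r s : Fin (m + 4), F p q * G r s * permExp (fun π : Equiv.Perm (Fin (m + 4)) =>
      if ∀ a, π (![i, j, k, l] a) = (![p, q, r, s] : Fin 4 → Fin (m + 4)) a then (1:ℝ) else 0) ≤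
      F p q * G r s / (((m : ℝ) + 4) * (m + 3) * (m + 2) * (m + 1)) := by
    intro p q r s
    have := rs_prob_le 4 m _ ![p, q, r, s] hinj
    rw [hdf] at this
    calc _ ≤ F p q * G r s * _ := mul_le_mul_of_nonneg_left this (mul_nonneg (hF _ _) (hG _ _))
      _ = _ := by ring
  refine (Finset.sum_le_sum fun p _ => Finset.sum_le_sum fun q _ => Finset.sum_le_sum fun r _ =>
    Finset.sum_le_sum fun s _ => h2 p q r s).trans (le_of_eq ?_)
  rw [Finset.sum_mul, Finset.sum_div]
  refine Finset.sum_congr rfl fun p _ => ?_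
  rw [Finset.sum_mul, Finset.sum_div]
  refine Finset.sum_congr rfl fun q _ => ?_
  rw [Finset.mul_sum, Finset.sum_div]
  refine Finset.sum_congr rfl fun r _ => ?_
  rw [Finset.mul_sum, Finset.sum_div]

/-- Mean of doubly indexed sums. -/
lemma rs_mean {m : ℕ} (B : Matrix (Fin (m + 2)) (Fin (m + 2)) ℝ) (g : ℝ → ℝ) (hg : g 0 = 0) :
    permExp (fun π => ∑ i, ∑ j, g (rsD B i j (π i) (π j))) =
      (∑ i, ∑ j, ∑ p, ∑ q, g (rsD B i j p q)) / (((m : ℝ) + 2) * (m + 1)) := by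
  have h := rsD_sum B g hg (fun _ _ _ _ => 1)
  simp only [mul_one] at h
  rw [h]
  simp_rw [permExp_sum]
  rw [Finset.sum_div]
  refine Finset.sum_congr rfl fun i _ => ?_
  rw [Fin.sum_univ_succAbove _ i]
  simp only [rsD_self_row, hg, permExp_const, zero_add]
  rw [Finset.sum_div]
  refine Finset.sum_congr rfl fun j _ => ?_
  have := rs_two_peel B i j (fun p q _ => g (rsD B i (i.succAbove j) p q))
  simp only [permExp_const] at this
  exact this

lemma rs_var {m : ℕ} (B : Matrix (Fin (m + 4)) (Fin (m + 4)) ℝ) (g : ℝ → ℝ) (hg : g 0 = 0)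
    (hg0 : ∀ x, 0 ≤ g x) (Z : Equiv.Perm (Fin (m + 4)) → ℝ)
    (hZ : Z = fun π => ∑ i, ∑ j, g (rsD B i j (π i) (π j))) :
    permExp (fun π => (Z π - permExp Z) ^ 2) ≤
      70 * (∑ i, ∑ j, ∑ p, ∑ q, g (rsD B i j p q) ^ 2) / ((m : ℝ) + 4) := by
  set U := ∑ i, ∑ j, ∑ p, ∑ q, g (rsD B i j p q) with hU
  set U2 := ∑ i, ∑ j, ∑ p, ∑ q, g (rsD B i j p q) ^ 2 with hU2
  have hEZ : permExp Z = U / (((m : ℝ) + 4) * (m + 3)) := by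
    have := rs_mean (m := m + 2) B g hg
    rw [hZ, this, hU]
    push_cast
    ring_nf
  have hU2E : permExp (fun π => ∑ i, ∑ j, g (rsD B i j (π i) (π j)) ^ 2) =
      U2 / (((m : ℝ) + 4) * (m + 3)) := by
    have := rs_mean (m := m + 2) B (fun x => g x ^ 2) (by simp [hg])
    rw [this, hU2]
    push_cast
    ring_nf
  have hU0 : 0 ≤ U2 := Finset.sum_nonneg fun _ _ => Finset.sum_nonneg fun _ _ =>
      Finset.sum_nonneg fun _ _ => Finset.sum_nonneg fun _ _ => by positivity
  have hUU : U ^ 2 ≤ ((m : ℝ) + 4) ^ 4 * U2 := by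
    have := sq_sum_le_card_mul_sum_sq (s := (Finset.univ : Finset (Fin (m+4) × Fin (m+4) × Fin (m+4) × Fin (m+4))))
      (f := fun x => g (rsD B x.1 x.2.1 x.2.2.1 x.2.2.2))
    simp only [Fintype.sum_prod_type, Finset.card_univ, Fintype.card_prod, Fintype.card_fin] at this
    rw [hU, hU2]
    refine this.trans (le_of_eq ?_)
    push_cast
    ring
  -- second moment
  have hE2 : permExp (fun π => Z π ^ 2) ≤ U ^ 2 / (((m : ℝ) + 4) * (m + 3) * (m + 2) * (m + 1)) +
      4 * ((m : ℝ) + 4) * (U2 / (((m : ℝ) + 4) * (m + 3))) := by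
    have hpt : ∀ π : Equiv.Perm (Fin (m + 4)), Z π ^ 2 ≤
        (∑ i, ∑ j, ∑ k, ∑ l, if i ≠ j ∧ i ≠ k ∧ i ≠ l ∧ j ≠ k ∧ j ≠ l ∧ k ≠ l then
          g (rsD B i j (π i) (π j)) * g (rsD B k l (π k) (π l)) else 0) +
        4 * ((m : ℝ) + 4) * ∑ i, ∑ j, g (rsD B i j (π i) (π j)) ^ 2 := by
      intro π
      set x : Fin (m+4) → Fin (m+4) → ℝ := fun i j => g (rsD B i j (π i) (π j)) with hx
      have hx0 : ∀ i j, 0 ≤ x i j := fun i j => hg0 _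
      have hxi : ∀ i, x i i = 0 := fun i => by simp [hx, rsD_self_row, hg]
      have e1 : Z π ^ 2 = ∑ i, ∑ j, ∑ k, ∑ l, x i j * x k l := by
        rw [hZ, sq, Finset.sum_mul]
        refine Finset.sum_congr rfl fun i _ => ?_
        rw [Finset.sum_mul]
        refine Finset.sum_congr rfl fun j _ => ?_
        rw [Finset.mul_sum]
        refine Finset.sum_congr rfl fun k _ => ?_
        rw [Finset.mul_sum]
      have e2 : ∀ i j k l, x i j * x k l ≤
          (if i ≠ j ∧ i ≠ k ∧ i ≠ l ∧ j ≠ k ∧ j ≠ l ∧ k ≠ l then x i j * x k l else 0) +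
          ((if k = i then (x i j ^ 2 + x k l ^ 2) / 2 else 0) +
           (if k = j then (x i j ^ 2 + x k l ^ 2) / 2 else 0) +
           (if l = i then (x i j ^ 2 + x k l ^ 2) / 2 else 0) +
           (if l = j then (x i j ^ 2 + x k l ^ 2) / 2 else 0)) := by
        intro i j k l
        have hs : 0 ≤ (x i j ^ 2 + x k l ^ 2) / 2 := by positivity
        have hm : x i j * x k l ≤ (x i j ^ 2 + x k l ^ 2) / 2 := by
          nlinarith [sq_nonneg (x i j - x k l)]
        have n1 : ∀ p : Prop, ∀ [Decidable p], 0 ≤ (if p then (x i j ^ 2 + x k l ^ 2) / 2 else 0) := by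
          intro p _; split_ifs <;> simp [hs]
        by_cases h1 : i = j
        · subst h1
          have a1 := n1 (k = i); have a2 := n1 (l = i)
          simp only [hxi, zero_mul] at *
          simp only [ne_eq, not_true_eq_false, false_and, if_false]
          linarith
        by_cases h2 : k = l
        · subst h2
          have a1 := n1 (k = i); have a2 := n1 (k = j)
          simp only [hxi, mul_zero] at *
          simp only [ne_eq, not_true_eq_false, and_false, if_false]
          linarith
        have a1 := n1 (k = i); have a2 := n1 (k = j); have a3 := n1 (l = i); have a4 := n1 (l = j)
        by_cases h : i ≠ j ∧ i ≠ k ∧ i ≠ l ∧ j ≠ k ∧ j ≠ l ∧ k ≠ l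
        · rw [if_pos h]; linarith
        · rw [if_neg h]
          have : k = i ∨ k = j ∨ l = i ∨ l = j := by
            by_contra hc
            push Not at hc
            exact h ⟨h1, hc.1.symm, hc.2.2.1.symm, hc.2.1.symm, hc.2.2.2.symm, h2⟩
          rcases this with h' | h' | h' | h'
          · rw [if_pos h'] at a1 ⊢; linarith
          · rw [if_pos h'] at a2 ⊢; linarith
          · rw [if_pos h'] at a3 ⊢; linarith
          · rw [if_pos h'] at a4 ⊢; linarith
      rw [e1]
      refine (Finset.sum_le_sum fun i _ => Finset.sum_le_sum fun j _ => Finset.sum_le_sum fun k _ =>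
        Finset.sum_le_sum fun l _ => e2 i j k l).trans (le_of_eq ?_)
      simp only [Finset.sum_add_distrib]
      have c1 : ∀ y : ℝ, ∑ _i : Fin (m+4), y = ((m:ℝ) + 4) * y := by intro y; simp
      set X := ∑ i, ∑ j, x i j ^ 2 with hX
      have X1 : ∑ i, ∑ j, x j i ^ 2 = X := by rw [hX, Finset.sum_comm]
      have s1 : ∑ i, ∑ j, ∑ k, ∑ l, (if k = i then (x i j ^ 2 + x k l ^ 2) / 2 else 0) =
          ((m:ℝ) + 4) * X := by
        have : ∀ i j, ∑ k, ∑ l, (if k = i then (x i j ^ 2 + x k l ^ 2) / 2 else 0) =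
            ∑ l, (x i j ^ 2 + x i l ^ 2) / 2 := by
          intro i j; rw [Finset.sum_comm]; simp
        simp only [this, ← Finset.sum_div, Finset.sum_add_distrib, c1, ← Finset.mul_sum, ← hX]
        ring
      have s2 : ∑ i, ∑ j, ∑ k, ∑ l, (if k = j then (x i j ^ 2 + x k l ^ 2) / 2 else 0) =
          ((m:ℝ) + 4) * X := by
        have : ∀ i j, ∑ k, ∑ l, (if k = j then (x i j ^ 2 + x k l ^ 2) / 2 else 0) =
            ∑ l, (x i j ^ 2 + x j l ^ 2) / 2 := by
          intro i j; rw [Finset.sum_comm]; simp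
        simp only [this, ← Finset.sum_div, Finset.sum_add_distrib, c1, ← Finset.mul_sum, ← hX]
        ring
      have s3 : ∑ i, ∑ j, ∑ k, ∑ l, (if l = i then (x i j ^ 2 + x k l ^ 2) / 2 else 0) =
          ((m:ℝ) + 4) * X := by
        have : ∀ i j, ∑ k, ∑ l, (if l = i then (x i j ^ 2 + x k l ^ 2) / 2 else 0) =
            ∑ k, (x i j ^ 2 + x k i ^ 2) / 2 := by
          intro i j; simp
        simp only [this, ← Finset.sum_div, Finset.sum_add_distrib, c1, ← Finset.mul_sum, ← hX, X1]
        ring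
      have s4 : ∑ i, ∑ j, ∑ k, ∑ l, (if l = j then (x i j ^ 2 + x k l ^ 2) / 2 else 0) =
          ((m:ℝ) + 4) * X := by
        have : ∀ i j, ∑ k, ∑ l, (if l = j then (x i j ^ 2 + x k l ^ 2) / 2 else 0) =
            ∑ k, (x i j ^ 2 + x k j ^ 2) / 2 := by
          intro i j; simp
        simp only [this, ← Finset.sum_div, Finset.sum_add_distrib, c1, ← Finset.mul_sum, ← hX, X1]
        ring
      rw [s1, s2, s3, s4]
      ring
    refine (permExp_mono hpt).trans ?_
    rw [permExp_add, permExp_mul, hU2E]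
    refine add_le_add ?_ le_rfl
    simp_rw [permExp_sum]
    have h4 : ∀ i j k l : Fin (m+4), permExp (fun π : Equiv.Perm (Fin (m+4)) =>
        if i ≠ j ∧ i ≠ k ∧ i ≠ l ∧ j ≠ k ∧ j ≠ l ∧ k ≠ l then
          g (rsD B i j (π i) (π j)) * g (rsD B k l (π k) (π l)) else 0) ≤
        (∑ p, ∑ q, g (rsD B i j p q)) * (∑ p, ∑ q, g (rsD B k l p q)) /
          (((m : ℝ) + 4) * (m + 3) * (m + 2) * (m + 1)) := by
      intro i j k l
      by_cases h : i ≠ j ∧ i ≠ k ∧ i ≠ l ∧ j ≠ k ∧ j ≠ l ∧ k ≠ l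
      · simp only [if_pos h]
        obtain ⟨h1, h2, h3, h4, h5, h6⟩ := h
        exact rs_four (fun p q => g (rsD B i j p q)) (fun p q => g (rsD B k l p q))
          (fun _ _ => hg0 _) (fun _ _ => hg0 _) i j k l h1 h2 h3 h4 h5 h6
      · simp only [if_neg h, permExp_const]
        have p1 : ∀ i j, 0 ≤ ∑ p, ∑ q, g (rsD B i j p q) := fun i j =>
          Finset.sum_nonneg fun _ _ => Finset.sum_nonneg fun _ _ => hg0 _
        have := p1 i j
        have := p1 k l
        positivity
    refine (Finset.sum_le_sum fun i _ => Finset.sum_le_sum fun j _ => Finset.sum_le_sum fun k _ =>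
        Finset.sum_le_sum fun l _ => h4 i j k l).trans (le_of_eq ?_)
    rw [sq, hU, Finset.sum_mul, Finset.sum_div]
    refine Finset.sum_congr rfl fun i _ => ?_
    rw [Finset.sum_mul, Finset.sum_div]
    refine Finset.sum_congr rfl fun j _ => ?_
    rw [Finset.mul_sum, Finset.sum_div]
    refine Finset.sum_congr rfl fun k _ => ?_
    rw [Finset.mul_sum, Finset.sum_div]
  have hvar : permExp (fun π => (Z π - permExp Z) ^ 2) = permExp (fun π => Z π ^ 2) - permExp Z ^ 2 := by
    have : (fun π => (Z π - permExp Z) ^ 2) = fun π => (Z π ^ 2 - 2 * permExp Z * Z π) + permExp Z ^ 2 := by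
      ext π; ring
    rw [this, permExp_add, permExp_sub, permExp_mul, permExp_const]
    ring
  rw [hvar, hEZ]
  have := rs_var_num m U U2 (by positivity) hU0 hUU
  linarith

lemma rs_moment' (r : ℕ) (L : ℝ) (hL : 0 ≤ L) : ∃ C : ℝ, 0 ≤ C ∧
    ∀ (n : ℕ) (B : Matrix (Fin n) (Fin n) ℝ),
    rsR0 L B → permExp (fun π => (1 + |rankT B π|) ^ r) ≤ C := by
  obtain ⟨C, hC, h⟩ := rs_moment r L hL
  refine ⟨2 ^ (2 * r - 1) * (1 + C), by positivity, fun n B hB => ?_⟩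
  have h1 := h n B hB
  calc permExp (fun π => (1 + |rankT B π|) ^ r) ≤
      permExp (fun π => 2 ^ (2 * r - 1) * (1 + rankT B π ^ (2 * r))) := by
        refine permExp_mono fun π => ?_
        have h2 := add_pow_le (by norm_num : (0:ℝ) ≤ 1) (abs_nonneg (rankT B π)) (2 * r)
        rw [one_pow, pow_mul |rankT B π|, sq_abs, ← pow_mul] at h2
        refine le_trans ?_ h2
        exact pow_le_pow_right₀ (by linarith [abs_nonneg (rankT B π)]) (by omega)
    _ = 2 ^ (2 * r - 1) * (1 + permExp (fun π => rankT B π ^ (2 * r))) := by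
        rw [permExp_mul, permExp_add, permExp_const]
    _ ≤ _ := by gcongr

lemma rs_clip_mono (a b : ℝ) {x y : ℝ} (h : x ≤ y) :
    max 0 (min (x - a) b) ≤ max 0 (min (y - a) b) := by
  gcongr

lemma rs_clip_gain (z ε α w d : ℝ) (hα : 0 < α) (h1 : z ≤ w) (h2 : w ≤ z + ε) :
    |d| * min |d| α ≤ d * (max 0 (min (w + d - (z - α)) (ε + 2 * α)) -
      max 0 (min (w - (z - α)) (ε + 2 * α))) := by
  have e : max 0 (min (w - (z - α)) (ε + 2 * α)) = w - z + α := by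
    rw [min_eq_left (by linarith), max_eq_right (by linarith)]; ring
  rw [e]
  rcases le_total 0 d with hd | hd
  · rw [abs_of_nonneg hd]
    refine mul_le_mul_of_nonneg_left ?_ hd
    have : w - z + α + min d α ≤ min (w + d - (z - α)) (ε + 2 * α) := by
      refine le_min ?_ ?_
      · linarith [min_le_left d α]
      · linarith [min_le_right d α]
    linarith [le_max_right 0 (min (w + d - (z - α)) (ε + 2 * α))]
  · rw [abs_of_nonpos hd]
    have : max 0 (min (w + d - (z - α)) (ε + 2 * α)) ≤ w - z + α - min (-d) α := by
      refine max_le ?_ ?_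
      · linarith [min_le_right (-d) α]
      · linarith [min_le_left (-d) α, min_le_left (w + d - (z - α)) (ε + 2 * α)]
    nlinarith

lemma rs_clip_pos (F : ℝ → ℝ) (hF : Monotone F) (w d : ℝ) : 0 ≤ d * (F (w + d) - F w) := by
  rcases le_total 0 d with hd | hd
  · exact mul_nonneg hd (by linarith [hF (by linarith : w ≤ w + d)])
  · exact mul_nonneg_of_nonpos_of_nonpos hd (by linarith [hF (by linarith : w + d ≤ w)])

lemma rs_amgm (s q e Z : ℝ) (hs : 0 < s) : q * (e - Z) ≤ s * q ^ 2 + (1 / s) * (Z - e) ^ 2 := by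
  have h4 : s * (q * (e - Z)) ≤ s * (s * q ^ 2 + (1 / s) * (Z - e) ^ 2) := by
    rw [mul_add, ← mul_assoc s (1 / s), mul_one_div_cancel hs.ne']
    nlinarith [sq_nonneg (s * q - (e - Z)), sq_nonneg (s * q + (e - Z))]
  exact le_of_mul_le_mul_left h4 hs

set_option maxHeartbeats 2000000 in
lemma rs_conc (k : ℕ) (L c : ℝ) (hL : 0 < L) (hc : 0 < c) : ∃ C : ℝ, 0 ≤ C ∧
    ∀ γ, 0 < γ → γ ≤ 1 → ∀ (m : ℕ) (B : Matrix (Fin (m + 4)) (Fin (m + 4)) ℝ), rsReg L c γ B →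
    ∀ z ε : ℝ, 0 < ε → ε ≤ 1 →
    (1 + |z|) ^ k * permExp (fun π => if z ≤ rankT B π ∧ rankT B π ≤ z + ε then (1:ℝ) else 0) ≤
      C * (ε + γ) := by
  obtain ⟨C1, hC1, hM1⟩ := rs_moment' (k + 1) L hL.le
  obtain ⟨C2, hC2, hM2⟩ := rs_moment' (2 * k) L hL.le
  set a1 := 2 * L / c with ha1
  have ha1p : 0 < a1 := by positivity
  set K1 := 4 * (2 + a1) ^ k * (1 + L) * C1 with hK1
  set K2 := 2 ^ (2 * k) * C2 + 70 * L with hK2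
  have hK1p : 0 ≤ K1 := by positivity
  have hK2p : 0 ≤ K2 := by positivity
  refine ⟨2 / c * ((K1 * 2 + K2) * (1 + a1)), by positivity, ?_⟩
  intro γ hγ hγ1 m B hB z ε hε hε1
  set α := a1 * γ with hα
  have hαp : 0 < α := by positivity
  have hα1 : α ≤ a1 := by rw [hα]; nlinarith
  set N : ℝ := (m : ℝ) + 4 with hN
  have hNc : ((m + 4 : ℕ) : ℝ) = N := by rw [hN]; push_cast; ring
  have hNp : 0 < N := by positivity
  set g : ℝ → ℝ := fun x => |x| * min |x| α with hg
  have hg0 : g 0 = 0 := by simp [hg]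
  have hgn : ∀ x, 0 ≤ g x := fun x => mul_nonneg (abs_nonneg x) (le_min (abs_nonneg x) hαp.le)
  set Z : Equiv.Perm (Fin (m + 4)) → ℝ := fun π => ∑ i, ∑ j, g (rsD B i j (π i) (π j)) with hZ
  set e := permExp Z with he
  have hV := hB.r0.V
  have hVlo := hB.Vlo
  have hG := hB.G
  have htot := hB.r0.tot
  rw [hNc] at hV hVlo hG htot
  -- mean lower bound
  have hU : c * N ^ 3 / 2 ≤ ∑ i, ∑ j, ∑ p, ∑ q, g (rsD B i j p q) := by
    have h1 : ∀ x : ℝ, x ^ 2 - |x| ^ 3 / α ≤ g x := by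
      intro x
      simp only [hg]
      rw [← sq_abs x]
      rcases le_total |x| α with h | h
      · rw [min_eq_left h]
        have : 0 ≤ |x| ^ 3 / α := by positivity
        nlinarith
      · rw [min_eq_right h]
        have : |x| ^ 2 ≤ |x| ^ 3 / α := by
          rw [le_div_iff₀ hαp]
          have : 0 ≤ |x| ^ 2 := by positivity
          nlinarith
        nlinarith [abs_nonneg x]
    have h2 : rsV B - rsG B / α ≤ ∑ i, ∑ j, ∑ p, ∑ q, g (rsD B i j p q) := by
      have e1 : rsV B - rsG B / α = ∑ i, ∑ j, ∑ p, ∑ q, (rsD B i j p q ^ 2 - |rsD B i j p q| ^ 3 / α) := by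
        simp only [Finset.sum_sub_distrib, ← Finset.sum_div]
        rfl
      rw [e1]
      exact Finset.sum_le_sum fun i _ => Finset.sum_le_sum fun j _ => Finset.sum_le_sum fun k _ =>
        Finset.sum_le_sum fun l _ => h1 _
    have h3 : rsG B / α ≤ c * N ^ 3 / 2 := by
      rw [div_le_iff₀ hαp]
      refine hG.trans (le_of_eq ?_)
      rw [hα, ha1]
      field_simp
    linarith
  have heq : e = (∑ i, ∑ j, ∑ p, ∑ q, g (rsD B i j p q)) / (N * (N - 1)) := by
    have := rs_mean (m := m + 2) B g hg0
    rw [he, hZ, this, hN]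
    push_cast
    ring_nf
  have hN1 : 0 < N - 1 := by rw [hN]; linarith [(Nat.cast_nonneg m : (0:ℝ) ≤ m)]
  have helo : c * N / 2 ≤ e := by
    rw [heq, le_div_iff₀ (by positivity)]
    refine le_trans ?_ hU
    have : 0 ≤ c * N ^ 2 / 2 := by positivity
    nlinarith
  have hvar : permExp (fun π => (Z π - e) ^ 2) ≤ 70 * α ^ 2 * L * N ^ 2 := by
    refine (rs_var B g hg0 hgn Z hZ).trans ?_
    rw [div_le_iff₀ (by positivity), ← hN]
    have : ∑ i, ∑ j, ∑ p, ∑ q, g (rsD B i j p q) ^ 2 ≤ α ^ 2 * rsV B := by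
      unfold rsV
      simp only [Finset.mul_sum]
      refine Finset.sum_le_sum fun i _ => Finset.sum_le_sum fun j _ => Finset.sum_le_sum fun k _ =>
        Finset.sum_le_sum fun l _ => ?_
      simp only [hg]
      rw [mul_pow, sq_abs, mul_comm]
      gcongr
      exact min_le_right _ _
    calc _ ≤ 70 * (α ^ 2 * (L * N ^ 3)) := by gcongr; exact this.trans (by gcongr)
      _ = _ := by ring
  set q := (1 + |z|) ^ k with hq
  have hqp : 0 ≤ q := by positivity
  set I : Equiv.Perm (Fin (m + 4)) → ℝ := fun π => if z ≤ rankT B π ∧ rankT B π ≤ z + ε then (1:ℝ) else 0 with hI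
  have hI0 : ∀ π, 0 ≤ I π := fun π => by simp only [hI]; split_ifs <;> norm_num
  -- upper bound for q E I Z
  have hup : q * permExp (fun π => I π * Z π) ≤ K1 * N * (ε + 2 * α) := by
    have : ∃ F : ℝ → ℝ, Monotone F ∧
        (∀ w d, z ≤ w → w ≤ z + ε → g d ≤ d * (F (w + d) - F w)) ∧
        (∀ w, q * |F w| ≤ (ε + 2 * α) * (2 + a1) ^ k * (1 + |w|) ^ k) := by
      have hqw : ∀ w, |z| ≤ |w| + 1 + α → q ≤ (2 + a1) ^ k * (1 + |w|) ^ k := by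
        intro w h
        rw [hq, ← mul_pow]
        refine pow_le_pow_left₀ (by positivity) ?_ k
        nlinarith [abs_nonneg w]
      have hb : ∀ x : ℝ, |x| ≤ ε + 2 * α → ∀ w, (x ≠ 0 → |z| ≤ |w| + 1 + α) →
          q * |x| ≤ (ε + 2 * α) * (2 + a1) ^ k * (1 + |w|) ^ k := by
        intro x hx w h
        by_cases h0 : x = 0
        · rw [h0, abs_zero, mul_zero]; positivity
        · have := hqw w (h h0)
          calc q * |x| ≤ ((2 + a1) ^ k * (1 + |w|) ^ k) * (ε + 2 * α) := by gcongr
            _ = _ := by ring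
      rcases le_total 0 z with hz | hz
      · refine ⟨fun w => max 0 (min (w - (z - α)) (ε + 2 * α)), fun x y h => rs_clip_mono _ _ h,
          fun w d h1 h2 => rs_clip_gain z ε α w d hαp h1 h2, fun w => hb _ ?_ w ?_⟩
        · rw [abs_of_nonneg (le_max_left _ _)]
          exact max_le (by positivity) (min_le_right _ _)
        · intro h
          rw [abs_of_nonneg hz]
          by_contra hcon
          push Not at hcon
          apply h
          refine max_eq_left ((min_le_left _ _).trans ?_)
          linarith [le_abs_self w]
      · refine ⟨fun w => max 0 (min (w - (z - α)) (ε + 2 * α)) - (ε + 2 * α),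
          fun x y h => sub_le_sub_right (rs_clip_mono (z - α) (ε + 2 * α) h) _,
          fun w d h1 h2 => by
            have := rs_clip_gain z ε α w d hαp h1 h2
            simp only [sub_sub_sub_cancel_right]; exact this, fun w => hb _ ?_ w ?_⟩
        · have h1 := le_max_left 0 (min (w - (z - α)) (ε + 2 * α))
          have h2 : max 0 (min (w - (z - α)) (ε + 2 * α)) ≤ ε + 2 * α :=
            max_le (by positivity) (min_le_right _ _)
          rw [abs_le]; constructor <;> linarith
        · intro h
          rw [abs_of_nonpos hz]
          by_contra hcon
          push Not at hcon
          apply h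
          change max 0 (min (w - (z - α)) (ε + 2 * α)) - (ε + 2 * α) = 0
          rw [min_eq_right, max_eq_right (by positivity), sub_self]
          linarith [neg_le_abs w]
    obtain ⟨F, hFm, hFg, hFb⟩ := this
    have hex := rs_exchange B F
    have h1 : permExp (fun π => I π * Z π) ≤
        4 * permExp (fun π => (N * rankT B π - rsTot B) * F (rankT B π)) := by
      rw [← hNc, ← hex]
      simp only [← permExp_sum]
      refine permExp_mono fun π => ?_
      simp only [hZ, hI]
      split_ifs with h
      · rw [one_mul]
        exact Finset.sum_le_sum fun i _ => Finset.sum_le_sum fun j _ => hFg _ _ h.1 h.2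
      · rw [zero_mul]
        exact Finset.sum_nonneg fun i _ => Finset.sum_nonneg fun j _ => rs_clip_pos F hFm _ _
    have h2 : q * permExp (fun π => (N * rankT B π - rsTot B) * F (rankT B π)) ≤
        N * (1 + L) * ((ε + 2 * α) * (2 + a1) ^ k) * C1 := by
      have h3 := hM1 _ B hB.r0
      calc q * permExp (fun π => (N * rankT B π - rsTot B) * F (rankT B π)) ≤
          permExp (fun π => N * (1 + L) * ((ε + 2 * α) * (2 + a1) ^ k) * (1 + |rankT B π|) ^ (k + 1)) := by
            rw [← permExp_mul]
            refine permExp_mono fun π => ?_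
            set T := rankT B π
            have h4 : |N * T - rsTot B| ≤ N * (1 + L) * (1 + |T|) := by
              have := abs_sub (N * T) (rsTot B)
              rw [abs_mul, abs_of_pos hNp] at this
              have : 0 ≤ N * L * |T| := by positivity
              nlinarith
            calc q * ((N * T - rsTot B) * F T) ≤ |q * ((N * T - rsTot B) * F T)| := le_abs_self _
              _ = |N * T - rsTot B| * (q * |F T|) := by
                rw [abs_mul, abs_mul, abs_of_nonneg hqp]; ring
              _ ≤ (N * (1 + L) * (1 + |T|)) * ((ε + 2 * α) * (2 + a1) ^ k * (1 + |T|) ^ k) := by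
                exact mul_le_mul h4 (hFb T) (by positivity) (by positivity)
              _ = _ := by ring
        _ = N * (1 + L) * ((ε + 2 * α) * (2 + a1) ^ k) * permExp (fun π => (1 + |rankT B π|) ^ (k + 1)) := by
            rw [permExp_mul]
        _ ≤ _ := by gcongr
    calc q * permExp (fun π => I π * Z π) ≤ q * (4 * permExp (fun π => (N * rankT B π - rsTot B) * F (rankT B π))) := by gcongr
      _ = 4 * (q * permExp (fun π => (N * rankT B π - rsTot B) * F (rankT B π))) := by ring
      _ ≤ 4 * (N * (1 + L) * ((ε + 2 * α) * (2 + a1) ^ k) * C1) := by gcongr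
      _ = _ := by rw [hK1]; ring
  -- lower bound
  have hlow : e * (q * permExp I) ≤ q * permExp (fun π => I π * Z π) + K2 * N * α := by
    have hpt : ∀ π, e * (q * I π) ≤ q * (I π * Z π) + ((α * N) * (2 ^ (2 * k) * (1 + |rankT B π|) ^ (2 * k)) +
        (1 / (α * N)) * (Z π - e) ^ 2) := by
      intro π
      simp only [hI]
      split_ifs with h
      · have hzT : 1 + |z| ≤ 2 * (1 + |rankT B π|) := by
          have h1 : |z| ≤ |rankT B π| + 1 := by
            rw [abs_le]
            constructor
            · linarith [neg_abs_le (rankT B π)]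
            · linarith [le_abs_self (rankT B π)]
          linarith [abs_nonneg (rankT B π)]
        have hq2 : q ^ 2 ≤ 2 ^ (2 * k) * (1 + |rankT B π|) ^ (2 * k) := by
          rw [hq, ← pow_mul, ← mul_pow, mul_comm k 2]
          exact pow_le_pow_left₀ (by positivity) hzT _
        have hαN : 0 < α * N := by positivity
        have h3 : q * (e - Z π) ≤ (α * N) * q ^ 2 + (1 / (α * N)) * (Z π - e) ^ 2 := by
          exact rs_amgm _ _ _ _ hαN
        have h5 : (α * N) * q ^ 2 ≤ (α * N) * (2 ^ (2 * k) * (1 + |rankT B π|) ^ (2 * k)) := by gcongr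
        linarith
      · simp only [mul_zero, zero_mul, zero_add]
        positivity
    have h1 := permExp_mono hpt
    simp only [permExp_add, permExp_mul] at h1
    refine h1.trans ?_
    have h2 := hM2 _ B hB.r0
    have h3 : (1 / (α * N)) * permExp (fun π => (Z π - e) ^ 2) ≤ 70 * L * N * α := by
      calc _ ≤ (1 / (α * N)) * (70 * α ^ 2 * L * N ^ 2) := by gcongr
        _ = _ := by field_simp
    have h4 : (α * N) * (2 ^ (2 * k) * permExp (fun π => (1 + |rankT B π|) ^ (2 * k))) ≤
      (α * N) * (2 ^ (2 * k) * C2) := by gcongr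
    rw [hK2]
    linarith
  have hP : 0 ≤ q * permExp I := mul_nonneg hqp (permExp_nonneg hI0)
  have h1 : c * N / 2 * (q * permExp I) ≤ N * (K1 * (ε + 2 * α) + K2 * α) := by
    have := mul_le_mul_of_nonneg_right helo hP
    linarith
  have h2 : c / 2 * (q * permExp I) ≤ K1 * (ε + 2 * α) + K2 * α := by
    refine le_of_mul_le_mul_left ?_ hNp
    linarith
  have h3 : K1 * (ε + 2 * α) + K2 * α ≤ (K1 * 2 + K2) * (1 + a1) * (ε + γ) := by
    rw [hα]
    have p1 := mul_nonneg hK1p hε.le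
    have p2 := mul_nonneg hK1p hγ.le
    have p3 := mul_nonneg p1 ha1p.le
    have p5 := mul_nonneg hK2p hε.le
    have p6 := mul_nonneg hK2p hγ.le
    have p7 := mul_nonneg p5 ha1p.le
    nlinarith
  calc q * permExp I = 2 / c * (c / 2 * (q * permExp I)) := by field_simp
    _ ≤ 2 / c * ((K1 * 2 + K2) * (1 + a1) * (ε + γ)) := mul_le_mul_of_nonneg_left (h2.trans h3) (by positivity)
    _ = _ := by ring

lemma gaussD_pos (x : ℝ) : 0 < gaussD x := by unfold gaussD; positivity

lemma gaussD_cont : Continuous gaussD := by unfold gaussD; fun_prop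

lemma rs_int_pow (k : ℕ) : Integrable (fun x : ℝ => (1 + |x|) ^ k * Real.exp (-(x ^ 2) / 2)) := by
  have h1 : ∀ j : ℕ, Integrable (fun x : ℝ => |x| ^ j * Real.exp (-(x ^ 2) / 2)) := by
    intro j
    have := integrable_rpow_mul_exp_neg_mul_sq (b := 1 / 2) (by norm_num) (s := (j : ℝ))
      (by have : (0:ℝ) ≤ j := by positivity
          linarith)
    have h2 := this.norm
    refine h2.congr (Filter.Eventually.of_forall fun x => ?_)
    simp only [Real.norm_eq_abs, abs_mul, Real.rpow_natCast, abs_pow, Real.abs_exp]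
    congr 2
    ring
  have h2 : Integrable (fun x : ℝ => 2 ^ (k - 1) * (|x| ^ 0 * Real.exp (-(x ^ 2) / 2) +
      |x| ^ k * Real.exp (-(x ^ 2) / 2))) := ((h1 0).add (h1 k)).const_mul _
  refine h2.mono' (by fun_prop) (Filter.Eventually.of_forall fun x => ?_)
  rw [Real.norm_eq_abs, abs_of_nonneg (by positivity)]
  have := add_pow_le (by norm_num : (0:ℝ) ≤ 1) (abs_nonneg x) k
  rw [one_pow] at this
  calc (1 + |x|) ^ k * Real.exp (-(x ^ 2) / 2) ≤ (2 ^ (k - 1) * (1 + |x| ^ k)) * Real.exp (-(x ^ 2) / 2) := by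
        gcongr
    _ = _ := by ring

lemma rs_int_gauss (k : ℕ) : Integrable (fun x : ℝ => (1 + |x|) ^ k * gaussD x) := by
  have := (rs_int_pow k).const_mul (Real.sqrt (2 * Real.pi))⁻¹
  refine this.congr (Filter.Eventually.of_forall fun x => ?_)
  simp only [gaussD]
  ring

lemma gaussD_integral : ∫ x, gaussD x = 1 := by
  unfold gaussD
  rw [integral_const_mul]
  have := integral_gaussian (1 / 2)
  have e : (fun x : ℝ => Real.exp (-(x ^ 2) / 2)) = fun x : ℝ => Real.exp (-(1 / 2) * x ^ 2) := by
    ext x; congr 1; ring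
  rw [e, this, show Real.pi / (1 / 2) = 2 * Real.pi by ring]
  exact inv_mul_cancel₀ (by positivity)

lemma gaussD_int : Integrable gaussD := by
  have := rs_int_gauss 0
  simpa using this

lemma rs_pow_gauss_bdd (k : ℕ) : ∃ C : ℝ, 0 ≤ C ∧ ∀ x : ℝ, |x| ^ k * gaussD x ≤ C := by
  refine ⟨k.factorial * Real.exp 1 * (Real.sqrt (2 * Real.pi))⁻¹, by positivity, fun x => ?_⟩
  unfold gaussD
  have h1 := Real.pow_div_factorial_le_exp (|x|) (abs_nonneg x) k
  rw [div_le_iff₀ (by positivity)] at h1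
  have h2 : Real.exp |x| * Real.exp (-(x ^ 2) / 2) ≤ Real.exp 1 := by
    rw [← Real.exp_add]
    refine Real.exp_le_exp.2 ?_
    rw [← sq_abs x]
    nlinarith [sq_nonneg (|x| - 1)]
  calc |x| ^ k * ((Real.sqrt (2 * Real.pi))⁻¹ * Real.exp (-(x ^ 2) / 2)) ≤
      (Real.exp |x| * k.factorial) * ((Real.sqrt (2 * Real.pi))⁻¹ * Real.exp (-(x ^ 2) / 2)) := by gcongr
    _ = k.factorial * (Real.exp |x| * Real.exp (-(x ^ 2) / 2)) * (Real.sqrt (2 * Real.pi))⁻¹ := by ring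
    _ ≤ _ := by gcongr

lemma gaussD_deriv (x : ℝ) : HasDerivAt gaussD (-x * gaussD x) x := by
  unfold gaussD
  have h1 : HasDerivAt (fun x : ℝ => -(x ^ 2) / 2) (-x) x := by
    have := ((hasDerivAt_pow 2 x).neg).div_const 2
    exact this.congr_deriv (by simp; ring)
  have := (h1.exp).const_mul (Real.sqrt (2 * Real.pi))⁻¹
  exact this.congr_deriv (by ring)

lemma rs_gauss_shift (k : ℕ) (x t : ℝ) (h : 0 ≤ x * (t - x)) :
    (1 + |t|) ^ k * gaussD t ≤ (1 + |x|) ^ k * gaussD x *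
      ((1 + |t - x|) ^ k * Real.exp (-((t - x) ^ 2) / 2)) := by
  have h1 : (1 + |t|) ^ k ≤ (1 + |x|) ^ k * (1 + |t - x|) ^ k := by
    rw [← mul_pow]
    refine pow_le_pow_left₀ (by positivity) ?_ k
    have : |t| ≤ |x| + |t - x| := by
      have := abs_add_le x (t - x); rwa [add_sub_cancel] at this
    nlinarith [mul_nonneg (abs_nonneg x) (abs_nonneg (t - x))]
  have h2 : gaussD t ≤ gaussD x * Real.exp (-((t - x) ^ 2) / 2) := by
    unfold gaussD
    rw [mul_assoc, ← Real.exp_add]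
    gcongr
    nlinarith
  calc (1 + |t|) ^ k * gaussD t ≤ ((1 + |x|) ^ k * (1 + |t - x|) ^ k) * (gaussD x * Real.exp (-((t - x) ^ 2) / 2)) := by
        have := (gaussD_pos t).le
        exact mul_le_mul h1 h2 this (by positivity)
    _ = _ := by ring

/-- Gaussian mean -/
noncomputable def rsN (h : ℝ → ℝ) : ℝ := ∫ x, h x * gaussD x

lemma rs_stein_sol (k : ℕ) : ∃ C : ℝ, 0 ≤ C ∧ ∀ h : ℝ → ℝ, Continuous h → (∀ x, |h x| ≤ |x| ^ k) →
    |rsN h| ≤ C ∧ ∃ f : ℝ → ℝ, (∀ x, HasDerivAt f (x * f x + h x - rsN h) x) ∧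
      ∀ x, |f x| ≤ C * (1 + |x|) ^ k := by
  set M := ∫ x, (1 + |x|) ^ k * gaussD x with hM
  have hM0 : 0 ≤ M := integral_nonneg fun x => mul_nonneg (by positivity) (gaussD_pos x).le
  set J := ∫ x : ℝ, (1 + |x|) ^ k * Real.exp (-(x ^ 2) / 2) with hJ
  have hJ0 : 0 ≤ J := integral_nonneg fun x => by positivity
  refine ⟨M + (1 + M) * J, by positivity, fun h hc hh => ?_⟩
  have hh' : ∀ x, |h x| ≤ (1 + |x|) ^ k := fun x => (hh x).trans (by gcongr; linarith)
  have hNh : |rsN h| ≤ M := by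
    unfold rsN
    rw [← Real.norm_eq_abs]
    refine norm_integral_le_of_norm_le (rs_int_gauss k) (Filter.Eventually.of_forall fun x => ?_)
    rw [Real.norm_eq_abs, abs_mul, abs_of_pos (gaussD_pos x)]
    exact mul_le_mul_of_nonneg_right (hh' x) (gaussD_pos x).le
  have hhi : Integrable (fun x => h x * gaussD x) := by
    refine (rs_int_gauss k).mono' (by have := gaussD_cont; fun_prop) (Filter.Eventually.of_forall fun x => ?_)
    rw [Real.norm_eq_abs, abs_mul, abs_of_pos (gaussD_pos x)]
    exact mul_le_mul_of_nonneg_right (hh' x) (gaussD_pos x).le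
  refine ⟨hNh.trans (by have : 0 ≤ (1 + M) * J := by positivity
                        linarith), ?_⟩
  set W : ℝ → ℝ := fun x => (h x - rsN h) * gaussD x with hW
  have hWc : Continuous W := by have := gaussD_cont; fun_prop
  have hWi : Integrable W := by
    have := hhi.sub (gaussD_int.const_mul (rsN h))
    refine this.congr (Filter.Eventually.of_forall fun x => ?_)
    simp only [hW, Pi.sub_apply]; ring
  have hW0 : ∫ x, W x = 0 := by
    have e : W = fun x => h x * gaussD x - rsN h * gaussD x := by ext x; simp only [hW]; ring
    rw [e, integral_sub hhi (gaussD_int.const_mul _), integral_const_mul, gaussD_integral]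
    simp [rsN]
  have hWb : ∀ t, |W t| ≤ (1 + M) * ((1 + |t|) ^ k * gaussD t) := by
    intro t
    simp only [hW]
    rw [abs_mul, abs_of_pos (gaussD_pos t), ← mul_assoc]
    refine mul_le_mul_of_nonneg_right ?_ (gaussD_pos t).le
    have h1 := abs_sub (h t) (rsN h)
    have h2 : (1:ℝ) ≤ (1 + |t|) ^ k := one_le_pow₀ (by linarith [abs_nonneg t])
    have h3 := hh' t
    nlinarith
  set Φ : ℝ → ℝ := fun x => ∫ t in Set.Iic x, W t with hΦ
  have hΦd : ∀ x, HasDerivAt Φ (W x) x := by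
    intro x
    have e : Φ = fun x => (∫ t in (0:ℝ)..x, W t) + Φ 0 := by
      ext y
      have := intervalIntegral.integral_Iic_sub_Iic (μ := volume) (a := 0) (b := y) hWi.integrableOn hWi.integrableOn
      simp only [hΦ]
      linarith
    rw [e]
    exact (intervalIntegral.integral_hasDerivAt_right (hWc.intervalIntegrable _ _)
      hWc.stronglyMeasurable.stronglyMeasurableAtFilter hWc.continuousAt).add_const _
  have hset : ∀ (x : ℝ) (s : Set ℝ), MeasurableSet s → (∀ t ∈ s, 0 ≤ x * (t - x)) →
      |∫ t in s, W t| ≤ (1 + M) * J * (1 + |x|) ^ k * gaussD x := by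
    intro x s hs hxt
    have hK : Integrable (fun t : ℝ => (1 + M) * ((1 + |x|) ^ k * gaussD x *
        ((1 + |t - x|) ^ k * Real.exp (-((t - x) ^ 2) / 2)))) :=
      (((rs_int_pow k).comp_sub_right x).const_mul _).const_mul _
    rw [← Real.norm_eq_abs]
    calc ‖∫ t in s, W t‖ ≤ ∫ t in s, (1 + M) * ((1 + |x|) ^ k * gaussD x *
        ((1 + |t - x|) ^ k * Real.exp (-((t - x) ^ 2) / 2))) := by
          refine norm_integral_le_of_norm_le hK.integrableOn ?_
          refine (ae_restrict_iff' hs).2 (Filter.Eventually.of_forall fun t ht => ?_)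
          rw [Real.norm_eq_abs]
          refine (hWb t).trans ?_
          gcongr (1 + M) * ?_
          exact rs_gauss_shift k x t (hxt t ht)
      _ ≤ ∫ t, (1 + M) * ((1 + |x|) ^ k * gaussD x *
        ((1 + |t - x|) ^ k * Real.exp (-((t - x) ^ 2) / 2))) := by
          refine setIntegral_le_integral hK (Filter.Eventually.of_forall fun t => ?_)
          have := gaussD_pos x
          simp only [Pi.zero_apply]
          positivity
      _ = _ := by
          rw [integral_const_mul, integral_const_mul,
            integral_sub_right_eq_self (fun t : ℝ => (1 + |t|) ^ k * Real.exp (-(t ^ 2) / 2)) x, ← hJ]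
          ring
  have hΦb : ∀ x, |Φ x| ≤ (1 + M) * J * (1 + |x|) ^ k * gaussD x := by
    intro x
    rcases le_total x 0 with hx | hx
    · refine hset x _ measurableSet_Iic fun t ht => ?_
      have : t ≤ x := ht
      nlinarith
    · have e : Φ x = - ∫ t in Set.Ioi x, W t := by
        have := intervalIntegral.integral_Iic_add_Ioi (μ := volume) (b := x) hWi.integrableOn hWi.integrableOn
        rw [hW0] at this
        simp only [hΦ]
        linarith
      rw [e, abs_neg]
      refine hset x _ measurableSet_Ioi fun t ht => ?_
      have : x < t := ht
      nlinarith
  refine ⟨fun x => Φ x / gaussD x, fun x => ?_, fun x => ?_⟩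
  · have hg := (gaussD_pos x).ne'
    have := (hΦd x).div (gaussD_deriv x) hg
    refine this.congr_deriv ?_
    simp only [hW]
    field_simp
    ring
  · rw [abs_div, abs_of_pos (gaussD_pos x), div_le_iff₀ (gaussD_pos x)]
    refine (hΦb x).trans ?_
    have := gaussD_pos x
    gcongr
    linarith

/-- smoothing of the indicator -/
noncomputable def rsRho (z ε x : ℝ) : ℝ := max 0 (min ((z + ε - x) / ε) 1)

/-- smoothed test function -/
noncomputable def rsHs (k : ℕ) (z ε x : ℝ) : ℝ := |x| ^ k * rsRho z ε x

lemma rsRho_nonneg (z ε x : ℝ) : 0 ≤ rsRho z ε x := le_max_left _ _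

lemma rsRho_le_one (z ε x : ℝ) : rsRho z ε x ≤ 1 := max_le (by norm_num) (min_le_right _ _)

lemma rsRho_one {z ε x : ℝ} (hε : 0 < ε) (h : x ≤ z) : rsRho z ε x = 1 := by
  unfold rsRho
  rw [min_eq_right, max_eq_right (by norm_num)]
  rw [le_div_iff₀ hε]; linarith

lemma rsRho_zero {z ε x : ℝ} (hε : 0 < ε) (h : z + ε ≤ x) : rsRho z ε x = 0 := by
  unfold rsRho
  rw [max_eq_left]
  refine (min_le_left _ _).trans ?_
  rw [div_le_iff₀ hε]; linarith

lemma rsRho_lip (z ε a b : ℝ) (hε : 0 < ε) : |rsRho z ε a - rsRho z ε b| ≤ |a - b| / ε := by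
  unfold rsRho
  have h1 := abs_max_sub_max_le_abs (min ((z + ε - a) / ε) 1) (min ((z + ε - b) / ε) 1) 0
  rw [max_comm 0, max_comm 0]
  refine h1.trans ?_
  have h2 := abs_min_sub_min_le_max ((z + ε - a) / ε) 1 ((z + ε - b) / ε) 1
  refine h2.trans ?_
  rw [sub_self, abs_zero, max_eq_left (abs_nonneg _), ← sub_div, abs_div, abs_of_pos hε]
  rw [show z + ε - a - (z + ε - b) = -(a - b) by ring, abs_neg]

lemma rsHs_cont (k : ℕ) (z ε : ℝ) : Continuous (rsHs k z ε) := by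
  unfold rsHs rsRho
  fun_prop

lemma rsHs_bd (k : ℕ) (z ε x : ℝ) : |rsHs k z ε x| ≤ |x| ^ k := by
  unfold rsHs
  rw [abs_mul, abs_of_nonneg (rsRho_nonneg _ _ _), abs_of_nonneg (by positivity : 0 ≤ |x| ^ k)]
  exact mul_le_of_le_one_right (by positivity) (rsRho_le_one _ _ _)

lemma rs_chain (ψ : ℝ → ℝ) (K C γ : ℝ) (hγ : 0 < γ)
    (h : ∀ y y', |y| ≤ K → |y'| ≤ K → |y - y'| ≤ γ → |ψ y - ψ y'| ≤ C * |y - y'|) :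
    ∀ y y', |y| ≤ K → |y'| ≤ K → |ψ y - ψ y'| ≤ C * |y - y'| := by
  have key : ∀ N : ℕ, ∀ y y', |y| ≤ K → |y'| ≤ K → |y - y'| ≤ ((N : ℝ) + 1) * γ →
      |ψ y - ψ y'| ≤ C * |y - y'| := by
    intro N
    induction N with
    | zero => intro y y' h1 h2 h3; exact h y y' h1 h2 (by simpa using h3)
    | succ N ih =>
      intro y y' h1 h2 h3
      push_cast at h3
      set t : ℝ := 1 / ((N : ℝ) + 2) with ht
      have ht0 : 0 ≤ t := by positivity
      have ht1 : t ≤ 1 := by rw [ht, div_le_one (by positivity)]; linarith [(Nat.cast_nonneg N : (0:ℝ) ≤ N)]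
      set y2 := y + t * (y' - y) with hy2
      have e1 : |y - y2| = t * |y - y'| := by
        rw [hy2, show y - (y + t * (y' - y)) = t * (y - y') by ring, abs_mul, abs_of_nonneg ht0]
      have e2 : |y2 - y'| = (1 - t) * |y - y'| := by
        rw [hy2, show y + t * (y' - y) - y' = (1 - t) * (y - y') by ring, abs_mul,
          abs_of_nonneg (by linarith)]
      have hy2K : |y2| ≤ K := by
        rw [hy2, show y + t * (y' - y) = (1 - t) * y + t * y' by ring]
        refine (abs_add_le _ _).trans ?_
        rw [abs_mul, abs_mul, abs_of_nonneg ht0, abs_of_nonneg (by linarith : 0 ≤ 1 - t)]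
        nlinarith
      have tN : t * ((N : ℝ) + 2) = 1 := by rw [ht]; field_simp
      have a1 := h y y2 h1 hy2K (by
        rw [e1]
        calc t * |y - y'| ≤ t * (((N:ℝ) + 1 + 1) * γ) := by gcongr
          _ = (t * ((N : ℝ) + 2)) * γ := by ring
          _ = γ := by rw [tN, one_mul])
      have a2 := ih y2 y' hy2K h2 (by
        rw [e2]
        calc (1 - t) * |y - y'| ≤ (1 - t) * (((N:ℝ) + 1 + 1) * γ) := by
              refine mul_le_mul_of_nonneg_left h3 (by linarith)
          _ = ((N : ℝ) + 2 - t * ((N : ℝ) + 2)) * γ := by ring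
          _ = _ := by rw [tN]; ring)
      have a3 := abs_sub_le (ψ y) (ψ y2) (ψ y')
      rw [e1] at a1
      rw [e2] at a2
      linarith
  intro y y' h1 h2
  obtain ⟨N, hN⟩ := exists_nat_ge (|y - y'| / γ)
  refine key N y y' h1 h2 ?_
  rw [div_le_iff₀ hγ] at hN
  nlinarith

lemma rs_lip_sol (k : ℕ) (L c Cs : ℝ) (hL : 0 < L) (hc : 0 < c) (hCs : 0 ≤ Cs) : ∃ C : ℝ, 0 ≤ C ∧
    ∀ γ, 0 < γ → γ ≤ 1 / 3 → ∀ (m : ℕ) (B : Matrix (Fin (m + 4)) (Fin (m + 4)) ℝ), rsReg L c γ B →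
    ∀ (z N : ℝ) (f : ℝ → ℝ), |N| ≤ Cs → (∀ x, |f x| ≤ Cs * (1 + |x|) ^ k) →
    (∀ x, HasDerivAt f (x * f x + rsHs k z γ x - N) x) →
    rsLip B (fun x => x * f x + rsHs k z γ x - N) 8 C := by
  obtain ⟨C0, hC0, hconc⟩ := rs_conc k L c hL hc
  obtain ⟨C1, hC1, hM1⟩ := rs_moment' (k + 2) L hL.le
  obtain ⟨C2, hC2, hM2⟩ := rs_moment' k L hL.le
  refine ⟨4 * (Cs + 1) * 9 ^ (k + 2) * C1 + k * 9 ^ k * C2 + 20 ^ k * 4 * C0, by positivity, ?_⟩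
  intro γ hγ hγ1 m B hB z N f hN hf hfd
  refine rs_chain (fun y => permExp (fun π => (fun x => x * f x + rsHs k z γ x - N) (rankT B π + y)))
    8 _ γ hγ ?_
  intro y y' hy hy' hyy
  set δ := |y - y'| with hδ
  set z' := z - y' - γ with hz'
  set I : Equiv.Perm (Fin (m + 4)) → ℝ := fun π =>
    if z' ≤ rankT B π ∧ rankT B π ≤ z' + 3 * γ then (1:ℝ) else 0 with hI
  have hcI := hconc γ hγ (by linarith) m B hB z' (3 * γ) (by linarith) (by linarith)
  have hpt : ∀ π, |((rankT B π + y) * f (rankT B π + y) + rsHs k z γ (rankT B π + y) - N) -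
      ((rankT B π + y') * f (rankT B π + y') + rsHs k z γ (rankT B π + y') - N)| ≤
      δ * (4 * (Cs + 1) * 9 ^ (k + 2)) * (1 + |rankT B π|) ^ (k + 2) +
      (δ * (k * 9 ^ k) * (1 + |rankT B π|) ^ k + (δ / γ * 20 ^ k) * ((1 + |z'|) ^ k * I π)) := by
    intro π
    set T := rankT B π with hT
    set a := T + y with ha
    set b := T + y' with hb
    have hab : |a - b| = δ := by rw [ha, hb, hδ]; congr 1; ring
    have hT0 := abs_nonneg T
    have ha8 : |a| ≤ |T| + 8 := by have := abs_add_le T y; linarith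
    have hb8 : |b| ≤ |T| + 8 := by have := abs_add_le T y'; linarith
    -- smooth part
    have p1 : |a * f a - b * f b| ≤ δ * (4 * (Cs + 1) * 9 ^ (k + 2)) * (1 + |T|) ^ (k + 2) := by
      have hder : ∀ x, HasDerivAt (fun x => x * f x) (1 * f x + x * (x * f x + rsHs k z γ x - N)) x :=
        fun x => (hasDerivAt_id x).mul (hfd x)
      have hbd : ∀ x ∈ Set.uIcc b a, ‖1 * f x + x * (x * f x + rsHs k z γ x - N)‖ ≤
          4 * (Cs + 1) * 9 ^ (k + 2) * (1 + |T|) ^ (k + 2) := by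
        intro x hx
        have hx8 : |x| ≤ |T| + 8 := by
          rw [abs_le] at ha8 hb8 ⊢
          rcases Set.mem_uIcc.1 hx with h | h <;> constructor <;> linarith
        set X := 1 + |x| with hX
        have hX1 : 1 ≤ X := by rw [hX]; linarith [abs_nonneg x]
        have hXT : X ≤ 9 * (1 + |T|) := by linarith
        have q1 : |x| ≤ X := by linarith
        have q2 := hf x
        have q3 : |rsHs k z γ x| ≤ X ^ k := (rsHs_bd k z γ x).trans (by gcongr)
        have hX0 : 0 ≤ X ^ k := by positivity
        have r1 : X ^ k ≤ X ^ (k + 2) := pow_le_pow_right₀ hX1 (by omega)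
        have r2 : X ^ (k + 1) ≤ X ^ (k + 2) := pow_le_pow_right₀ hX1 (by omega)
        have r3 : X ≤ X ^ (k + 2) := by
          calc X = X ^ 1 := (pow_one X).symm
            _ ≤ _ := pow_le_pow_right₀ hX1 (by omega)
        have s1 : |x * (x * f x + rsHs k z γ x - N)| ≤ X * (X * (Cs * X ^ k) + X ^ k + Cs) := by
          rw [abs_mul]
          have := abs_sub (x * f x + rsHs k z γ x) N
          have := abs_add_le (x * f x) (rsHs k z γ x)
          have e : |x * f x| ≤ X * (Cs * X ^ k) := by
            rw [abs_mul]; exact mul_le_mul q1 q2 (abs_nonneg _) (by positivity)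
          exact mul_le_mul q1 (by linarith) (abs_nonneg _) (by positivity)
        have s2 : X * (X * (Cs * X ^ k) + X ^ k + Cs) = Cs * X ^ (k + 2) + X ^ (k + 1) + Cs * X := by ring
        rw [Real.norm_eq_abs, one_mul]
        refine (abs_add_le _ _).trans ?_
        have s3 : X ^ (k + 2) ≤ (9 * (1 + |T|)) ^ (k + 2) := by gcongr
        have s4 : |f x| + |x * (x * f x + rsHs k z γ x - N)| ≤ 4 * (Cs + 1) * X ^ (k + 2) := by
          have t1 := mul_le_mul_of_nonneg_left r1 hCs
          have t2 := mul_le_mul_of_nonneg_left r3 hCs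
          have t3 : 0 ≤ Cs * X ^ (k + 2) := by positivity
          nlinarith
        calc _ ≤ 4 * (Cs + 1) * X ^ (k + 2) := s4
          _ ≤ 4 * (Cs + 1) * (9 * (1 + |T|)) ^ (k + 2) := by gcongr
          _ = _ := by rw [mul_pow]; ring
      have := Convex.norm_image_sub_le_of_norm_hasDerivWithin_le
        (f := fun x => x * f x) (s := Set.uIcc b a) (fun x _ => (hder x).hasDerivWithinAt) hbd
        (convex_uIcc b a) Set.left_mem_uIcc Set.right_mem_uIcc
      simp only [Real.norm_eq_abs] at this
      rw [hab] at this
      linarith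
    have p2 : |rsHs k z γ a - rsHs k z γ b| ≤ δ * (k * 9 ^ k) * (1 + |T|) ^ k +
        (δ / γ * 20 ^ k) * ((1 + |z'|) ^ k * I π) := by
      have e : rsHs k z γ a - rsHs k z γ b =
          (|a| ^ k - |b| ^ k) * rsRho z γ a + |b| ^ k * (rsRho z γ a - rsRho z γ b) := by
        unfold rsHs; ring
      rw [e]
      refine (abs_add_le _ _).trans (add_le_add ?_ ?_)
      · rw [abs_mul, abs_of_nonneg (rsRho_nonneg z γ a)]
        have h1 := abs_pow_sub_pow_le |a| |b| k
        rw [abs_abs, abs_abs] at h1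
        have h2 : |(|a| - |b|)| ≤ δ := (abs_abs_sub_abs_le_abs_sub a b).trans hab.le
        have h3 : max |a| |b| ^ (k - 1) ≤ (9 * (1 + |T|)) ^ k := by
          have : max |a| |b| ≤ 9 * (1 + |T|) := max_le (by linarith) (by linarith)
          calc max |a| |b| ^ (k - 1) ≤ (9 * (1 + |T|)) ^ (k - 1) :=
                pow_le_pow_left₀ (le_max_of_le_left (abs_nonneg _)) this _
            _ ≤ _ := pow_le_pow_right₀ (by linarith) (by omega)
        calc |(|a| ^ k - |b| ^ k)| * rsRho z γ a ≤ |(|a| ^ k - |b| ^ k)| :=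
              mul_le_of_le_one_right (abs_nonneg _) (rsRho_le_one _ _ _)
          _ ≤ |(|a| - |b|)| * k * max |a| |b| ^ (k - 1) := h1
          _ ≤ δ * k * (9 * (1 + |T|)) ^ k := by
            refine mul_le_mul (by gcongr) h3 ?_ (by positivity)
            exact pow_nonneg (le_max_of_le_left (abs_nonneg _)) _
          _ = _ := by rw [mul_pow]; ring
      · rw [abs_mul, abs_of_nonneg (by positivity : 0 ≤ |b| ^ k)]
        have hab' := abs_le.1 (hab.le.trans hyy)
        by_cases hbI : z - γ ≤ b ∧ b ≤ z + 2 * γ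
        · have hI1 : I π = 1 := by
            simp only [hI]
            rw [if_pos]
            rw [hz', ← hT]
            constructor <;> [skip; skip] <;> linarith [hbI.1, hbI.2]
          rw [hI1, mul_one]
          have h1 := rsRho_lip z γ a b hγ
          rw [hab] at h1
          have h2 : |b| ≤ 20 * (1 + |z'|) := by
            have : b = z' + (b - z + γ) + y' := by rw [hz']; ring
            have h3 : |b - z + γ| ≤ 1 := by rw [abs_le]; constructor <;> linarith [hbI.1, hbI.2]
            have h4 := abs_add_le (z' + (b - z + γ)) y'
            have h5 := abs_add_le z' (b - z + γ)
            rw [← this] at h4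
            linarith [abs_nonneg z']
          calc |b| ^ k * |rsRho z γ a - rsRho z γ b| ≤ (20 * (1 + |z'|)) ^ k * (δ / γ) := by gcongr
            _ = _ := by rw [mul_pow]; ring
        · have h0 : rsRho z γ a - rsRho z γ b = 0 := by
            rw [not_and_or, not_le, not_le] at hbI
            rcases hbI with h | h
            · rw [rsRho_one hγ (by linarith), rsRho_one hγ (by linarith), sub_self]
            · rw [rsRho_zero hγ (by linarith), rsRho_zero hγ (by linarith), sub_self]
          rw [h0, abs_zero, mul_zero]
          have : 0 ≤ I π := by simp only [hI]; split_ifs <;> norm_num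
          positivity
    have : (a * f a + rsHs k z γ a - N) - (b * f b + rsHs k z γ b - N) =
        (a * f a - b * f b) + (rsHs k z γ a - rsHs k z γ b) := by ring
    rw [this]
    exact (abs_add_le _ _).trans (add_le_add p1 p2)
  rw [← permExp_sub]
  refine (permExp_abs_le _).trans ((permExp_mono hpt).trans ?_)
  simp only [permExp_add, permExp_mul]
  have m1 := hM1 _ B hB.r0
  have m2 := hM2 _ B hB.r0
  have hδ0 : 0 ≤ δ := abs_nonneg _
  calc _ ≤ δ * (4 * (Cs + 1) * 9 ^ (k + 2)) * C1 + (δ * (k * 9 ^ k) * C2 +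
        (δ / γ * 20 ^ k) * (C0 * (3 * γ + γ))) := by gcongr
    _ = _ := by field_simp; ring

set_option maxHeartbeats 2000000 in
lemma rs_smooth (k : ℕ) : ∃ ε0 : ℝ, 0 < ε0 ∧ ∃ C : ℝ, 0 ≤ C ∧ ∀ γ, 0 < γ → γ ≤ ε0 →
    ∀ (m : ℕ) (B : Matrix (Fin (m + 7)) (Fin (m + 7)) ℝ), (∀ i j, |B i j| ≤ 1) →
    |rsTot B| ≤ γ * ((m : ℝ) + 7) → |rsV B - 4 * ((m : ℝ) + 7) ^ 2 * ((m : ℝ) + 6)| ≤ γ * ((m : ℝ) + 7) ^ 3 →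
    rsG B ≤ γ * ((m : ℝ) + 7) ^ 3 → ∀ z : ℝ,
    |permExp (fun π => rsHs k z γ (rankT B π)) - rsN (rsHs k z γ)| ≤ C * γ := by
  obtain ⟨Cs, hCs, hsol⟩ := rs_stein_sol k
  obtain ⟨γ1, hγ1, hr1⟩ := rsReg_mn 5 1 (by norm_num) (by norm_num)
  obtain ⟨γ2, hγ2, hr2⟩ := rsReg_mn (8*5+4) (1/2) (by norm_num) (by norm_num)
  obtain ⟨γ3, hγ3, hr3⟩ := rsReg_mn (8*(8*5+4)+4) (1/2/2) (by norm_num) (by norm_num)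
  obtain ⟨C1, hC1, hl1⟩ := rs_lip_sol k (8*(8*5+4)+4) (1/2/2) Cs (by norm_num) (by norm_num) hCs
  obtain ⟨C2, hC2, hl2⟩ := rs_lip_sol k (8*(8*(8*5+4)+4)+4) (1/2/2/2) Cs (by norm_num) (by norm_num) hCs
  obtain ⟨Cm, hCm, hmom⟩ := rs_moment' (k + 1) 5 (by norm_num)
  refine ⟨min (min (1/3) γ1) (min γ2 γ3), by positivity, (2 * Cs + 1) * Cm + Cs * Cm + 13 * (C1 + C2), by positivity, ?_⟩
  intro γ hγ0 hγ m B hB htot hV hG z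
  simp only [le_min_iff] at hγ
  obtain ⟨⟨hγa, hγb⟩, hγc, hγd⟩ := hγ
  obtain ⟨hN, f, hf, hfb⟩ := hsol (rsHs k z γ) (rsHs_cont k z γ) (rsHs_bd k z γ)
  have hm0 : (0:ℝ) ≤ m := Nat.cast_nonneg m
  have hNc : ((m + 7 : ℕ) : ℝ) = (m:ℝ) + 7 := by push_cast; ring
  set M : ℝ := (m:ℝ) + 7 with hM
  have hM7 : 7 ≤ M := by linarith
  have hm6 : (m:ℝ) + 6 = M - 1 := by rw [hM]; ring
  rw [hm6] at hV
  have hV' := abs_le.1 hV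
  have hM3 : 0 < M ^ 3 := by positivity
  have hγM : γ * M ^ 3 ≤ M ^ 3 / 3 := by nlinarith
  have hM2 : 7 * M ^ 2 ≤ M ^ 3 := by nlinarith [sq_nonneg M]
  have hreg : rsReg 5 1 γ B := by
    refine ⟨⟨hB, ?_, ?_⟩, ?_, ?_⟩
    · rw [hNc]; nlinarith
    · rw [hNc]; nlinarith [sq_nonneg M]
    · rw [hNc]; nlinarith [mul_pos hγ0 hM3]
    · rw [hNc]; nlinarith
  have R1 : ∀ i p, rsReg (8*5+4) (1/2) γ (rsMn B i p) := hr1 γ hγ0.le hγb _ B hreg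
  have R2 : ∀ i p j q, rsReg (8*(8*5+4)+4) (1/2/2) γ (rsS B i p j q) := fun i p j q =>
    hr2 γ hγ0.le hγc _ _ (R1 i p) j q
  have R3 : ∀ i p j q j' q', rsReg (8*(8*(8*5+4)+4)+4) (1/2/2/2) γ (rsS (rsMn B i p) j q j' q') :=
    fun i p j q j' q' => hr3 γ hγ0.le hγd _ _ (R2 i p j q) j' q'
  set φ : ℝ → ℝ := fun x => x * f x + rsHs k z γ x - rsN (rsHs k z γ) with hφ
  have key := rs_stein_main (n := m + 4) B f φ (C1 + C2) hB (by positivity) hf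
    (fun i p j q y y' h h' => by
      refine (hl1 γ hγ0 hγa (m+1) _ (R2 i p j q) z _ f hN hfb hf y y' h h').trans ?_
      nlinarith [abs_nonneg (y - y')])
    (fun i p j q j' q' y y' h h' => by
      refine (hl2 γ hγ0 hγa m _ (R3 i p j q j' q') z _ f hN hfb hf y y' h h').trans ?_
      nlinarith [abs_nonneg (y - y')])
  have e3 : ((m + 4 : ℕ) : ℝ) + 3 = M := by push_cast; rw [hM]; ring
  have e2 : ((m + 4 : ℕ) : ℝ) + 2 = M - 1 := by push_cast; rw [hM]; ring
  rw [e3, e2] at key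
  have hT : ∀ T : ℝ, |f T| ≤ Cs * (1 + |T|) ^ (k + 1) := by
    intro T
    refine (hfb T).trans (mul_le_mul_of_nonneg_left ?_ hCs)
    exact pow_le_pow_right₀ (by linarith [abs_nonneg T]) (by omega)
  have hφb : ∀ T : ℝ, |φ T| ≤ (2 * Cs + 1) * (1 + |T|) ^ (k + 1) := by
    intro T
    have h1 : |T * f T| ≤ Cs * (1 + |T|) ^ (k + 1) := by
      rw [abs_mul, pow_succ]
      have := hfb T
      have h2 := mul_le_mul (by linarith : |T| ≤ 1 + |T|) this (abs_nonneg _) (by positivity)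
      linarith
    have h2 : |rsHs k z γ T| ≤ (1 + |T|) ^ (k + 1) := by
      refine (rsHs_bd k z γ T).trans ?_
      calc |T| ^ k ≤ (1 + |T|) ^ k := by gcongr; linarith
        _ ≤ _ := pow_le_pow_right₀ (by linarith [abs_nonneg T]) (by omega)
    have h3 : (1:ℝ) ≤ (1 + |T|) ^ (k+1) := one_le_pow₀ (by linarith [abs_nonneg T])
    have h4 : |φ T| ≤ |T * f T| + |rsHs k z γ T| + |rsN (rsHs k z γ)| := by
      rw [hφ]; exact (abs_sub _ _).trans (by gcongr; exact abs_add_le _ _)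
    nlinarith
  have hmB := hmom _ B hreg.r0
  have hEφ : |permExp (fun π => φ (rankT B π))| ≤ (2 * Cs + 1) * Cm := by
    refine (permExp_abs_le _).trans ?_
    refine (permExp_mono (fun π => hφb (rankT B π))).trans ?_
    rw [permExp_mul]; gcongr
  have hEf : |permExp (fun π => f (rankT B π))| ≤ Cs * Cm := by
    refine (permExp_abs_le _).trans ?_
    refine (permExp_mono (fun π => hT (rankT B π))).trans ?_
    rw [permExp_mul]; gcongr
  set Eφ := permExp (fun π => φ (rankT B π)) with hEφd
  set Ef := permExp (fun π => f (rankT B π)) with hEfd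
  set ETf := permExp (fun π => rankT B π * f (rankT B π)) with hETf
  have eX : permExp (fun π => (M * rankT B π - rsTot B) * f (rankT B π)) = M * ETf - rsTot B * Ef := by
    rw [hETf, hEfd, ← permExp_mul, ← permExp_mul, ← permExp_sub]
    congr 1; funext π; ring
  have eh : permExp (fun π => rsHs k z γ (rankT B π)) = Eφ - ETf + rsN (rsHs k z γ) := by
    rw [hEφd, hETf, ← permExp_sub]
    rw [← permExp_const (n := m + 7) (rsN (rsHs k z γ)), ← permExp_add]
    congr 1; funext π; simp only [hφ]; ring_nf
  rw [eX] at key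
  rw [eh]
  set V := rsV B
  set t := rsTot B
  set G := rsG B
  have hM1 : 0 < M - 1 := by linarith
  have hM0 : 0 < M := by linarith
  have key2 : |4 * M * ((M-1) * M) * (ETf - t / M * Ef) - V * Eφ| ≤ 13 * (C1 + C2) * G := by
    have e : 4 * M * ((M-1) * M) * (ETf - t / M * Ef) - V * Eφ =
        (M * (M-1)) * (4 * (M * ETf - t * Ef) - V / (M * (M-1)) * Eφ) := by
      field_simp
    rw [e, abs_mul, abs_of_pos (by positivity)]
    rw [le_div_iff₀ (by positivity)] at key
    linarith
  set D := 4 * M ^ 2 * (M - 1) with hD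
  have hDpos : 0 < D := by positivity
  have hDM : M ^ 3 ≤ D := by rw [hD]; nlinarith
  have eq : Eφ - ETf + rsN (rsHs k z γ) - rsN (rsHs k z γ) =
      ((D - V) * Eφ - (4 * M * ((M-1) * M) * (ETf - t / M * Ef) - V * Eφ)) / D - t / M * Ef := by
    rw [hD]; field_simp; ring
  rw [eq]
  have b1 : |t / M * Ef| ≤ γ * (Cs * Cm) := by
    rw [abs_mul, abs_div, abs_of_pos hM0]
    refine mul_le_mul ?_ hEf (abs_nonneg _) hγ0.le
    rw [div_le_iff₀ hM0]; exact htot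
  have b2 : |(D - V) * Eφ| ≤ γ * D * ((2 * Cs + 1) * Cm) := by
    rw [abs_mul, abs_sub_comm]
    refine mul_le_mul ?_ hEφ (abs_nonneg _) (by positivity)
    refine hV.trans ?_
    gcongr
  have b3 : 13 * (C1 + C2) * G ≤ 13 * (C1 + C2) * (γ * D) := by
    gcongr
    exact hG.trans (by gcongr)
  refine (abs_sub _ _).trans ?_
  have b4 : |((D - V) * Eφ - (4 * M * ((M-1) * M) * (ETf - t / M * Ef) - V * Eφ)) / D| ≤
      γ * ((2 * Cs + 1) * Cm) + 13 * (C1 + C2) * γ := by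
    rw [abs_div, abs_of_pos hDpos, div_le_iff₀ hDpos]
    refine (abs_sub _ _).trans ?_
    nlinarith
  linarith

lemma rs_large {n : ℕ} (hn : 2 ≤ n) (B : Matrix (Fin n) (Fin n) ℝ) (γ : ℝ) (hγ : γ ≤ 1/4)
    (hV : |rsV B - 4 * (n : ℝ) ^ 2 * ((n : ℝ) - 1)| ≤ γ * (n : ℝ) ^ 3)
    (hG : rsG B ≤ γ * (n : ℝ) ^ 3) : 7 ≤ n := by
  by_contra hlt
  have h6 : (n : ℝ) ≤ 6 := by exact_mod_cast (by omega : n ≤ 6)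
  have h2 : (2 : ℝ) ≤ n := by exact_mod_cast hn
  have hVG : rsV B ≤ (n : ℝ) ^ 4 * (1/3) ^ 2 + rsG B / (1/3) := by
    unfold rsV rsG
    calc _ ≤ ∑ i, ∑ j, ∑ p, ∑ q, ((1/3 : ℝ) ^ 2 + |rsD B i j p q| ^ 3 / (1/3)) := by
          gcongr with i _ j _ p _ q _
          exact rs_sq_le _ _ (by norm_num)
      _ = _ := by
          simp only [Finset.sum_add_distrib, Finset.sum_const, Finset.card_univ, Fintype.card_fin,
            ← Finset.sum_div, nsmul_eq_mul]
          ring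
  have hV1 := (abs_le.1 hV).1
  have h3 : (0:ℝ) < (n:ℝ)^3 := by positivity
  nlinarith [mul_le_mul_of_nonneg_left h6 h3.le, mul_le_mul_of_nonneg_left h2 (by positivity : (0:ℝ) ≤ (n:ℝ)^2),
    mul_le_mul_of_nonneg_right hγ h3.le]

lemma rs_int_abs (k : ℕ) : Integrable (fun x : ℝ => |x| ^ k * gaussD x) := by
  refine (rs_int_gauss k).mono' ((by fun_prop : Continuous fun x : ℝ => |x| ^ k).mul gaussD_cont).aestronglyMeasurable ?_
  refine Filter.Eventually.of_forall fun x => ?_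
  have := gaussD_pos x
  rw [Real.norm_of_nonneg (by positivity)]
  gcongr
  linarith

lemma rsN_hs (k : ℕ) : ∃ C : ℝ, 0 ≤ C ∧ ∀ z ε : ℝ, 0 < ε →
    ∫ x in Set.Iic z, |x| ^ k * gaussD x ≤ rsN (rsHs k z ε) ∧
    rsN (rsHs k z ε) ≤ (∫ x in Set.Iic z, |x| ^ k * gaussD x) + C * ε ∧
    ∫ x in Set.Iic (z + ε), |x| ^ k * gaussD x ≤ (∫ x in Set.Iic z, |x| ^ k * gaussD x) + C * ε := by
  obtain ⟨C, hC, hb⟩ := rs_pow_gauss_bdd k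
  refine ⟨C, hC, fun z ε hε => ?_⟩
  have hi := rs_int_abs k
  have hiI : Integrable ((Set.Iic z).indicator fun x : ℝ => |x| ^ k * gaussD x) :=
    hi.indicator measurableSet_Iic
  have hiJ : Integrable ((Set.Ioc z (z + ε)).indicator fun _ : ℝ => C) := by
    rw [integrable_indicator_iff measurableSet_Ioc]
    exact integrableOn_const (by simp)
  have hiH : Integrable (fun x => rsHs k z ε x * gaussD x) := by
    refine hi.mono' ((rsHs_cont k z ε).mul gaussD_cont).aestronglyMeasurable ?_
    refine Filter.Eventually.of_forall fun x => ?_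
    have := gaussD_pos x
    rw [norm_mul, Real.norm_eq_abs, Real.norm_of_nonneg this.le]
    gcongr
    exact rsHs_bd k z ε x
  have e : C * ε = ∫ x, (Set.Ioc z (z + ε)).indicator (fun _ : ℝ => C) x := by
    rw [integral_indicator measurableSet_Ioc, setIntegral_const]
    simp [Measure.real, Real.volume_Ioc, ENNReal.toReal_ofReal hε.le, mul_comm]
  rw [← integral_indicator measurableSet_Iic, ← integral_indicator measurableSet_Iic]
  unfold rsN
  refine ⟨?_, ?_, ?_⟩
  · refine integral_mono hiI hiH fun x => ?_
    have := gaussD_pos x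
    by_cases hx : x ≤ z
    · rw [Set.indicator_of_mem (by exact hx)]
      simp only [rsHs, rsRho_one hε hx, mul_one]; exact le_rfl
    · rw [Set.indicator_of_notMem (by exact hx)]
      have := rsRho_nonneg z ε x
      simp only [rsHs]; positivity
  · rw [e, ← integral_add hiI hiJ]
    refine integral_mono hiH (hiI.add hiJ) fun x => ?_
    have hg := gaussD_pos x
    by_cases hx : x ≤ z
    · rw [Set.indicator_of_mem (by exact hx), Set.indicator_of_notMem (by simp [hx])]
      simp only [rsHs, rsRho_one hε hx, mul_one, add_zero]; exact le_rfl
    · rw [Set.indicator_of_notMem (by exact hx), zero_add]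
      by_cases hx2 : x ≤ z + ε
      · rw [Set.indicator_of_mem (by exact ⟨not_le.1 hx, hx2⟩)]
        refine le_trans ?_ (hb x)
        simp only [rsHs]
        gcongr
        have := rsRho_le_one z ε x
        exact mul_le_of_le_one_right (by positivity) this
      · rw [Set.indicator_of_notMem (by simp [hx2])]
        simp only [rsHs, rsRho_zero hε (not_le.1 hx2).le, mul_zero, zero_mul]; exact le_rfl
  · rw [e, ← integral_add hiI hiJ]
    refine integral_mono (hi.indicator measurableSet_Iic) (hiI.add hiJ) fun x => ?_
    have hg := gaussD_pos x
    by_cases hx : x ≤ z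
    · rw [Set.indicator_of_mem (by exact hx.trans (by linarith)), Set.indicator_of_mem (by exact hx),
        Set.indicator_of_notMem (by simp [hx]), add_zero]
    · rw [Set.indicator_of_notMem (s := Set.Iic z) (by exact hx), zero_add]
      by_cases hx2 : x ≤ z + ε
      · rw [Set.indicator_of_mem (by exact hx2), Set.indicator_of_mem (by exact ⟨not_le.1 hx, hx2⟩)]
        exact hb x
      · rw [Set.indicator_of_notMem (by exact hx2), Set.indicator_of_notMem (by simp [hx2])]

/-- main lemma -/
lemma rs_main9 (k : ℕ) : ∃ ε0 : ℝ, 0 < ε0 ∧ ∃ C : ℝ, 0 ≤ C ∧ ∀ γ, 0 < γ → γ ≤ ε0 →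
    ∀ (n : ℕ) (B : Matrix (Fin n) (Fin n) ℝ), 2 ≤ n → (∀ i j, |B i j| ≤ 1) →
    |rsTot B| ≤ γ * n → |rsV B - 4 * (n : ℝ) ^ 2 * ((n : ℝ) - 1)| ≤ γ * (n : ℝ) ^ 3 →
    rsG B ≤ γ * (n : ℝ) ^ 3 → ∀ z : ℝ,
    |permExp (fun π => |rankT B π| ^ k * (if rankT B π ≤ z then (1:ℝ) else 0))
      - ∫ x in Set.Iic z, |x| ^ k * gaussD x| ≤ C * γ := by
  obtain ⟨ε0, hε0, C, hC, hs⟩ := rs_smooth k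
  obtain ⟨C', hC', hN⟩ := rsN_hs k
  refine ⟨min ε0 (1/4), by positivity, C + C', by positivity, ?_⟩
  intro γ hγ0 hγ n B hn hB htot hV hG z
  simp only [le_min_iff] at hγ
  have h7 := rs_large hn B γ hγ.2 hV hG
  obtain ⟨m, rfl⟩ : ∃ m, n = m + 7 := ⟨n - 7, by omega⟩
  push_cast at htot hV hG
  have key := fun z => hs γ hγ0 hγ.1 m B hB htot (by convert hV using 4; ring) hG z
  have up : permExp (fun π => |rankT B π| ^ k * (if rankT B π ≤ z then (1:ℝ) else 0)) ≤
      permExp (fun π => rsHs k z γ (rankT B π)) := by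
    refine permExp_mono fun π => ?_
    unfold rsHs
    gcongr
    split_ifs with h
    · rw [rsRho_one hγ0 h]
    · exact rsRho_nonneg _ _ _
  have lo : permExp (fun π => rsHs k (z - γ) γ (rankT B π)) ≤
      permExp (fun π => |rankT B π| ^ k * (if rankT B π ≤ z then (1:ℝ) else 0)) := by
    refine permExp_mono fun π => ?_
    unfold rsHs
    gcongr
    split_ifs with h
    · exact rsRho_le_one _ _ _
    · rw [rsRho_zero hγ0 (by linarith)]
  have k1 := abs_le.1 (key z)
  have k2 := abs_le.1 (key (z - γ))
  have n1 := hN z γ hγ0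
  have n2 := hN (z - γ) γ hγ0
  rw [sub_add_cancel] at n2
  rw [abs_le]
  constructor
  · linarith
  · linarith

/-- truncated part -/
noncomputable def rsB {n : ℕ} (a : Matrix (Fin n) (Fin n) ℝ) : Matrix (Fin n) (Fin n) ℝ :=
  fun i j => if |a i j| ≤ 1 then a i j else 0

/-- modulus of the big entries -/
noncomputable def rsC {n : ℕ} (a : Matrix (Fin n) (Fin n) ℝ) : Matrix (Fin n) (Fin n) ℝ :=
  fun i j => if |a i j| ≤ 1 then 0 else |a i j|

lemma rs_X_moment (r : ℕ) : ∀ Λ : ℝ, 0 ≤ Λ → ∃ C : ℝ, 0 ≤ C ∧ ∀ (n : ℕ) (c : Matrix (Fin n) (Fin n) ℝ),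
    (∀ i j, c i j = 0 ∨ 1 ≤ c i j) → rsTot c ≤ Λ * n →
    permExp (fun π => rankT c π ^ (r + 1)) ≤ C * ((∑ i, ∑ j, c i j ^ (r + 1)) / n) := by
  have expand : ∀ (s n : ℕ) (c : Matrix (Fin (n+1)) (Fin (n+1)) ℝ),
      permExp (fun π => rankT c π ^ (s + 1)) =
      ∑ i, (∑ p, c i p * permExp (fun σ => (rankT (rsMn c i p) σ + c i p) ^ s)) / ((n:ℝ) + 1) := by
    intro s n c
    have e1 : (fun π => rankT c π ^ (s + 1)) = fun π => ∑ i ∈ (Finset.univ : Finset (Fin (n+1))), c i (π i) * rankT c π ^ s := by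
      funext π; rw [pow_succ', ← Finset.sum_mul]; rfl
    rw [e1, permExp_sum]
    refine Finset.sum_congr rfl fun i _ => ?_
    rw [permExp_peel_row i]
    simp only [rsIns_self, rankT_ins, permExp_mul]
  induction r with
  | zero =>
    intro Λ hΛ
    refine ⟨1, zero_le_one, fun n c hc hs => ?_⟩
    rcases n with _ | n
    · simp [permExp, rankT]
    · rw [expand]
      simp only [pow_zero, permExp_const, mul_one, zero_add, pow_one, one_mul]
      rw [← Finset.sum_div]; push_cast; exact le_rfl
  | succ r ih =>
    intro Λ hΛ
    obtain ⟨C, hC, ih⟩ := ih (2 * Λ) (by positivity)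
    refine ⟨2 ^ (r+1) * (2 * C * Λ + 1), by positivity, fun n c hc hs => ?_⟩
    have hc0 : ∀ i j, 0 ≤ c i j := fun i j => by rcases hc i j with h | h <;> linarith
    rcases n with _ | n
    · simp [permExp, rankT]
    rw [expand]
    set Q := ∑ i, ∑ j, c i j ^ (r + 2) with hQ
    have hQ0 : 0 ≤ Q := Finset.sum_nonneg fun i _ => Finset.sum_nonneg fun j _ => pow_nonneg (hc0 i j) _
    have hn1 : (0:ℝ) < (n:ℝ) + 1 := by positivity
    have hminor : ∀ i p, permExp (fun σ => rankT (rsMn c i p) σ ^ (r+1)) ≤ 2 * C * (Q / ((n:ℝ)+1)) := by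
      intro i p
      have hsub : ∀ F : Fin (n+1) → Fin (n+1) → ℝ, (∀ i j, 0 ≤ F i j) →
          ∑ x, ∑ y, F (i.succAbove x) (p.succAbove y) ≤ ∑ i, ∑ j, F i j := by
        intro F hF
        rw [Fin.sum_univ_succAbove _ i]
        have : ∑ x, ∑ y, F (i.succAbove x) (p.succAbove y) ≤ ∑ x, ∑ j, F (i.succAbove x) j := by
          refine Finset.sum_le_sum fun x _ => ?_
          rw [Fin.sum_univ_succAbove (fun j => F (i.succAbove x) j) p]
          linarith [hF (i.succAbove x) p]
        linarith [Finset.sum_nonneg fun j (_ : j ∈ Finset.univ) => hF i j]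
      rcases n with _ | n
      · simp [permExp, rankT]; positivity
      have h1 := ih (n+1) (rsMn c i p) (fun x y => hc _ _) (by
        have := hsub c hc0
        have h2 : rsTot (rsMn c i p) ≤ rsTot c := this
        push_cast at hs ⊢
        nlinarith [mul_nonneg hΛ (Nat.cast_nonneg (α := ℝ) n)])
      refine h1.trans ?_
      have h3 : ∑ x, ∑ y, rsMn c i p x y ^ (r+1) ≤ Q := by
        refine (hsub (fun i j => c i j ^ (r+1)) (fun i j => pow_nonneg (hc0 i j) _)).trans ?_
        refine Finset.sum_le_sum fun x _ => Finset.sum_le_sum fun y _ => ?_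
        rcases hc x y with h | h
        · simp [h]
        · exact pow_le_pow_right₀ h (by omega)
      have h4 : (∑ x, ∑ y, rsMn c i p x y ^ (r+1)) / ((n + 1 : ℕ) : ℝ) ≤ 2 * (Q / (((n+1:ℕ):ℝ) + 1)) := by
        push_cast
        rw [← mul_div_assoc, div_le_div_iff₀ (by positivity) (by positivity)]
        nlinarith [mul_nonneg hQ0 (Nat.cast_nonneg (α := ℝ) n),
          mul_le_mul_of_nonneg_right h3 (by positivity : (0:ℝ) ≤ (n:ℝ) + 1 + 1)]
      calc _ ≤ C * (2 * (Q / (((n+1:ℕ):ℝ) + 1))) := mul_le_mul_of_nonneg_left h4 hC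
        _ = _ := by ring
    have hterm : ∀ i p, c i p * permExp (fun σ => (rankT (rsMn c i p) σ + c i p) ^ (r+1)) ≤
        2 ^ (r+1) * (2 * C * (Q / ((n:ℝ)+1)) * c i p + c i p ^ (r+2)) := by
      intro i p
      have h1 : permExp (fun σ => (rankT (rsMn c i p) σ + c i p) ^ (r+1)) ≤
          2 ^ (r+1) * (2 * C * (Q / ((n:ℝ)+1)) + c i p ^ (r+1)) := by
        have : ∀ σ, (rankT (rsMn c i p) σ + c i p) ^ (r+1) ≤
            2 ^ (r+1) * (rankT (rsMn c i p) σ ^ (r+1) + c i p ^ (r+1)) := by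
          intro σ
          have h0 : 0 ≤ rankT (rsMn c i p) σ := Finset.sum_nonneg fun _ _ => hc0 _ _
          refine (add_pow_le h0 (hc0 i p) (r+1)).trans ?_
          have := hc0 i p
          gcongr
          · norm_num
          · omega
        refine (permExp_mono this).trans ?_
        rw [permExp_mul, permExp_add, permExp_const]
        gcongr
        exact hminor i p
      calc _ ≤ c i p * (2 ^ (r+1) * (2 * C * (Q / ((n:ℝ)+1)) + c i p ^ (r+1))) :=
            mul_le_mul_of_nonneg_left h1 (hc0 i p)
        _ = _ := by ring
    rw [← Finset.sum_div]
    have hsum : ∑ i, ∑ p, c i p * permExp (fun σ => (rankT (rsMn c i p) σ + c i p) ^ (r+1)) ≤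
        2 ^ (r+1) * (2 * C * (Q / ((n:ℝ)+1)) * rsTot c + Q) := by
      calc _ ≤ ∑ i, ∑ p, 2 ^ (r+1) * (2 * C * (Q / ((n:ℝ)+1)) * c i p + c i p ^ (r+2)) := by
            exact Finset.sum_le_sum fun i _ => Finset.sum_le_sum fun p _ => hterm i p
        _ = _ := by
            simp only [rsTot, hQ, Finset.mul_sum, Finset.sum_add_distrib, mul_add]
    push_cast at hs ⊢
    rw [← mul_div_assoc]
    refine div_le_div_of_nonneg_right (hsum.trans ?_) hn1.le
    have h5 : Q / ((n:ℝ)+1) * rsTot c ≤ Q * Λ := by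
      rw [div_mul_eq_mul_div, div_le_iff₀ hn1]
      nlinarith
    have h6 : 2 * C * (Q / ((n:ℝ)+1) * rsTot c) ≤ 2 * C * (Q * Λ) := by gcongr
    have h7 : 2 * C * (Q / ((n:ℝ)+1)) * rsTot c + Q ≤ (2 * C * Λ + 1) * Q := by linarith
    calc _ ≤ (2:ℝ) ^ (r+1) * ((2 * C * Λ + 1) * Q) := by gcongr
      _ = _ := by ring

section trunc

variable {n : ℕ} (a : Matrix (Fin n) (Fin n) ℝ)

lemma rsB_le (i j) : |rsB a i j| ≤ 1 := by
  unfold rsB; split_ifs with h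
  · exact h
  · simp

lemma rsB_abs (i j) : |rsB a i j| ≤ |a i j| := by
  unfold rsB; split_ifs with h
  · exact le_rfl
  · simp

lemma rsC_or (i j) : rsC a i j = 0 ∨ 1 ≤ rsC a i j := by
  unfold rsC; split_ifs with h
  · exact Or.inl rfl
  · exact Or.inr (not_le.1 h).le

lemma rsC_nonneg (i j) : 0 ≤ rsC a i j := by
  rcases rsC_or a i j with h | h <;> linarith

lemma rsC_pow (r s : ℕ) (hr : 1 ≤ r) (hs : r ≤ s) (i j) : rsC a i j ^ r ≤ |a i j| ^ s := by
  unfold rsC; split_ifs with h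
  · rw [zero_pow (by omega)]; positivity
  · exact pow_le_pow_right₀ (not_le.1 h).le hs

lemma rs_ab (i j) : |a i j - rsB a i j| = rsC a i j := by
  unfold rsB rsC; split_ifs with h <;> simp

lemma rs_sqB (i j) : rsB a i j ^ 2 = a i j ^ 2 - rsC a i j ^ 2 := by
  unfold rsB rsC; split_ifs with h <;> simp

end trunc

lemma rs_pair_sq {n : ℕ} (u : Fin n → ℝ) :
    ∑ i, ∑ j, (u j - u i) ^ 2 = 2 * n * ∑ i, u i ^ 2 - 2 * (∑ i, u i) ^ 2 := by
  have e : ∀ i j, (u j - u i) ^ 2 = u j ^ 2 + u i ^ 2 - 2 * (u i * u j) := fun i j => by ring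
  simp only [e, Finset.sum_add_distrib, Finset.sum_sub_distrib, ← Finset.mul_sum, Finset.sum_const,
    Finset.card_univ, Fintype.card_fin, nsmul_eq_mul, ← Finset.sum_mul]
  ring

lemma rsV_eq {n : ℕ} (b : Matrix (Fin n) (Fin n) ℝ) :
    rsV b = 4 * (n:ℝ) ^ 2 * (∑ i, ∑ j, b i j ^ 2) - 4 * n * (∑ i, (∑ j, b i j) ^ 2)
      - 4 * n * (∑ j, (∑ i, b i j) ^ 2) + 4 * rsTot b ^ 2 := by
  have h1 : ∀ i j, ∑ p, ∑ q, rsD b i j p q ^ 2 =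
      2 * n * (∑ p, (b j p - b i p) ^ 2) - 2 * (∑ p, b j p - ∑ p, b i p) ^ 2 := by
    intro i j
    rw [← Finset.sum_sub_distrib, ← rs_pair_sq (fun p => b j p - b i p)]
    refine Finset.sum_congr rfl fun p _ => Finset.sum_congr rfl fun q _ => ?_
    unfold rsD; ring
  unfold rsV
  simp only [h1]
  simp only [Finset.sum_sub_distrib, ← Finset.mul_sum]
  rw [rs_pair_sq (fun i => ∑ p, b i p)]
  have h2 : ∑ i, ∑ j, ∑ p, (b j p - b i p) ^ 2 = 2 * n * (∑ i, ∑ j, b i j ^ 2) - 2 * ∑ j, (∑ i, b i j) ^ 2 := by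
    have h3 : ∑ i, ∑ j, ∑ p, (b j p - b i p) ^ 2 = ∑ p, ∑ i, ∑ j, (b j p - b i p) ^ 2 :=
      (Finset.sum_congr rfl fun i _ => Finset.sum_comm).trans Finset.sum_comm
    rw [h3]
    rw [Finset.sum_congr rfl fun p _ => rs_pair_sq (fun i => b i p)]
    rw [Finset.sum_sub_distrib, ← Finset.mul_sum, ← Finset.mul_sum, Finset.sum_comm]
  rw [h2]
  unfold rsTot
  ring

lemma rs_sum4 {n : ℕ} (F : Fin n → Fin n → ℝ) :
    ∑ i, ∑ j, ∑ p, ∑ q, (F i q + F j p + F i p + F j q) = 4 * (n:ℝ) ^ 2 * ∑ i, ∑ j, F i j := by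
  simp only [Finset.sum_add_distrib, Finset.sum_const, Finset.card_univ, Fintype.card_fin, nsmul_eq_mul,
    ← Finset.mul_sum]
  ring

lemma rsV_le_sq {n : ℕ} (b : Matrix (Fin n) (Fin n) ℝ) :
    rsV b ≤ 16 * (n:ℝ) ^ 2 * ∑ i, ∑ j, b i j ^ 2 := by
  have h := rs_sum4 (fun i j => 4 * b i j ^ 2)
  simp only [← Finset.mul_sum] at h
  calc rsV b ≤ ∑ i, ∑ j, ∑ p, ∑ q, (4 * b i q ^ 2 + 4 * b j p ^ 2 + 4 * b i p ^ 2 + 4 * b j q ^ 2) := by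
        unfold rsV rsD
        refine Finset.sum_le_sum fun i _ => Finset.sum_le_sum fun j _ => Finset.sum_le_sum fun p _ =>
          Finset.sum_le_sum fun q _ => ?_
        nlinarith [sq_nonneg (b i q - b j p), sq_nonneg (b i q + b i p), sq_nonneg (b i q + b j q),
          sq_nonneg (b j p + b i p), sq_nonneg (b j p + b j q), sq_nonneg (b i p - b j q)]
    _ = _ := by rw [h]; ring

lemma rsG_le_cube {n : ℕ} (b : Matrix (Fin n) (Fin n) ℝ) :
    rsG b ≤ 64 * (n:ℝ) ^ 2 * ∑ i, ∑ j, |b i j| ^ 3 := by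
  have h := rs_sum4 (fun i j => 16 * |b i j| ^ 3)
  simp only [← Finset.mul_sum] at h
  calc rsG b ≤ ∑ i, ∑ j, ∑ p, ∑ q, (16 * |b i q| ^ 3 + 16 * |b j p| ^ 3 + 16 * |b i p| ^ 3 + 16 * |b j q| ^ 3) := by
        unfold rsG
        refine Finset.sum_le_sum fun i _ => Finset.sum_le_sum fun j _ => Finset.sum_le_sum fun p _ =>
          Finset.sum_le_sum fun q _ => ?_
        have h1 : |rsD b i j p q| ≤ (|b i q| + |b j p|) + (|b i p| + |b j q|) := by
          unfold rsD
          rw [abs_le]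
          constructor <;> linarith [neg_abs_le (b i q), neg_abs_le (b j p), neg_abs_le (b i p), neg_abs_le (b j q),
            le_abs_self (b i q), le_abs_self (b j p), le_abs_self (b i p), le_abs_self (b j q)]
        have h2 : |rsD b i j p q| ^ 3 ≤ ((|b i q| + |b j p|) + (|b i p| + |b j q|)) ^ 3 := by gcongr
        have h3 := add_pow_le (by positivity : 0 ≤ |b i q| + |b j p|) (by positivity : 0 ≤ |b i p| + |b j q|) 3
        have h4 := add_pow_le (abs_nonneg (b i q)) (abs_nonneg (b j p)) 3
        have h5 := add_pow_le (abs_nonneg (b i p)) (abs_nonneg (b j q)) 3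
        norm_num at h3 h4 h5
        linarith
    _ = _ := by rw [h]; ring

/-- Hypotheses on the standardized matrix. -/
structure rsStd {n : ℕ} (a : Matrix (Fin n) (Fin n) ℝ) : Prop where
  two : 2 ≤ n
  row : ∀ i, ∑ j, a i j = 0
  col : ∀ j, ∑ i, a i j = 0
  sq : ∑ i, ∑ j, a i j ^ 2 = (n:ℝ) - 1

section std

variable {n : ℕ} {a : Matrix (Fin n) (Fin n) ℝ}

lemma rs_totC_le_n (h : rsStd a) : rsTot (rsC a) ≤ n - 1 := by
  rw [← h.sq]
  refine Finset.sum_le_sum fun i _ => Finset.sum_le_sum fun j _ => ?_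
  have := rsC_pow a 1 2 (by norm_num) (by norm_num) i j
  simpa using this

lemma rs_totC_le_beta (a : Matrix (Fin n) (Fin n) ℝ) : rsTot (rsC a) ≤ ∑ i, ∑ j, |a i j| ^ 3 := by
  refine Finset.sum_le_sum fun i _ => Finset.sum_le_sum fun j _ => ?_
  have := rsC_pow a 1 3 (by norm_num) (by norm_num) i j
  simpa using this

lemma rs_rowB (h : rsStd a) (i) : |∑ j, rsB a i j| ≤ ∑ j, rsC a i j := by
  have e : ∑ j, rsB a i j = -∑ j, (a i j - rsB a i j) := by
    rw [Finset.sum_sub_distrib, h.row]; ring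
  rw [e, abs_neg]
  refine (Finset.abs_sum_le_sum_abs _ _).trans (le_of_eq ?_)
  simp only [rs_ab]

lemma rs_colB (h : rsStd a) (j) : |∑ i, rsB a i j| ≤ ∑ i, rsC a i j := by
  have e : ∑ i, rsB a i j = -∑ i, (a i j - rsB a i j) := by
    rw [Finset.sum_sub_distrib, h.col]; ring
  rw [e, abs_neg]
  refine (Finset.abs_sum_le_sum_abs _ _).trans (le_of_eq ?_)
  simp only [rs_ab]

lemma rs_totB (h : rsStd a) : |rsTot (rsB a)| ≤ rsTot (rsC a) :=
  (Finset.abs_sum_le_sum_abs _ _).trans (Finset.sum_le_sum fun i _ => rs_rowB h i)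

lemma rs_sqB_sum (h : rsStd a) : ∑ i, ∑ j, rsB a i j ^ 2 = (n:ℝ) - 1 - ∑ i, ∑ j, rsC a i j ^ 2 := by
  simp only [rs_sqB, Finset.sum_sub_distrib, h.sq]

lemma rs_R0B (h : rsStd a) : rsR0 16 (rsB a) := by
  have h2 : (2:ℝ) ≤ n := by exact_mod_cast h.two
  refine ⟨rsB_le a, ?_, ?_⟩
  · have := (rs_totB h).trans (rs_totC_le_n h); linarith
  · refine (rsV_le_sq _).trans ?_
    have h0 : 0 ≤ ∑ i, ∑ j, rsC a i j ^ 2 := by positivity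
    have : ∑ i, ∑ j, rsB a i j ^ 2 ≤ n := by rw [rs_sqB_sum h]; linarith
    calc _ ≤ 16 * (n:ℝ) ^ 2 * n := by gcongr
      _ = _ := by ring

lemma rs_sumsq_le {u v : Fin n → ℝ} (h : ∀ i, |u i| ≤ v i) (h' : ∀ i, |u i| ≤ n) :
    ∑ i, u i ^ 2 ≤ n * ∑ i, v i := by
  rw [Finset.mul_sum]
  refine Finset.sum_le_sum fun i _ => ?_
  rw [← sq_abs, sq]
  exact mul_le_mul (h' i) (h i) (abs_nonneg _) (by positivity)

lemma rs_VB (h : rsStd a) : |rsV (rsB a) - 4 * (n : ℝ) ^ 2 * ((n : ℝ) - 1)| ≤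
    16 * (n:ℝ) ^ 2 * ∑ i, ∑ j, |a i j| ^ 3 := by
  have h2 : (2:ℝ) ≤ n := by exact_mod_cast h.two
  set β := ∑ i, ∑ j, |a i j| ^ 3 with hβ
  have hβ0 : 0 ≤ β := by positivity
  have hc2 : ∑ i, ∑ j, rsC a i j ^ 2 ≤ β :=
    Finset.sum_le_sum fun i _ => Finset.sum_le_sum fun j _ => rsC_pow a 2 3 (by norm_num) (by norm_num) i j
  have hc20 : 0 ≤ ∑ i, ∑ j, rsC a i j ^ 2 := by positivity
  have hcβ : rsTot (rsC a) ≤ β := rs_totC_le_beta a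
  have hcn := rs_totC_le_n h
  have hbd : ∀ w : Fin n → ℝ, (∀ i, |w i| ≤ 1) → |∑ i, w i| ≤ n := by
    intro w hw
    refine (Finset.abs_sum_le_sum_abs _ _).trans ?_
    calc _ ≤ ∑ i : Fin n, (1:ℝ) := Finset.sum_le_sum fun i _ => hw i
      _ = _ := by simp
  have hr : ∑ i, (∑ j, rsB a i j) ^ 2 ≤ n * β :=
    (rs_sumsq_le (fun i => rs_rowB h i) (fun i => hbd _ fun j => rsB_le a i j)).trans
      (mul_le_mul_of_nonneg_left hcβ (by positivity))
  have hl : ∑ j, (∑ i, rsB a i j) ^ 2 ≤ n * β := by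
    refine (rs_sumsq_le (fun j => rs_colB h j) (fun j => hbd _ fun i => rsB_le a i j)).trans
      (mul_le_mul_of_nonneg_left ?_ (by positivity))
    rw [Finset.sum_comm]; exact hcβ
  have hr0 : 0 ≤ ∑ i, (∑ j, rsB a i j) ^ 2 := by positivity
  have hl0 : 0 ≤ ∑ j, (∑ i, rsB a i j) ^ 2 := by positivity
  have ht : rsTot (rsB a) ^ 2 ≤ (n:ℝ) ^ 2 * β := by
    rw [← sq_abs, sq]
    have ht := rs_totB h
    have := mul_le_mul (ht.trans hcn) (ht.trans hcβ) (abs_nonneg _) (by linarith)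
    nlinarith [mul_nonneg (by nlinarith : (0:ℝ) ≤ (n:ℝ)^2 - (n - 1)) hβ0]
  have ht0 := sq_nonneg (rsTot (rsB a))
  rw [rsV_eq, rs_sqB_sum h]
  have m1 := mul_le_mul_of_nonneg_left hr (by positivity : (0:ℝ) ≤ 4 * n)
  have m2 := mul_le_mul_of_nonneg_left hl (by positivity : (0:ℝ) ≤ 4 * n)
  have m3 := mul_le_mul_of_nonneg_left hc2 (by positivity : (0:ℝ) ≤ 4 * n ^ 2)
  have p1 := mul_nonneg (by positivity : (0:ℝ) ≤ 4 * n) hr0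
  have p2 := mul_nonneg (by positivity : (0:ℝ) ≤ 4 * n) hl0
  have p3 := mul_nonneg (by positivity : (0:ℝ) ≤ 4 * n ^ 2) hc20
  have p4 : 0 ≤ (n:ℝ) ^ 2 * β := by positivity
  rw [abs_le]
  constructor <;> nlinarith

lemma rs_GB (a : Matrix (Fin n) (Fin n) ℝ) : rsG (rsB a) ≤ 64 * (n:ℝ) ^ 2 * ∑ i, ∑ j, |a i j| ^ 3 := by
  refine (rsG_le_cube _).trans (mul_le_mul_of_nonneg_left ?_ (by positivity))
  exact Finset.sum_le_sum fun i _ => Finset.sum_le_sum fun j _ =>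
    pow_le_pow_left₀ (abs_nonneg _) (rsB_abs a i j) 3

end std

lemma rs_diff_pt {n : ℕ} (a : Matrix (Fin n) (Fin n) ℝ) (k : ℕ) (hk : 1 ≤ k) (z : ℝ) (π : Equiv.Perm (Fin n)) :
    |(|rankT a π| ^ k * (if rankT a π ≤ z then (1:ℝ) else 0)) -
      |rankT (rsB a) π| ^ k * (if rankT (rsB a) π ≤ z then (1:ℝ) else 0)| ≤
    (2 ^ k + 1) * (rankT (rsC a) π * |rankT (rsB a) π| ^ k + rankT (rsC a) π ^ k) := by
  have hd : |rankT a π - rankT (rsB a) π| ≤ rankT (rsC a) π := by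
    unfold rankT
    rw [← Finset.sum_sub_distrib]
    refine (Finset.abs_sum_le_sum_abs _ _).trans (le_of_eq ?_)
    simp only [rs_ab]
  have hX : rankT (rsC a) π = 0 ∨ 1 ≤ rankT (rsC a) π := by
    by_cases hall : ∀ i, rsC a i (π i) = 0
    · left; unfold rankT; simp [hall]
    · right
      push Not at hall
      obtain ⟨i, hi⟩ := hall
      have h1 := (rsC_or a i (π i)).resolve_left hi
      exact h1.trans (Finset.single_le_sum (f := fun i => rsC a i (π i)) (fun i _ => rsC_nonneg a i (π i)) (Finset.mem_univ i))
  set X := rankT (rsC a) π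
  set W := rankT a π
  set T := rankT (rsB a) π
  rcases hX with hX | hX
  · rw [hX] at hd ⊢
    have : W = T := by
      have := abs_nonpos_iff.1 hd; linarith
    rw [this, sub_self, abs_zero]; positivity
  · have hW : |W| ≤ |T| + X := by
      have : W = T + (W - T) := by ring
      rw [this]; exact (abs_add_le _ _).trans (by gcongr)
    have hX0 : 0 ≤ X := by linarith
    have hWk : |W| ^ k ≤ 2 ^ k * (|T| ^ k + X ^ k) := by
      calc |W| ^ k ≤ (|T| + X) ^ k := by gcongr
        _ ≤ 2 ^ (k - 1) * (|T| ^ k + X ^ k) := add_pow_le (abs_nonneg _) hX0 k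
        _ ≤ _ := by gcongr; norm_num; omega
    have hi : ∀ (y : ℝ), |(|y| ^ k * (if y ≤ z then (1:ℝ) else 0))| ≤ |y| ^ k := by
      intro y; split_ifs <;> simp
    have hT0 : 0 ≤ |T| ^ k := by positivity
    have hXk : 0 ≤ X ^ k := by positivity
    have h2 : (0:ℝ) < 2 ^ k := by positivity
    calc _ ≤ |W| ^ k + |T| ^ k := (abs_sub _ _).trans (add_le_add (hi W) (hi T))
      _ ≤ (2 ^ k + 1) * (1 * |T| ^ k + X ^ k) := by nlinarith
      _ ≤ _ := by gcongr

lemma rs_XT (k : ℕ) : ∃ C : ℝ, 0 ≤ C ∧ ∀ (n : ℕ) (a : Matrix (Fin n) (Fin n) ℝ), rsStd a →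
    permExp (fun π => rankT (rsC a) π * |rankT (rsB a) π| ^ k) ≤ C * (rsTot (rsC a) / n) := by
  obtain ⟨C, hC, hm⟩ := rs_moment' k (8 * 16 + 4) (by norm_num)
  refine ⟨C, hC, fun n a h => ?_⟩
  obtain ⟨n, rfl⟩ : ∃ m, n = m + 1 := ⟨n - 1, by have := h.two; omega⟩
  have e1 : (fun π => rankT (rsC a) π * |rankT (rsB a) π| ^ k) =
      fun π => ∑ i ∈ (Finset.univ : Finset (Fin (n+1))), rsC a i (π i) * |rankT (rsB a) π| ^ k := by
    funext π; rw [← Finset.sum_mul]; rfl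
  rw [e1, permExp_sum]
  have hterm : ∀ i, permExp (fun π => rsC a i (π i) * |rankT (rsB a) π| ^ k) ≤
      (∑ p, rsC a i p * C) / ((n:ℝ) + 1) := by
    intro i
    rw [permExp_peel_row i]
    refine div_le_div_of_nonneg_right ?_ (by positivity)
    refine Finset.sum_le_sum fun p _ => ?_
    simp only [rsIns_self, rankT_ins, permExp_mul]
    refine mul_le_mul_of_nonneg_left ?_ (rsC_nonneg a i p)
    refine le_trans (permExp_mono fun σ => ?_) (hm n (rsMn (rsB a) i p) (rsR0_mn (by norm_num) (rs_R0B h) i p))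
    gcongr
    refine (abs_add_le _ _).trans ?_
    linarith [rsB_le a i p]
  refine (Finset.sum_le_sum fun i _ => hterm i).trans (le_of_eq ?_)
  simp only [← Finset.sum_div, ← Finset.sum_mul, rsTot]
  push_cast
  ring

lemma rs_core (k : ℕ) (hk : 1 ≤ k) : ∃ K : ℝ, 0 < K ∧ ∀ (n : ℕ) (a : Matrix (Fin n) (Fin n) ℝ), rsStd a → ∀ z : ℝ,
    |permExp (fun π => |rankT a π| ^ k * (if rankT a π ≤ z then (1:ℝ) else 0))
      - ∫ x in Set.Iic z, |x| ^ k * gaussD x| ≤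
      K * ((∑ i, ∑ j, |a i j| ^ 3) / n + (∑ i, ∑ j, |a i j| ^ (k + 4)) / n) := by
  obtain ⟨ε0, hε0, C, hC, hmain⟩ := rs_main9 k
  obtain ⟨C1, hC1, hXT⟩ := rs_XT k
  obtain ⟨C2, hC2, hX⟩ := rs_X_moment (k - 1) 1 zero_le_one
  obtain ⟨C3, hC3, hmom⟩ := rs_moment' k 16 (by norm_num)
  set I := ∫ x : ℝ, |x| ^ k * gaussD x with hI
  have hI0 : 0 ≤ I := integral_nonneg fun x => mul_nonneg (by positivity) (gaussD_pos x).le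
  refine ⟨(2 ^ k + 1) * (C1 + C2) + 64 * C + 64 * (C3 + I) / ε0 + 1, by positivity, ?_⟩
  intro n a h z
  have h2 : (2:ℝ) ≤ n := by exact_mod_cast h.two
  have hn0 : (0:ℝ) < n := by linarith
  have hXm := hX n (rsC a) (rsC_or a) (by have := rs_totC_le_n h; linarith)
  rw [Nat.sub_add_cancel hk] at hXm
  have hXTm := hXT n a h
  set β := ∑ i, ∑ j, |a i j| ^ 3 with hβ
  set κ := ∑ i, ∑ j, |a i j| ^ (k + 4) with hκ
  have hβ0 : 0 < β := by
    by_contra hcon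
    have hz : β = 0 := le_antisymm (not_lt.1 hcon) (by positivity)
    have : ∀ i j, a i j = 0 := by
      intro i j
      have h1 := (Finset.sum_eq_zero_iff_of_nonneg (fun i _ => by positivity)).1 hz i (Finset.mem_univ i)
      have h2 := (Finset.sum_eq_zero_iff_of_nonneg (fun j _ => by positivity)).1 h1 j (Finset.mem_univ j)
      simpa using h2
    have hs := h.sq
    simp only [this] at hs
    norm_num at hs
    linarith
  have hκ0 : 0 ≤ κ := by positivity
  have hdiff : |permExp (fun π => |rankT a π| ^ k * (if rankT a π ≤ z then (1:ℝ) else 0)) -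
      permExp (fun π => |rankT (rsB a) π| ^ k * (if rankT (rsB a) π ≤ z then (1:ℝ) else 0))| ≤
      (2 ^ k + 1) * (C1 + C2) * (β / n + κ / n) := by
    rw [← permExp_sub]
    refine (permExp_abs_le _).trans ((permExp_mono fun π => rs_diff_pt a k hk z π).trans ?_)
    rw [permExp_mul, permExp_add, mul_assoc]
    gcongr
    have b1 : rsTot (rsC a) / n ≤ β / n := by gcongr; exact rs_totC_le_beta a
    have b2 : (∑ i, ∑ j, rsC a i j ^ k) / n ≤ κ / n := by
      refine div_le_div_of_nonneg_right ?_ hn0.le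
      exact Finset.sum_le_sum fun i _ => Finset.sum_le_sum fun j _ =>
        rsC_pow a k (k+4) hk (by omega) i j
    have b3 : 0 ≤ β / n := by positivity
    have b4 : 0 ≤ κ / n := by positivity
    have b5 := mul_le_mul_of_nonneg_left b1 hC1
    have b6 := mul_le_mul_of_nonneg_left b2 hC2
    have b7 := mul_nonneg hC1 b4
    have b8 := mul_nonneg hC2 b3
    linarith
  have hB : |permExp (fun π => |rankT (rsB a) π| ^ k * (if rankT (rsB a) π ≤ z then (1:ℝ) else 0)) -
      ∫ x in Set.Iic z, |x| ^ k * gaussD x| ≤ (64 * C + 64 * (C3 + I) / ε0) * (β / n) := by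
    have b3 : 0 < β / n := by positivity
    by_cases hsmall : 64 * (β / n) ≤ ε0
    · have := hmain (64 * (β / n)) (by positivity) hsmall n (rsB a) h.two (rsB_le a)
        (by
          have := (rs_totB h).trans (rs_totC_le_beta a)
          have e : 64 * (β / n) * n = 64 * β := by field_simp
          rw [e]; linarith)
        (by
          have e : 64 * (β / n) * (n:ℝ) ^ 3 = 64 * (n:ℝ) ^ 2 * β := by field_simp
          rw [e]; refine (rs_VB h).trans ?_
          gcongr; norm_num)
        (by
          have e : 64 * (β / n) * (n:ℝ) ^ 3 = 64 * (n:ℝ) ^ 2 * β := by field_simp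
          rw [e]; exact rs_GB a) z
      refine this.trans ?_
      have : 0 ≤ 64 * (C3 + I) / ε0 := by positivity
      nlinarith
    · push Not at hsmall
      have i1 : |∫ x in Set.Iic z, |x| ^ k * gaussD x| ≤ I := by
        rw [abs_of_nonneg (integral_nonneg fun x => mul_nonneg (by positivity) (gaussD_pos x).le)]
        exact setIntegral_le_integral (rs_int_abs k)
          (Filter.Eventually.of_forall fun x => mul_nonneg (by positivity) (gaussD_pos x).le)
      have i2 : |permExp (fun π => |rankT (rsB a) π| ^ k * (if rankT (rsB a) π ≤ z then (1:ℝ) else 0))| ≤ C3 := by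
        refine (permExp_abs_le _).trans (le_trans (permExp_mono fun π => ?_) (hmom n (rsB a) (rs_R0B h)))
        have : |rankT (rsB a) π| ^ k ≤ (1 + |rankT (rsB a) π|) ^ k := by gcongr; linarith
        split_ifs
        · simpa using this
        · simp; positivity
      have i3 : (C3 + I) ≤ 64 * (C3 + I) / ε0 * (β / n) := by
        have e : 64 * (C3 + I) / ε0 * (β / n) = (C3 + I) * (64 * (β / n) / ε0) := by ring
        rw [e]
        refine le_mul_of_one_le_right (by positivity) ?_
        rw [le_div_iff₀ hε0]; linarith
      have i4 : 0 ≤ 64 * C * (β / n) := by positivity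
      refine (abs_sub _ _).trans ?_
      linarith
  have b3 : 0 < β / n := by positivity
  have b4 : 0 ≤ κ / n := by positivity
  refine (abs_sub_le _ (permExp (fun π => |rankT (rsB a) π| ^ k * (if rankT (rsB a) π ≤ z then (1:ℝ) else 0))) _).trans ?_
  have b5 : 0 ≤ (64 * C + 64 * (C3 + I) / ε0) * (κ / n) := by positivity
  linarith

lemma rsStd_hatM {n : ℕ} (hn : 2 ≤ n) (A : Matrix (Fin n) (Fin n) ℝ) (hA : 0 < sdev A) : rsStd (hatM A) := by
  have h2 : (2:ℝ) ≤ n := by exact_mod_cast hn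
  have hn0 : (n:ℝ) ≠ 0 := by linarith
  refine ⟨hn, fun i => ?_, fun j => ?_, ?_⟩
  · have e : ∑ j, ctr A i j = 0 := by
      simp only [ctr, Finset.sum_add_distrib, Finset.sum_sub_distrib, Finset.sum_const, Finset.card_univ,
        Fintype.card_fin, nsmul_eq_mul, rowMean, colMean, totMean, ← Finset.sum_div]
      rw [Finset.sum_comm (f := fun x i => A i x)]
      field_simp
      ring
    simp only [hatM, ← Finset.sum_div, e, zero_div]
  · have e : ∑ i, ctr A i j = 0 := by
      simp only [ctr, Finset.sum_add_distrib, Finset.sum_sub_distrib, Finset.sum_const, Finset.card_univ,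
        Fintype.card_fin, nsmul_eq_mul, rowMean, colMean, totMean, ← Finset.sum_div]
      field_simp
      ring
    simp only [hatM, ← Finset.sum_div, e, zero_div]
  · simp only [hatM, div_pow, ← Finset.sum_div]
    have hs : 0 < sigma2 A := Real.sqrt_pos.1 hA
    have e : sdev A ^ 2 = sigma2 A := Real.sq_sqrt hs.le
    rw [e]
    have h1 : (n:ℝ) - 1 ≠ 0 := by linarith
    rw [div_eq_iff hs.ne']
    unfold sigma2
    field_simp

lemma rankTstd_eq {n : ℕ} (hn : 2 ≤ n) (A : Matrix (Fin n) (Fin n) ℝ) (π : Equiv.Perm (Fin n)) :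
    rankTstd A π = rankT (hatM A) π := by
  have h2 : (2:ℝ) ≤ n := by exact_mod_cast hn
  have hn0 : (n:ℝ) ≠ 0 := by linarith
  unfold rankTstd rankT hatM
  rw [← Finset.sum_div]
  congr 1
  simp only [ctr, Finset.sum_add_distrib, Finset.sum_sub_distrib, Finset.sum_const, Finset.card_univ,
        Fintype.card_fin, nsmul_eq_mul, muM]
  rw [Equiv.sum_comp π (fun j => colMean A j)]
  simp only [rowMean, colMean, totMean, ← Finset.sum_div]
  rw [Finset.sum_comm (f := fun x i => A i x)]
  field_simp
  ring

/-- for each fixed `k ∈ ℕ` there is a constant `𝒦₇(k) > 0` such that for all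
matrices `A` with `σ_A > 0`,
`sup_z |E(|𝒯_A|^k 1_{(−∞,z]}(𝒯_A)) − ∫_{−∞}^z |x|^k ψ| ≤ 𝒦₇(k)(β_A/n + (1/n)Σ|â_{ij}|^{k+4})`. -/
theorem rank_statistic_truncated_abs_moment_bound (k : ℕ) (hk : 1 ≤ k) :
    ∃ K7 : ℝ, 0 < K7 ∧
      ∀ (n : ℕ), 2 ≤ n → ∀ A : Matrix (Fin n) (Fin n) ℝ, 0 < sdev A →
        ∀ z : ℝ,
          |permExp (fun π => |rankTstd A π| ^ k * (if rankTstd A π ≤ z then (1 : ℝ) else 0))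
              - ∫ x in Set.Iic z, |x| ^ k * gaussD x| ≤
            K7 * (betaM A / (n : ℝ) + (∑ i, ∑ j, |hatM A i j| ^ (k + 4)) / (n : ℝ)) := by
  obtain ⟨K, hK, h⟩ := rs_core k hk
  refine ⟨K, hK, fun n hn A hA z => ?_⟩
  have := h n (hatM A) (rsStd_hatM hn A hA) z
  simp only [rankTstd_eq hn]
  exact this
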